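/- Let f, g : (ℝⁿ,0) → (ℝᵐ,0) be real analytic map germs (defined and real analytic on a neighborhood of 0, with f(0)=g(0)=0). If there exists a C^∞ map τ defined near 0 in ℝⁿ with τ(0)=0 and invertible derivative at 0 such that f∘τ = g on a neighborhood of 0, then there exists a map σ defined near 0 in ℝⁿ, real analytic at 0, with σ(0)=0 and invertible derivative at 0, such that f∘σ = g on a neighborhood of 0. That is, two C^∞ R equivalent analytic map germs are analytically R equivalent. -/

import Mathlib

open scoped Topology

/-!
The Taylor series `T` of `τ` is a formal solution of `f (T) = g`, and Artin's approximation theorem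
replaces it by a convergent one. Applied up to order two to the pair `(T, X)` and the relations
`f (y) - g (z) = 0`, it gives analytic `η`, `ζ` with `f ∘ η = g ∘ ζ`, `Dη = Dτ` and `Dζ = 1` at `0`,
and then `η ∘ ζ⁻¹` is the required germ.

Artin's theorem is proved by induction on the number of variables. Let `y` be a formal family, and
choose `h` convergent relations of `y` with a Jacobian minor `δ` such that `δ (y) ≠ 0` and `h` is
maximal. After a linear change of variables, Weierstrass preparation makes `δ (y)` a unit times a
monic polynomial `A` in one variable `t`. Divide `y` by `t ^ (c + 2) * A ^ 2` and treat the
coefficients of the remainders and of `A` as new unknowns. Over these unknowns the solutions of the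
`h` relations are parametrized by Newton's method in Tougeron's form,
`Y = Y₀ + t A (A w + adj (J) z)`, with `z` supplied by the implicit function theorem, as soon as
finitely many remainders vanish. Those conditions are convergent equations in fewer variables, which
the inductive hypothesis solves. The remaining relations of `y` then persist by Cramer's rule and
the maximality of `h`.
-/

namespace ArtinApproximation

open MvPowerSeries Finsupp
open scoped ENNReal NNReal

section Pointed

variable {σ τ ι κ R : Type*} [CommRing R]

/-- A family of power series without constant terms, i.e. a formal map germ preserving the origin.
These are the families that may be substituted into power series in finitely many variables. -/
def IsPointed (a : ι → MvPowerSeries σ R) : Prop := ∀ i, constantCoeff (a i) = 0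

lemma IsPointed.hasSubst [Finite ι] {a : ι → MvPowerSeries σ R} (ha : IsPointed a) : HasSubst a :=
  hasSubst_of_constantCoeff_zero ha

lemma isPointed_X (f : ι → σ) : IsPointed fun i ↦ (X (f i) : MvPowerSeries σ R) :=
  fun _ ↦ constantCoeff_X _

lemma isPointed_zero : IsPointed fun _ : ι ↦ (0 : MvPowerSeries σ R) := fun _ ↦ map_zero _

lemma IsPointed.sumElim {a : ι → MvPowerSeries σ R} {b : κ → MvPowerSeries σ R}
    (ha : IsPointed a) (hb : IsPointed b) : IsPointed (Sum.elim a b) := by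
  rintro (i | i)
  exacts [ha i, hb i]

lemma subst_zero {a : σ → MvPowerSeries τ R} (ha : HasSubst a) :
    subst a (0 : MvPowerSeries σ R) = 0 := by
  rw [← coe_substAlgHom ha, map_zero]

lemma subst_sum {a : σ → MvPowerSeries τ R} (ha : HasSubst a) (s : Finset ι)
    (F : ι → MvPowerSeries σ R) : subst a (∑ i ∈ s, F i) = ∑ i ∈ s, subst a (F i) := by
  simp only [← coe_substAlgHom ha, map_sum]

lemma subst_det {n : Type*} [Fintype n] [DecidableEq n] {a : σ → MvPowerSeries τ R}
    (ha : HasSubst a) (M : Matrix n n (MvPowerSeries σ R)) :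
    subst a M.det = (M.map (subst a)).det := by
  rw [← coe_substAlgHom ha]
  exact RingHom.map_det (substAlgHom ha).toRingHom M

lemma subst_adjugate {n : Type*} [Fintype n] [DecidableEq n] {a : σ → MvPowerSeries τ R}
    (ha : HasSubst a) (M : Matrix n n (MvPowerSeries σ R)) (i j : n) :
    subst a (M.adjugate i j) = (M.map (subst a)).adjugate i j := by
  rw [← coe_substAlgHom ha]
  exact congrFun₂ (RingHom.map_adjugate (substAlgHom ha).toRingHom M) i j

lemma constantCoeff_subst_of_isPointed [Finite σ] {a : σ → MvPowerSeries τ R} (ha : IsPointed a)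
    (F : MvPowerSeries σ R) : constantCoeff (subst a F) = constantCoeff F := by
  have h : constantCoeff (subst a (F - C (constantCoeff F))) = 0 :=
    constantCoeff_subst_eq_zero ha.hasSubst ha (by simp)
  rwa [subst_sub ha.hasSubst, subst_C, map_sub, constantCoeff_C, sub_eq_zero] at h

lemma IsPointed.subst [Finite σ] {a : ι → MvPowerSeries σ R} {b : σ → MvPowerSeries τ R}
    (ha : IsPointed a) (hb : IsPointed b) : IsPointed fun i ↦ subst b (a i) :=
  fun i ↦ (constantCoeff_subst_of_isPointed hb _).trans (ha i)

lemma IsPointed.subst_subst [Finite ι] [Finite σ] {a : ι → MvPowerSeries σ R}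
    {b : σ → MvPowerSeries τ R} (ha : IsPointed a) (hb : IsPointed b) (F : MvPowerSeries ι R) :
    MvPowerSeries.subst b (MvPowerSeries.subst a F) =
      MvPowerSeries.subst (fun i ↦ MvPowerSeries.subst b (a i)) F :=
  subst_comp_subst_apply ha.hasSubst hb.hasSubst F

end Pointed

section OrderIdeal

variable {σ τ R : Type*} [CommRing R] {w : σ → ℕ} {k l : ℕ} {F G : MvPowerSeries σ R}

/-- The ideal of power series of `w`-weighted order at least `k`. Variables of weight zero are
treated as parameters. -/
noncomputable def orderIdeal (w : σ → ℕ) (k : ℕ) : Ideal (MvPowerSeries σ R) where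
  carrier := {F | (k : ℕ∞) ≤ F.weightedOrder w}
  zero_mem' := by simp
  add_mem' hF hG := (le_min hF hG).trans (min_weightedOrder_le_add w)
  smul_mem' _ _ hF := (le_add_left hF).trans (le_weightedOrder_mul w)

/-- The `k`-th power of the maximal ideal: power series of order at least `k`. -/
noncomputable abbrev degreeIdeal (k : ℕ) : Ideal (MvPowerSeries σ R) := orderIdeal (fun _ ↦ 1) k

lemma mem_orderIdeal_iff_le : F ∈ orderIdeal w k ↔ (k : ℕ∞) ≤ F.weightedOrder w := Iff.rfl

lemma mem_orderIdeal : F ∈ orderIdeal w k ↔ ∀ e, weight w e < k → coeff e F = 0 :=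
  ⟨fun h _ he ↦ coeff_eq_zero_of_lt_weightedOrder w ((Nat.cast_lt.2 he).trans_le h),
    nat_le_weightedOrder w⟩

lemma mem_orderIdeal_zero (w : σ → ℕ) (F : MvPowerSeries σ R) : F ∈ orderIdeal w 0 :=
  mem_orderIdeal.2 fun _ he ↦ absurd he (Nat.not_lt_zero _)

lemma mul_mem_orderIdeal_add (hF : F ∈ orderIdeal w k) (hG : G ∈ orderIdeal w l) :
    F * G ∈ orderIdeal w (k + l) := by
  rw [mem_orderIdeal_iff_le, Nat.cast_add]
  exact (add_le_add hF hG).trans (le_weightedOrder_mul w)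

lemma orderIdeal_anti (w : σ → ℕ) : Antitone (orderIdeal (R := R) w) :=
  fun _ _ h _ hF ↦ mem_orderIdeal_iff_le.2 ((Nat.cast_le.2 h).trans (mem_orderIdeal_iff_le.1 hF))

lemma eq_zero_of_forall_mem_orderIdeal (h : ∀ k, F ∈ orderIdeal w k) : F = 0 := by
  ext e
  exact mem_orderIdeal.1 (h (weight w e + 1)) e (Nat.lt_succ_self _)

lemma mem_degreeIdeal_one : F ∈ degreeIdeal 1 ↔ constantCoeff F = 0 := by
  simp only [mem_orderIdeal, ← degree_eq_weight_one, Nat.lt_one_iff, degree_eq_zero_iff, forall_eq,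
    coeff_zero_eq_constantCoeff_apply]

lemma constantCoeff_eq_zero_of_mem_orderIdeal (h : F ∈ orderIdeal w 1) : constantCoeff F = 0 :=
  mem_orderIdeal.1 h 0 (by simp)

lemma X_mem_orderIdeal (w : σ → ℕ) (i : σ) : (X i : MvPowerSeries σ R) ∈ orderIdeal w (w i) := by
  classical
  refine mem_orderIdeal.2 fun e he ↦ ?_
  rw [coeff_X, if_neg]
  rintro rfl
  simp [weight_single] at he

lemma exists_ne_zero_of_one_le_weight {e : σ →₀ ℕ} (he : 1 ≤ weight w e) :
    ∃ i, e i ≠ 0 ∧ w i ≠ 0 := by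
  by_contra! h
  have : weight w e = 0 := by
    rw [weight_apply, Finsupp.sum]
    refine Finset.sum_eq_zero fun i hi ↦ ?_
    rw [h i (mem_support_iff.1 hi), smul_zero]
  lia

lemma subst_mem_orderIdeal {v : τ → ℕ} {a : τ → MvPowerSeries σ R} (ha : HasSubst a)
    (hav : ∀ i, a i ∈ orderIdeal w (v i)) {F : MvPowerSeries τ R} (hF : F ∈ orderIdeal v k) :
    subst a F ∈ orderIdeal w k := by
  refine le_trans ?_ (le_weightedOrder_subst w ha F)
  refine le_iInf₂ fun d hd ↦ ?_
  have hkd : k ≤ weight v d := by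
    by_contra! h
    exact hd (mem_orderIdeal.1 hF d h)
  refine (Nat.cast_le.2 hkd).trans ?_
  simp only [weight_apply, Finsupp.sum, Nat.cast_sum, smul_eq_mul, nsmul_eq_mul, Nat.cast_mul]
  exact Finset.sum_le_sum fun i _ ↦ mul_le_mul_right (hav i) _

lemma subst_mem_degreeIdeal [Finite τ] {a : τ → MvPowerSeries σ R} (ha : IsPointed a)
    {F : MvPowerSeries τ R} (hF : F ∈ degreeIdeal k) : subst a F ∈ degreeIdeal k :=
  subst_mem_orderIdeal ha.hasSubst (fun i ↦ mem_degreeIdeal_one.2 (ha i)) hF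

end OrderIdeal

section MajorantNorm

variable {σ τ ι 𝕜 : Type*} [NormedField 𝕜] {r s : σ → ℝ≥0}

/-- The monomial `r ^ e`, as an extended nonnegative real. -/
noncomputable def radiusPow (r : σ → ℝ≥0) (e : σ →₀ ℕ) : ℝ≥0∞ :=
  ((e.prod fun i k ↦ r i ^ k : ℝ≥0) : ℝ≥0∞)

lemma radiusPow_add (r : σ → ℝ≥0) (e e' : σ →₀ ℕ) :
    radiusPow r (e + e') = radiusPow r e * radiusPow r e' := by
  classical
  rw [radiusPow, Finsupp.prod_add_index' (by simp) (by intros; rw [pow_add]), ENNReal.coe_mul]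
  rfl

@[simp]
lemma radiusPow_zero (r : σ → ℝ≥0) : radiusPow r 0 = 1 := by simp [radiusPow]

@[simp]
lemma radiusPow_single (r : σ → ℝ≥0) (i : σ) (k : ℕ) :
    radiusPow r (single i k) = (r i : ℝ≥0∞) ^ k := by
  simp [radiusPow]

lemma radiusPow_const (ρ : ℝ≥0) (e : σ →₀ ℕ) :
    radiusPow (fun _ ↦ ρ) e = (ρ : ℝ≥0∞) ^ degree e := by
  simp [radiusPow, Finsupp.prod, Finset.prod_pow_eq_pow_sum, degree_apply]

lemma radiusPow_mono (h : ∀ i, r i ≤ s i) (e : σ →₀ ℕ) : radiusPow r e ≤ radiusPow s e :=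
  ENNReal.coe_le_coe.2 (Finset.prod_le_prod' fun i _ ↦ pow_le_pow_left' (h i) _)

/-- The weighted `ℓ¹` norm of the coefficients of a power series. It is infinite if the series does
not converge absolutely on the closed polydisc of polyradius `r`. -/
noncomputable def majorantNorm (r : σ → ℝ≥0) (F : MvPowerSeries σ 𝕜) : ℝ≥0∞ :=
  ∑' e, ‖coeff e F‖ₑ * radiusPow r e

lemma majorantNorm_mono (h : ∀ i, r i ≤ s i) (F : MvPowerSeries σ 𝕜) :
    majorantNorm r F ≤ majorantNorm s F :=
  ENNReal.tsum_le_tsum fun e ↦ mul_le_mul_right (radiusPow_mono h e) _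

@[simp]
lemma majorantNorm_zero (r : σ → ℝ≥0) : majorantNorm r (0 : MvPowerSeries σ 𝕜) = 0 := by
  simp [majorantNorm]

lemma majorantNorm_add_le (r : σ → ℝ≥0) (F G : MvPowerSeries σ 𝕜) :
    majorantNorm r (F + G) ≤ majorantNorm r F + majorantNorm r G := by
  rw [majorantNorm, majorantNorm, majorantNorm, ← ENNReal.tsum_add]
  refine ENNReal.tsum_le_tsum fun e ↦ ?_
  rw [← add_mul, map_add]
  gcongr
  exact enorm_add_le _ _

lemma majorantNorm_neg (r : σ → ℝ≥0) (F : MvPowerSeries σ 𝕜) :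
    majorantNorm r (-F) = majorantNorm r F := by
  simp [majorantNorm]

lemma enorm_coeff_mul_le [DecidableEq σ] (r : σ → ℝ≥0) (F G : MvPowerSeries σ 𝕜) (e : σ →₀ ℕ) :
    ‖coeff e (F * G)‖ₑ * radiusPow r e ≤ ∑ x : Finset.HasAntidiagonal.antidiagonal e,
      ‖coeff x.1.1 F‖ₑ * radiusPow r x.1.1 * (‖coeff x.1.2 G‖ₑ * radiusPow r x.1.2) := by
  rw [Finset.univ_eq_attach, Finset.sum_attach (Finset.HasAntidiagonal.antidiagonal e)
    (fun x ↦ ‖coeff x.1 F‖ₑ * radiusPow r x.1 * (‖coeff x.2 G‖ₑ * radiusPow r x.2)), coeff_mul]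
  refine (mul_le_mul_left (enorm_sum_le _ _) _).trans_eq ?_
  rw [Finset.sum_mul]
  refine Finset.sum_congr rfl fun x hx ↦ ?_
  rw [← Finset.HasAntidiagonal.mem_antidiagonal.1 hx, radiusPow_add, enorm_mul]
  ring

lemma majorantNorm_mul_le (r : σ → ℝ≥0) (F G : MvPowerSeries σ 𝕜) :
    majorantNorm r (F * G) ≤ majorantNorm r F * majorantNorm r G := by
  classical
  calc majorantNorm r (F * G)
      ≤ ∑' (e) (x : Finset.HasAntidiagonal.antidiagonal e),
          ‖coeff x.1.1 F‖ₑ * radiusPow r x.1.1 * (‖coeff x.1.2 G‖ₑ * radiusPow r x.1.2) :=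
        ENNReal.tsum_le_tsum fun e ↦ (enorm_coeff_mul_le r F G e).trans_eq (tsum_fintype _).symm
    _ = ∑' x : (σ →₀ ℕ) × (σ →₀ ℕ),
          ‖coeff x.1 F‖ₑ * radiusPow r x.1 * (‖coeff x.2 G‖ₑ * radiusPow r x.2) := by
        rw [← Finset.HasAntidiagonal.sigmaAntidiagonalEquivProd.tsum_eq, ENNReal.tsum_sigma']
        rfl
    _ = majorantNorm r F * majorantNorm r G := by
        rw [majorantNorm, majorantNorm, ← ENNReal.tsum_mul_right]
        simp_rw [← ENNReal.tsum_mul_left]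
        exact ENNReal.tsum_prod
          (f := fun a b ↦ ‖coeff a F‖ₑ * radiusPow r a * (‖coeff b G‖ₑ * radiusPow r b))

@[simp]
lemma majorantNorm_monomial (r : σ → ℝ≥0) (e : σ →₀ ℕ) (a : 𝕜) :
    majorantNorm r (monomial e a) = ‖a‖ₑ * radiusPow r e := by
  classical
  rw [majorantNorm, tsum_eq_single e fun b hb ↦ by rw [coeff_monomial_ne hb, enorm_zero, zero_mul],
    coeff_monomial_same]

@[simp]
lemma majorantNorm_C (r : σ → ℝ≥0) (a : 𝕜) :
    majorantNorm r (C a : MvPowerSeries σ 𝕜) = ‖a‖ₑ := by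
  rw [← monomial_zero_eq_C_apply, majorantNorm_monomial, radiusPow_zero, mul_one]

@[simp]
lemma majorantNorm_one (r : σ → ℝ≥0) : majorantNorm r (1 : MvPowerSeries σ 𝕜) = 1 := by
  rw [← map_one C, majorantNorm_C, enorm_one]

@[simp]
lemma majorantNorm_X (r : σ → ℝ≥0) (i : σ) : majorantNorm r (X i : MvPowerSeries σ 𝕜) = r i := by
  simp [X]

lemma majorantNorm_pow_le (r : σ → ℝ≥0) (F : MvPowerSeries σ 𝕜) (k : ℕ) :
    majorantNorm r (F ^ k) ≤ majorantNorm r F ^ k := by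
  induction k with
  | zero => simp
  | succ k ih =>
    rw [pow_succ, pow_succ]
    exact (majorantNorm_mul_le _ _ _).trans (mul_le_mul_left ih _)

lemma majorantNorm_prod_le (r : σ → ℝ≥0) (s : Finset ι) (F : ι → MvPowerSeries σ 𝕜) :
    majorantNorm r (∏ i ∈ s, F i) ≤ ∏ i ∈ s, majorantNorm r (F i) := by
  classical
  induction s using Finset.induction_on with
  | empty => simp
  | insert a s ha ih =>
    rw [Finset.prod_insert ha, Finset.prod_insert ha]
    exact (majorantNorm_mul_le _ _ _).trans (mul_le_mul_right ih _)

lemma majorantNorm_finsuppProd_le {a : τ → MvPowerSeries σ 𝕜} {s : τ → ℝ≥0}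
    (h : ∀ i, majorantNorm r (a i) ≤ s i) (d : τ →₀ ℕ) :
    majorantNorm r (d.prod fun i k ↦ a i ^ k) ≤ radiusPow s d := by
  refine (majorantNorm_prod_le _ _ _).trans ?_
  rw [radiusPow, Finsupp.prod, ENNReal.ofNNReal_finsetProd]
  exact Finset.prod_le_prod' fun i _ ↦ (majorantNorm_pow_le _ _ _).trans <|
    (pow_le_pow_left' (h i) _).trans_eq (ENNReal.coe_pow _ _).symm

lemma majorantNorm_subst_le {a : τ → MvPowerSeries σ 𝕜} {s : τ → ℝ≥0} (ha : HasSubst a)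
    (h : ∀ i, majorantNorm r (a i) ≤ s i) (F : MvPowerSeries τ 𝕜) :
    majorantNorm r (subst a F) ≤ majorantNorm s F := by
  calc majorantNorm r (subst a F)
      ≤ ∑' e, ∑' d, ‖coeff d F‖ₑ * (‖coeff e (d.prod fun i k ↦ a i ^ k)‖ₑ * radiusPow r e) := by
        refine ENNReal.tsum_le_tsum fun e ↦ ?_
        rw [coeff_subst ha, finsum_eq_sum _ (coeff_subst_finite ha F e)]
        refine (mul_le_mul_left (enorm_sum_le _ _) _).trans ?_
        rw [Finset.sum_mul]
        refine le_trans (le_of_eq ?_) (ENNReal.sum_le_tsum (coeff_subst_finite ha F e).toFinset)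
        refine Finset.sum_congr rfl fun d _ ↦ ?_
        rw [smul_eq_mul, enorm_mul, mul_assoc]
    _ = ∑' d, ‖coeff d F‖ₑ * majorantNorm r (d.prod fun i k ↦ a i ^ k) := by
        rw [ENNReal.tsum_comm]
        simp_rw [ENNReal.tsum_mul_left]
        rfl
    _ ≤ majorantNorm s F :=
        ENNReal.tsum_le_tsum fun d ↦ mul_le_mul_right (majorantNorm_finsuppProd_le h d) _

lemma majorantNorm_le_of_approx (w : σ → ℕ) {F : MvPowerSeries σ 𝕜} {M : ℝ≥0∞}
    (h : ∀ k, ∃ G, majorantNorm r G ≤ M ∧ F - G ∈ orderIdeal w k) : majorantNorm r F ≤ M := by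
  rw [majorantNorm, ENNReal.tsum_eq_iSup_sum]
  refine iSup_le fun s ↦ ?_
  obtain ⟨G, hG, hFG⟩ := h (s.sup (weight w) + 1)
  refine le_trans (le_of_eq ?_) ((ENNReal.sum_le_tsum s).trans hG)
  refine Finset.sum_congr rfl fun e he ↦ ?_
  have hcoeff := mem_orderIdeal.1 hFG e (Nat.lt_succ_of_le (Finset.le_sup he))
  rw [map_sub, sub_eq_zero] at hcoeff
  rw [hcoeff]

lemma majorantNorm_le_mul_of_mem_orderIdeal {ε : ℝ≥0} (hsr : ∀ i, s i ≤ r i) {w : σ → ℕ}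
    (hw : ∀ i, w i ≠ 0 → s i ≤ ε * r i) {F : MvPowerSeries σ 𝕜} (hF : F ∈ orderIdeal w 1) :
    majorantNorm s F ≤ ε * majorantNorm r F := by
  rw [majorantNorm, majorantNorm, ← ENNReal.tsum_mul_left]
  refine ENNReal.tsum_le_tsum fun e ↦ ?_
  obtain he | he := lt_or_ge (weight w e) 1
  · simp [mem_orderIdeal.1 hF e he]
  · obtain ⟨i, hi, hwi⟩ := exists_ne_zero_of_one_le_weight he
    obtain ⟨e', rfl⟩ : ∃ e', e = single i 1 + e' :=
      ⟨e - single i 1, (add_tsub_cancel_of_le (Finsupp.single_le_iff.2 (by lia))).symm⟩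
    simp only [radiusPow_add, radiusPow_single, pow_one]
    calc ‖coeff (single i 1 + e') F‖ₑ * (s i * radiusPow s e')
        ≤ ‖coeff (single i 1 + e') F‖ₑ * ((ε * r i : ℝ≥0) * radiusPow r e') := by
          gcongr
          · exact hw i hwi
          · exact radiusPow_mono hsr _
      _ = ε * (‖coeff (single i 1 + e') F‖ₑ * (r i * radiusPow r e')) := by
          push_cast
          ring

end MajorantNorm

section Convergent

variable {σ τ ι 𝕜 : Type*} [NormedField 𝕜] {F G : MvPowerSeries σ 𝕜}

/-- A power series converging absolutely on some polydisc of positive radius. -/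
def IsConvergent (F : MvPowerSeries σ 𝕜) : Prop :=
  ∃ ρ : ℝ≥0, 0 < ρ ∧ majorantNorm (fun _ ↦ ρ) F < ⊤

lemma IsConvergent.exists_radius (h : IsConvergent F) :
    ∃ ρ : ℝ≥0, 0 < ρ ∧ ∀ r : σ → ℝ≥0, (∀ i, r i ≤ ρ) → majorantNorm r F < ⊤ :=
  let ⟨ρ, hρ, hF⟩ := h
  ⟨ρ, hρ, fun _ hr ↦ (majorantNorm_mono hr F).trans_lt hF⟩

lemma isConvergent_of_majorantNorm_lt_top [Finite σ] {r : σ → ℝ≥0} (hr : ∀ i, 0 < r i)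
    (h : majorantNorm r F < ⊤) : IsConvergent F := by
  obtain hσ | hσ := isEmpty_or_nonempty σ
  · exact ⟨1, one_pos, (majorantNorm_mono (fun i ↦ hσ.elim i) F).trans_lt h⟩
  · obtain ⟨i, hi⟩ := Finite.exists_min r
    exact ⟨r i, hr i, (majorantNorm_mono hi F).trans_lt h⟩

lemma isConvergent_zero : IsConvergent (0 : MvPowerSeries σ 𝕜) := ⟨1, one_pos, by simp⟩

lemma isConvergent_C (a : 𝕜) : IsConvergent (C a : MvPowerSeries σ 𝕜) := ⟨1, one_pos, by simp⟩

lemma isConvergent_one : IsConvergent (1 : MvPowerSeries σ 𝕜) := ⟨1, one_pos, by simp⟩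

lemma isConvergent_X (i : σ) : IsConvergent (X i : MvPowerSeries σ 𝕜) := ⟨1, one_pos, by simp⟩

lemma IsConvergent.add (hF : IsConvergent F) (hG : IsConvergent G) : IsConvergent (F + G) := by
  obtain ⟨a, ha, hFa⟩ := hF.exists_radius
  obtain ⟨b, hb, hGb⟩ := hG.exists_radius
  exact ⟨min a b, lt_min ha hb, (majorantNorm_add_le _ _ _).trans_lt <|
    ENNReal.add_lt_top.2 ⟨hFa _ fun _ ↦ min_le_left _ _, hGb _ fun _ ↦ min_le_right _ _⟩⟩

lemma IsConvergent.mul (hF : IsConvergent F) (hG : IsConvergent G) : IsConvergent (F * G) := by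
  obtain ⟨a, ha, hFa⟩ := hF.exists_radius
  obtain ⟨b, hb, hGb⟩ := hG.exists_radius
  exact ⟨min a b, lt_min ha hb, (majorantNorm_mul_le _ _ _).trans_lt <|
    ENNReal.mul_lt_top (hFa _ fun _ ↦ min_le_left _ _) (hGb _ fun _ ↦ min_le_right _ _)⟩

lemma IsConvergent.neg (hF : IsConvergent F) : IsConvergent (-F) :=
  let ⟨a, ha, hFa⟩ := hF
  ⟨a, ha, by rwa [majorantNorm_neg]⟩

/-- The ring `𝕜{σ}` of convergent power series. -/
def convergentSubring (σ 𝕜 : Type*) [NormedField 𝕜] : Subring (MvPowerSeries σ 𝕜) where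
  carrier := {F | IsConvergent F}
  zero_mem' := isConvergent_zero
  one_mem' := isConvergent_one
  add_mem' := IsConvergent.add
  mul_mem' := IsConvergent.mul
  neg_mem' := IsConvergent.neg

lemma IsConvergent.sub (hF : IsConvergent F) (hG : IsConvergent G) : IsConvergent (F - G) :=
  (convergentSubring σ 𝕜).sub_mem hF hG

lemma IsConvergent.pow (hF : IsConvergent F) (k : ℕ) : IsConvergent (F ^ k) :=
  (convergentSubring σ 𝕜).pow_mem hF k

lemma isConvergent_sum {s : Finset ι} {F : ι → MvPowerSeries σ 𝕜}
    (h : ∀ i ∈ s, IsConvergent (F i)) : IsConvergent (∑ i ∈ s, F i) :=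
  (convergentSubring σ 𝕜).sum_mem h

lemma isConvergent_prod {s : Finset ι} {F : ι → MvPowerSeries σ 𝕜}
    (h : ∀ i ∈ s, IsConvergent (F i)) : IsConvergent (∏ i ∈ s, F i) :=
  (convergentSubring σ 𝕜).prod_mem h

lemma isConvergent_det {n : Type*} [Fintype n] [DecidableEq n]
    {M : Matrix n n (MvPowerSeries σ 𝕜)} (h : ∀ i j, IsConvergent (M i j)) :
    IsConvergent M.det := by
  rw [Matrix.det_apply]
  exact isConvergent_sum fun g _ ↦
    (convergentSubring σ 𝕜).zsmul_mem (isConvergent_prod fun i _ ↦ h _ _) _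

lemma exists_common_radius [Finite ι] {F : ι → MvPowerSeries σ 𝕜} (h : ∀ i, IsConvergent (F i)) :
    ∃ ρ : ℝ≥0, 0 < ρ ∧ ∀ i, ∀ r : σ → ℝ≥0, (∀ j, r j ≤ ρ) → majorantNorm r (F i) < ⊤ := by
  choose ρ hρ hFρ using fun i ↦ (h i).exists_radius
  obtain hι | hι := isEmpty_or_nonempty ι
  · exact ⟨1, one_pos, fun i ↦ hι.elim i⟩
  · obtain ⟨i, hi⟩ := Finite.exists_min ρ
    exact ⟨ρ i, hρ i, fun j r hr ↦ hFρ j r fun k ↦ (hr k).trans (hi j)⟩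

lemma exists_pos_le_one_mul_le [Finite ι] {N : ι → ℝ≥0∞} (hN : ∀ i, N i < ⊤) {s : ℝ≥0}
    (hs : 0 < s) : ∃ ε : ℝ≥0, 0 < ε ∧ ε ≤ 1 ∧ ∀ i, ε * N i ≤ s := by
  cases nonempty_fintype ι
  set M : ℝ≥0 := ∑ i, (N i).toNNReal
  refine ⟨min 1 (s / (M + 1)), lt_min one_pos (by positivity), min_le_left _ _, fun i ↦ ?_⟩
  have hM : (N i).toNNReal ≤ M :=
    Finset.single_le_sum (f := fun i ↦ (N i).toNNReal) (fun _ _ ↦ zero_le) (Finset.mem_univ i)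
  rw [← ENNReal.coe_toNNReal (hN i).ne, ← ENNReal.coe_mul, ENNReal.coe_le_coe]
  calc min 1 (s / (M + 1)) * (N i).toNNReal
      ≤ s / (M + 1) * (M + 1) := mul_le_mul' (min_le_right _ _) (hM.trans (by simp))
    _ = s := div_mul_cancel₀ _ (by positivity)

lemma IsPointed.exists_radius_majorantNorm_le [Finite ι] {F : ι → MvPowerSeries σ 𝕜}
    (h0 : IsPointed F) (h : ∀ i, IsConvergent (F i)) {s : ℝ≥0} (hs : 0 < s) :
    ∃ ρ : ℝ≥0, 0 < ρ ∧ ∀ i, majorantNorm (fun _ ↦ ρ) (F i) ≤ s := by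
  obtain ⟨ρ, hρ, hFρ⟩ := exists_common_radius h
  obtain ⟨ε, hε, hε1, hεs⟩ := exists_pos_le_one_mul_le (fun i ↦ hFρ i _ fun _ ↦ le_rfl) hs
  refine ⟨ε * ρ, mul_pos hε hρ, fun i ↦ le_trans ?_ (hεs i)⟩
  exact majorantNorm_le_mul_of_mem_orderIdeal (fun _ ↦ mul_le_of_le_one_left' hε1)
    (fun _ _ ↦ le_rfl) (mem_degreeIdeal_one.2 (h0 i))

lemma IsConvergent.subst [Finite σ] {a : σ → MvPowerSeries τ 𝕜} (hF : IsConvergent F)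
    (h0 : IsPointed a) (ha : ∀ i, IsConvergent (a i)) : IsConvergent (subst a F) := by
  obtain ⟨s, hs, hFs⟩ := hF
  obtain ⟨ρ, hρ, haρ⟩ := h0.exists_radius_majorantNorm_le ha hs
  exact ⟨ρ, hρ, (majorantNorm_subst_le h0.hasSubst haρ F).trans_lt hFs⟩

lemma natCast_mul_radiusPow_half_le (s : ℝ≥0) (e : σ →₀ ℕ) (i : σ) :
    (e i : ℝ≥0∞) * radiusPow (fun _ ↦ s / 2) e ≤ radiusPow (fun _ ↦ s) e := by
  have hs : (s : ℝ≥0∞) = 2 * (s / 2 : ℝ≥0) := by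
    rw [← ENNReal.coe_ofNat, ← ENNReal.coe_mul, mul_div_cancel₀ _ two_ne_zero]
  rw [radiusPow_const, radiusPow_const, hs, mul_pow]
  gcongr
  exact_mod_cast (le_degree i e).trans Nat.lt_two_pow_self.le

lemma enorm_coeff_pderiv_le (F : MvPowerSeries σ 𝕜) (i : σ) {s : ℝ≥0} (hs : 0 < s) (e : σ →₀ ℕ) :
    ‖coeff e (pderiv 𝕜 i F)‖ₑ * radiusPow (fun _ ↦ s / 2) e ≤
      (2 / s : ℝ≥0) *
        (‖coeff (e + single i 1) F‖ₑ * radiusPow (fun _ ↦ s) (e + single i 1)) := by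
  set e' := e + single i 1 with he'
  have hcast : ‖(e i + 1 : 𝕜)‖ₑ ≤ (e' i : ℝ≥0∞) := by
    rw [← Nat.cast_succ, ← ofReal_norm, he', Finsupp.add_apply, single_eq_same]
    exact ENNReal.ofReal_le_natCast.2 (by simpa using Nat.norm_cast_le (α := 𝕜) (e i + 1))
  have hshift : radiusPow (fun _ ↦ s / 2) e =
      (2 / s : ℝ≥0) * radiusPow (fun _ ↦ s / 2) e' := by
    have : 2 / s * (s / 2) = 1 := by field_simp
    rw [he', radiusPow_add, radiusPow_single, pow_one, mul_left_comm, ← ENNReal.coe_mul, this,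
      ENNReal.coe_one, mul_one]
  rw [coeff_pderiv, ← he', enorm_mul, hshift]
  calc ‖coeff e' F‖ₑ * ‖(e i + 1 : 𝕜)‖ₑ *
        ((2 / s : ℝ≥0) * radiusPow (fun _ ↦ s / 2) e')
      ≤ ‖coeff e' F‖ₑ * (e' i : ℝ≥0∞) *
        ((2 / s : ℝ≥0) * radiusPow (fun _ ↦ s / 2) e') := by gcongr
    _ = (2 / s : ℝ≥0) * (‖coeff e' F‖ₑ *
        ((e' i : ℝ≥0∞) * radiusPow (fun _ ↦ s / 2) e')) := by ring
    _ ≤ _ := by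
        gcongr
        exact natCast_mul_radiusPow_half_le s _ i

lemma IsConvergent.pderiv (hF : IsConvergent F) (i : σ) : IsConvergent (pderiv 𝕜 i F) := by
  obtain ⟨s, hs, hFs⟩ := hF
  refine ⟨s / 2, by positivity,
    (ENNReal.tsum_le_tsum fun e ↦ enorm_coeff_pderiv_le F i hs e).trans_lt ?_⟩
  rw [ENNReal.tsum_mul_left]
  refine ENNReal.mul_lt_top ENNReal.coe_lt_top (lt_of_le_of_lt ?_ hFs)
  exact ENNReal.tsum_comp_le_tsum_of_injective (add_left_injective (single i 1))
    (fun e ↦ ‖coeff e F‖ₑ * radiusPow (fun _ ↦ s) e)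

end Convergent

section Contraction

variable {σ τ κ R : Type*} [CommRing R] {w : σ → ℕ} {k : ℕ}

lemma exists_limit_orderIdeal {Z : ℕ → MvPowerSeries σ R}
    (h : ∀ n, Z (n + 1) - Z n ∈ orderIdeal w n) : ∃ z, ∀ n, z - Z n ∈ orderIdeal w n := by
  have hcauchy n m : Z (n + m) - Z n ∈ orderIdeal w n := by
    induction m with
    | zero => simp
    | succ m ih =>
      have := (orderIdeal w n).add_mem (orderIdeal_anti w (Nat.le_add_right n m) (h (n + m))) ih
      rwa [sub_add_sub_cancel] at this
  let z : MvPowerSeries σ R := fun e ↦ coeff e (Z (weight w e + 1))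
  refine ⟨z, fun n ↦ mem_orderIdeal.2 fun e he ↦ ?_⟩
  obtain ⟨m, rfl⟩ : ∃ m, n = weight w e + 1 + m := ⟨n - (weight w e + 1), by lia⟩
  have hcoeff := mem_orderIdeal.1 (hcauchy (weight w e + 1) m) e (by lia)
  rw [map_sub, sub_eq_zero] at hcoeff ⊢
  rw [hcoeff]
  rfl

/-- Banach's fixed point theorem for the topology defined by the ideals `orderIdeal w k`: `Φ` need
only be a contraction on the closed set `P`. -/
lemma exists_fixedPoint_of_contraction (w : σ → ℕ)
    (Φ : (κ → MvPowerSeries σ R) → κ → MvPowerSeries σ R) (P : (κ → MvPowerSeries σ R) → Prop)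
    (h0 : P 0) (hΦ : ∀ z, P z → P (Φ z))
    (hclosed : ∀ z, (∀ k, ∃ z', P z' ∧ ∀ i, z i - z' i ∈ orderIdeal w k) → P z)
    (hcontr : ∀ k z z', P z → P z' → (∀ i, z i - z' i ∈ orderIdeal w k) →
      ∀ i, Φ z i - Φ z' i ∈ orderIdeal w (k + 1)) :
    ∃ z, P z ∧ Φ z = z := by
  have hsucc n : Φ^[n + 1] 0 = Φ (Φ^[n] 0) := Function.iterate_succ_apply' _ _ _
  have hP n : P (Φ^[n] 0) := by
    induction n with
    | zero => exact h0
    | succ n ih => exact hsucc n ▸ hΦ _ ih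
  have hstep n : ∀ i, Φ^[n + 1] 0 i - Φ^[n] 0 i ∈ orderIdeal w n := by
    induction n with
    | zero => exact fun i ↦ mem_orderIdeal_zero _ _
    | succ n ih =>
      rw [hsucc (n + 1), hsucc n] at *
      exact hcontr n _ _ (hΦ _ (hP n)) (hP n) ih
  choose z hz using fun i ↦ exists_limit_orderIdeal (Z := fun n ↦ Φ^[n] 0 i) fun n ↦ hstep n i
  have hPz : P z := hclosed z fun k ↦ ⟨_, hP k, fun i ↦ hz i k⟩
  refine ⟨z, hPz, funext fun i ↦
    sub_eq_zero.1 (eq_zero_of_forall_mem_orderIdeal (w := w) fun n ↦ ?_)⟩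
  have happrox : z i - Φ (Φ^[n] 0) i ∈ orderIdeal w (n + 1) := hsucc n ▸ hz i (n + 1)
  have := sub_mem (hcontr n _ _ hPz (hP n) (hz · n) i) happrox
  rw [sub_sub_sub_cancel_right] at this
  exact orderIdeal_anti w n.le_succ this

lemma finsuppProd_sub_mem {A : Type*} [CommRing A] {I : Ideal A} {a b : τ → A}
    (h : ∀ i, a i - b i ∈ I) (d : τ →₀ ℕ) :
    (d.prod fun i n ↦ a i ^ n) - (d.prod fun i n ↦ b i ^ n) ∈ I := by
  rw [← Ideal.Quotient.mk_eq_mk_iff_sub_mem]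
  simp only [Finsupp.prod, map_prod, map_pow]
  refine Finset.prod_congr rfl fun i _ ↦ ?_
  rw [(Ideal.Quotient.mk_eq_mk_iff_sub_mem _ _).2 (h i)]

lemma subst_sub_subst_mem_orderIdeal {a b : τ → MvPowerSeries σ R} (ha : HasSubst a)
    (hb : HasSubst b) (h : ∀ i, a i - b i ∈ orderIdeal w k) (F : MvPowerSeries τ R) :
    subst a F - subst b F ∈ orderIdeal w k := by
  refine mem_orderIdeal.2 fun e he ↦ ?_
  rw [map_sub, sub_eq_zero, coeff_subst ha, coeff_subst hb]
  refine finsum_congr fun d ↦ ?_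
  have := mem_orderIdeal.1 (finsuppProd_sub_mem h d) e he
  rw [map_sub, sub_eq_zero] at this
  rw [this]

lemma subst_sub_subst_mem_orderIdeal_succ {v : τ → ℕ} {a b : τ → MvPowerSeries σ R}
    (ha : HasSubst a) (hb : HasSubst b) (h : ∀ i, a i - b i ∈ orderIdeal w k)
    (hv : ∀ i, v i ≠ 0 → a i = b i ∧ a i ∈ orderIdeal w 1) {F : MvPowerSeries τ R}
    (hF : F ∈ orderIdeal v 1) : subst a F - subst b F ∈ orderIdeal w (k + 1) := by
  classical
  refine mem_orderIdeal.2 fun e he ↦ ?_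
  rw [map_sub, sub_eq_zero, coeff_subst ha, coeff_subst hb]
  refine finsum_congr fun d ↦ ?_
  obtain hd | hd := lt_or_ge (weight v d) 1
  · rw [mem_orderIdeal.1 hF d hd, zero_smul, zero_smul]
  obtain ⟨i, hi, hvi⟩ := exists_ne_zero_of_one_le_weight hd
  obtain ⟨d', rfl⟩ : ∃ d', d = single i 1 + d' :=
    ⟨d - single i 1, (add_tsub_cancel_of_le (Finsupp.single_le_iff.2 (by lia))).symm⟩
  obtain ⟨hab, hai⟩ := hv i hvi
  congr 1
  rw [← sub_eq_zero, ← map_sub, Finsupp.prod_add_index' (by simp) (by intros; rw [pow_add]),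
    Finsupp.prod_add_index' (by simp) (by intros; rw [pow_add]), prod_single_index (by simp),
    prod_single_index (by simp), ← hab, ← mul_sub, pow_one]
  exact mem_orderIdeal.1 (mul_mem_orderIdeal_add hai (finsuppProd_sub_mem h d')) e (by lia)

end Contraction

section ImplicitFunction

/-- The weight for which only the left variables count; `orderIdeal leftWeight 1` is the ideal
generated by them. -/
abbrev leftWeight {τ κ : Type*} : τ ⊕ κ → ℕ := Sum.elim (fun _ ↦ 1) (fun _ ↦ 0)

variable {σ τ κ R : Type*} [Finite τ] [Finite κ]

lemma subst_sumElim_sub_mem_degreeIdeal_succ [CommRing R] {Ψ : MvPowerSeries (τ ⊕ κ) R}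
    (hΨ : Ψ ∈ orderIdeal leftWeight 1) {a : τ → MvPowerSeries σ R} (ha : IsPointed a) {k : ℕ}
    {z z' : κ → MvPowerSeries σ R} (hz : IsPointed z) (hz' : IsPointed z')
    (h : ∀ i, z i - z' i ∈ degreeIdeal k) :
    subst (Sum.elim a z) Ψ - subst (Sum.elim a z') Ψ ∈ degreeIdeal (k + 1) := by
  refine subst_sub_subst_mem_orderIdeal_succ (v := leftWeight) (ha.sumElim hz).hasSubst
    (ha.sumElim hz').hasSubst ?_ ?_ hΨ
  · rintro (j | j)
    · simp
    · exact h j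
  · rintro (j | j) hj
    · exact ⟨rfl, mem_degreeIdeal_one.2 (ha j)⟩
    · simp at hj

lemma eq_of_eq_subst_sumElim [CommRing R] {Ψ : κ → MvPowerSeries (τ ⊕ κ) R}
    (hΨ : ∀ i, Ψ i ∈ orderIdeal leftWeight 1) {a : τ → MvPowerSeries σ R} (ha : IsPointed a)
    {z z' : κ → MvPowerSeries σ R} (hz : IsPointed z) (hz' : IsPointed z')
    (h : ∀ i, z i = subst (Sum.elim a z) (Ψ i)) (h' : ∀ i, z' i = subst (Sum.elim a z') (Ψ i)) :
    z = z' := by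
  have hmem k : ∀ i, z i - z' i ∈ degreeIdeal k := by
    induction k with
    | zero => exact fun i ↦ mem_orderIdeal_zero _ _
    | succ k ih =>
      intro i
      rw [h i, h' i]
      exact subst_sumElim_sub_mem_degreeIdeal_succ (hΨ i) ha hz hz' ih
  exact funext fun i ↦ sub_eq_zero.1 (eq_zero_of_forall_mem_orderIdeal fun k ↦ hmem k i)

variable {𝕜 : Type*} [NormedField 𝕜]

lemma majorantNorm_subst_sumElim_le {Ψ : MvPowerSeries (τ ⊕ κ) 𝕜}
    (hΨ : Ψ ∈ orderIdeal leftWeight 1) {ρ ε : ℝ≥0} (hε : ε ≤ 1) {z : κ → MvPowerSeries τ 𝕜}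
    (hz : IsPointed z) (hzρ : ∀ i, majorantNorm (fun _ ↦ ε * ρ) (z i) ≤ ρ) :
    majorantNorm (fun _ ↦ ε * ρ) (subst (Sum.elim X z) Ψ) ≤ ε * majorantNorm (fun _ ↦ ρ) Ψ := by
  calc majorantNorm (fun _ ↦ ε * ρ) (subst (Sum.elim X z) Ψ)
      ≤ majorantNorm (Sum.elim (fun _ ↦ ε * ρ) (fun _ ↦ ρ)) Ψ := by
        refine majorantNorm_subst_le ((isPointed_X id).sumElim hz).hasSubst ?_ Ψ
        rintro (_ | j)
        · simp
        · exact hzρ j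
    _ ≤ ε * majorantNorm (fun _ ↦ ρ) Ψ := by
        refine majorantNorm_le_mul_of_mem_orderIdeal ?_ ?_ hΨ
        · rintro (_ | _)
          · exact mul_le_of_le_one_left' hε
          · exact le_rfl
        · rintro (_ | _) hj
          · exact le_rfl
          · simp at hj

/-- The implicit function theorem for convergent power series, in fixed point form. -/
theorem exists_isConvergent_eq_subst_sumElim {Ψ : κ → MvPowerSeries (τ ⊕ κ) 𝕜}
    (hΨ : ∀ i, Ψ i ∈ orderIdeal leftWeight 1) (hc : ∀ i, IsConvergent (Ψ i)) :
    ∃ z : κ → MvPowerSeries τ 𝕜, (∀ i, IsConvergent (z i)) ∧ IsPointed z ∧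
      ∀ i, z i = subst (Sum.elim X z) (Ψ i) := by
  have hX : IsPointed (X : τ → MvPowerSeries τ 𝕜) := isPointed_X id
  obtain ⟨ρ, hρ, hΨρ⟩ := exists_common_radius hc
  obtain ⟨ε, hε, hε1, hερ⟩ := exists_pos_le_one_mul_le (fun i ↦ hΨρ i _ fun _ ↦ le_rfl) hρ
  let P (z : κ → MvPowerSeries τ 𝕜) : Prop :=
    IsPointed z ∧ ∀ i, majorantNorm (fun _ ↦ ε * ρ) (z i) ≤ ρ
  have hclosed z (hz : ∀ k, ∃ z', P z' ∧ ∀ i, z i - z' i ∈ degreeIdeal k) : P z := by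
    refine ⟨fun i ↦ ?_, fun i ↦ majorantNorm_le_of_approx (fun _ ↦ 1) fun k ↦ ?_⟩
    · obtain ⟨z', ⟨hz', -⟩, hzz'⟩ := hz 1
      have := mem_degreeIdeal_one.1 (hzz' i)
      rwa [map_sub, hz' i, sub_zero] at this
    · obtain ⟨z', ⟨-, hz'⟩, hzz'⟩ := hz k
      exact ⟨z' i, hz' i, hzz' i⟩
  obtain ⟨z, ⟨hz, hzρ⟩, hfix⟩ := exists_fixedPoint_of_contraction (fun _ ↦ 1)
    (fun z i ↦ subst (Sum.elim X z) (Ψ i)) P ⟨isPointed_zero, by simp⟩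
    (fun z hz ↦ ⟨fun i ↦ (constantCoeff_subst_of_isPointed (hX.sumElim hz.1) _).trans
        (constantCoeff_eq_zero_of_mem_orderIdeal (hΨ i)),
      fun i ↦ (majorantNorm_subst_sumElim_le (hΨ i) hε1 hz.1 hz.2).trans (hερ i)⟩) hclosed
    (fun k z z' hz hz' h i ↦ subst_sumElim_sub_mem_degreeIdeal_succ (hΨ i) hX hz.1 hz'.1 h)
  exact ⟨z, fun i ↦ ⟨ε * ρ, mul_pos hε hρ, (hzρ i).trans_lt ENNReal.coe_lt_top⟩, hz,
    fun i ↦ (congrFun hfix i).symm⟩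

end ImplicitFunction

section WeierstrassDivision

variable {σ τ R : Type*} [CommRing R]

/-- Division by the monomial `X ^ d`, discarding the terms it does not divide. -/
noncomputable def divMonomial (d : σ →₀ ℕ) : MvPowerSeries σ R →ₗ[R] MvPowerSeries σ R where
  toFun F e := coeff (e + d) F
  map_add' _ _ := rfl
  map_smul' _ _ := rfl

lemma coeff_divMonomial (d e : σ →₀ ℕ) (F : MvPowerSeries σ R) :
    coeff e (divMonomial d F) = coeff (e + d) F := rfl

lemma divMonomial_X_pow_mul (i : σ) (D : ℕ) (F : MvPowerSeries σ R) :
    divMonomial (single i D) (X i ^ D * F) = F := by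
  ext e
  rw [coeff_divMonomial, X_pow_eq, add_comm, coeff_add_monomial_mul, one_mul]

/-- The series that are polynomials of degree less than `D` in the variable `none`. -/
noncomputable def noneDegreeLT (D : ℕ) : Submodule R (MvPowerSeries (Option τ) R) :=
  LinearMap.ker (divMonomial (single none D))

lemma mem_noneDegreeLT {D : ℕ} {F : MvPowerSeries (Option τ) R} :
    F ∈ noneDegreeLT D ↔ ∀ e : Option τ →₀ ℕ, D ≤ e none → coeff e F = 0 := by
  classical
  refine ⟨fun h e he ↦ ?_, fun h ↦ MvPowerSeries.ext fun e ↦ h _ (by simp)⟩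
  rw [← tsub_add_cancel_of_le (Finsupp.single_le_iff.2 he), ← coeff_divMonomial,
    LinearMap.mem_ker.1 h, map_zero]

/-- The weight for which only the variables other than `none` count. -/
def someWeight : Option τ → ℕ := fun o ↦ o.elim 0 fun _ ↦ 1

lemma divMonomial_mem_orderIdeal {D k : ℕ} {F : MvPowerSeries (Option τ) R}
    (h : F ∈ orderIdeal someWeight k) :
    divMonomial (single none D) F ∈ orderIdeal someWeight k := by
  refine mem_orderIdeal.2 fun e he ↦ ?_
  rw [coeff_divMonomial]
  exact mem_orderIdeal.1 h _ (by simpa [weight_single, someWeight] using he)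

/-- The quotient is the fixed point of the contraction `Q ↦ (F - V * Q) / t ^ D`, where `t` is the
variable `none`; it lies in every closed set preserved by this contraction. -/
lemma exists_weierstrass_division_of_invariant {D : ℕ} {V : MvPowerSeries (Option τ) R}
    (hV : V ∈ orderIdeal someWeight 1) (F : MvPowerSeries (Option τ) R)
    (P : MvPowerSeries (Option τ) R → Prop) (h0 : P 0)
    (hP : ∀ Q, P Q → P (divMonomial (single none D) (F - V * Q)))
    (hclosed : ∀ Q, (∀ k, ∃ Q', P Q' ∧ Q - Q' ∈ orderIdeal someWeight k) → P Q) :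
    ∃ Q S, F = (X none ^ D + V) * Q + S ∧ S ∈ noneDegreeLT D ∧ P Q := by
  obtain ⟨z, hz, hfix⟩ := exists_fixedPoint_of_contraction (κ := Unit) someWeight
    (fun z _ ↦ divMonomial (single none D) (F - V * z ())) (fun z ↦ P (z ())) h0
    (fun z ↦ hP (z ()))
    (fun z hz ↦ hclosed _ fun k ↦ let ⟨z', hz', hzz'⟩ := hz k; ⟨z' (), hz', hzz' ()⟩)
    (fun k z z' _ _ h _ ↦ by
      rw [← map_sub, sub_sub_sub_cancel_left, ← mul_sub, add_comm]
      exact divMonomial_mem_orderIdeal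
        (mul_mem_orderIdeal_add hV (neg_sub (z ()) (z' ()) ▸ neg_mem (h ()))))
  refine ⟨z (), F - (X none ^ D + V) * z (), by ring, ?_, hz⟩
  have hfix' : divMonomial (single none D) (F - V * z ()) = z () := congrFun hfix ()
  rw [noneDegreeLT, LinearMap.mem_ker, add_mul, ← sub_sub, sub_right_comm, map_sub, hfix',
    divMonomial_X_pow_mul, sub_self]

lemma exists_weierstrass_division {D : ℕ} {V : MvPowerSeries (Option τ) R}
    (hV : V ∈ orderIdeal someWeight 1) (F : MvPowerSeries (Option τ) R) :
    ∃ Q S, F = (X none ^ D + V) * Q + S ∧ S ∈ noneDegreeLT D := by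
  obtain ⟨Q, S, h, hS, -⟩ := exists_weierstrass_division_of_invariant (D := D) hV F
    (fun _ ↦ True) trivial (fun _ _ ↦ trivial) (fun _ _ ↦ trivial)
  exact ⟨Q, S, h, hS⟩

lemma weierstrass_division_eq_zero {D : ℕ} {V Q S : MvPowerSeries (Option τ) R}
    (hV : V ∈ orderIdeal someWeight 1) (h : (X none ^ D + V) * Q + S = 0)
    (hS : S ∈ noneDegreeLT D) : Q = 0 ∧ S = 0 := by
  have hQ : Q = -divMonomial (single none D) (V * Q) := by
    have := congrArg (divMonomial (single none D)) h
    rw [add_mul, map_add, map_add, divMonomial_X_pow_mul, LinearMap.mem_ker.1 hS, map_zero,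
      add_zero] at this
    exact eq_neg_of_add_eq_zero_left this
  have hmem k : Q ∈ orderIdeal someWeight k := by
    induction k with
    | zero => exact mem_orderIdeal_zero _ _
    | succ k ih =>
      rw [hQ, add_comm]
      exact neg_mem (divMonomial_mem_orderIdeal (mul_mem_orderIdeal_add hV ih))
  obtain rfl : Q = 0 := eq_zero_of_forall_mem_orderIdeal hmem
  exact ⟨rfl, by simpa using h⟩

variable {𝕜 : Type*} [NormedField 𝕜] {r : Option τ → ℝ≥0}

lemma majorantNorm_divMonomial_le {D : ℕ} (hr : r none ≠ 0) (F : MvPowerSeries (Option τ) 𝕜) :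
    majorantNorm r (divMonomial (single none D) F) ≤
      ((r none)⁻¹ ^ D : ℝ≥0) * majorantNorm r F := by
  rw [majorantNorm, majorantNorm, ← ENNReal.tsum_mul_left]
  refine le_trans (le_of_eq (tsum_congr fun e ↦ ?_)) <|
    ENNReal.tsum_comp_le_tsum_of_injective (add_left_injective (single none D)) _
  have hcancel : ((r none)⁻¹ ^ D : ℝ≥0) * (r none : ℝ≥0∞) ^ D = 1 := by
    rw [← ENNReal.coe_pow, ← ENNReal.coe_mul, ← mul_pow, inv_mul_cancel₀ hr, one_pow,
      ENNReal.coe_one]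
  rw [coeff_divMonomial, radiusPow_add, radiusPow_single]
  rw [← mul_one (_ * radiusPow r e), ← hcancel]
  ring

lemma majorantNorm_divMonomial_sub_mul_le {D : ℕ} (hr : r none ≠ 0)
    {F V Q : MvPowerSeries (Option τ) 𝕜}
    (hV : ((r none)⁻¹ ^ D : ℝ≥0) * majorantNorm r V ≤ 2⁻¹)
    (hQ : majorantNorm r Q ≤ 2 * (((r none)⁻¹ ^ D : ℝ≥0) * majorantNorm r F)) :
    majorantNorm r (divMonomial (single none D) (F - V * Q)) ≤
      2 * (((r none)⁻¹ ^ D : ℝ≥0) * majorantNorm r F) := by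
  set K : ℝ≥0∞ := (((r none)⁻¹ ^ D : ℝ≥0) : ℝ≥0∞)
  calc majorantNorm r (divMonomial (single none D) (F - V * Q))
      ≤ K * (majorantNorm r F + majorantNorm r V * majorantNorm r Q) := by
        refine (majorantNorm_divMonomial_le hr _).trans ?_
        gcongr
        rw [sub_eq_add_neg]
        refine (majorantNorm_add_le _ _ _).trans ?_
        rw [majorantNorm_neg]
        gcongr
        exact majorantNorm_mul_le _ _ _
    _ = K * majorantNorm r F + K * majorantNorm r V * majorantNorm r Q := by ring
    _ ≤ K * majorantNorm r F + 2⁻¹ * (2 * (K * majorantNorm r F)) := by gcongr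
    _ = 2 * (K * majorantNorm r F) := by
        rw [← mul_assoc, ENNReal.inv_mul_cancel two_ne_zero ENNReal.ofNat_ne_top, one_mul, two_mul]

lemma exists_radius_mul_majorantNorm_le {V F : MvPowerSeries (Option τ) 𝕜} (D : ℕ)
    (hV : V ∈ orderIdeal someWeight 1) (hVc : IsConvergent V) (hF : IsConvergent F) :
    ∃ r : Option τ → ℝ≥0, (∀ i, 0 < r i) ∧ majorantNorm r F < ⊤ ∧
      ((r none)⁻¹ ^ D : ℝ≥0) * majorantNorm r V ≤ 2⁻¹ := by
  obtain ⟨ρ, hρ, hfin⟩ := exists_common_radius (F := ![V, F]) (Fin.forall_fin_two.2 ⟨hVc, hF⟩)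
  obtain ⟨ε, hε, hε1, hεV⟩ := exists_pos_le_one_mul_le (ι := Unit)
    (fun _ ↦ hfin 0 (fun _ ↦ ρ) fun _ ↦ le_rfl) (s := 2⁻¹ * ρ ^ D) (by positivity)
  let r : Option τ → ℝ≥0 := fun o ↦ o.elim ρ fun _ ↦ ε * ρ
  have hrρ : ∀ i, r i ≤ ρ := by
    rintro (_ | _)
    exacts [le_rfl, mul_le_of_le_one_left' hε1]
  refine ⟨r, ?_, hfin 1 r hrρ, ?_⟩
  · rintro (_ | _)
    exacts [hρ, mul_pos hε hρ]
  have hVr : majorantNorm r V ≤ (2⁻¹ * ρ ^ D : ℝ≥0) := by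
    refine (majorantNorm_le_mul_of_mem_orderIdeal hrρ ?_ hV).trans (hεV ())
    rintro (_ | i) hi
    · simp [someWeight] at hi
    · exact le_rfl
  calc ((r none)⁻¹ ^ D : ℝ≥0) * majorantNorm r V
      ≤ ((ρ⁻¹ ^ D : ℝ≥0) * (2⁻¹ * ρ ^ D : ℝ≥0) : ℝ≥0∞) := mul_le_mul_right hVr _
    _ = (2⁻¹ : ℝ≥0) := by
        rw [← ENNReal.coe_mul, mul_left_comm, ← mul_pow, inv_mul_cancel₀ hρ.ne', one_pow, mul_one]
    _ = 2⁻¹ := by simp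

theorem exists_isConvergent_weierstrass_division [Finite τ] {D : ℕ}
    {V F : MvPowerSeries (Option τ) 𝕜} (hV : V ∈ orderIdeal someWeight 1) (hVc : IsConvergent V)
    (hF : IsConvergent F) :
    ∃ Q S, F = (X none ^ D + V) * Q + S ∧ S ∈ noneDegreeLT D ∧
      IsConvergent Q ∧ IsConvergent S := by
  obtain ⟨r, hr, hFr, hVr⟩ := exists_radius_mul_majorantNorm_le D hV hVc hF
  obtain ⟨Q, S, h, hS, hQ⟩ := exists_weierstrass_division_of_invariant (D := D) hV F
    (fun Q ↦ majorantNorm r Q ≤ 2 * (((r none)⁻¹ ^ D : ℝ≥0) * majorantNorm r F)) (by simp)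
    (fun Q hQ ↦ majorantNorm_divMonomial_sub_mul_le (hr none).ne' hVr hQ)
    (fun Q hQ ↦ majorantNorm_le_of_approx someWeight hQ)
  have hbound : 2 * (((r none)⁻¹ ^ D : ℝ≥0) * majorantNorm r F) < ⊤ :=
    ENNReal.mul_lt_top ENNReal.ofNat_lt_top (ENNReal.mul_lt_top ENNReal.coe_lt_top hFr)
  have hQc : IsConvergent Q := isConvergent_of_majorantNorm_lt_top hr (hQ.trans_lt hbound)
  refine ⟨Q, S, h, hS, hQc, ?_⟩
  rw [← sub_eq_iff_eq_add'.2 h]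
  exact hF.sub ((((isConvergent_X _).pow _).add hVc).mul hQc)

end WeierstrassDivision

section DistinguishedVariable

variable {σ τ ι R : Type*} [CommRing R]

/-- The inclusion of the power series ring in the variables `τ` in the one with an additional
variable `none`. -/
noncomputable def renameSome : MvPowerSeries τ R →ₐ[R] MvPowerSeries (Option τ) R :=
  rename Function.Embedding.some

/-- The coefficient of `X none ^ j`, a power series in the remaining variables. -/
noncomputable def noneCoeff (j : ℕ) : MvPowerSeries (Option τ) R →+ MvPowerSeries τ R :=
  (PowerSeries.coeff j).toAddMonoidHom.comp (optionEquivLeft τ R : _ →+ _)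

lemma noneCoeff_apply (j : ℕ) (F : MvPowerSeries (Option τ) R) :
    noneCoeff j F = PowerSeries.coeff j (optionEquivLeft τ R F) := rfl

lemma coeff_noneCoeff (j : ℕ) (F : MvPowerSeries (Option τ) R) (e : τ →₀ ℕ) :
    coeff e (noneCoeff j F) = coeff (e.optionElim j) F :=
  coeff_coeff_optionEquivLeft ..

lemma coeff_eq_coeff_noneCoeff (F : MvPowerSeries (Option τ) R) (e : Option τ →₀ ℕ) :
    coeff e F = coeff e.some (noneCoeff (e none) F) := by
  rw [coeff_noneCoeff, optionElim_some]

lemma eq_zero_of_forall_noneCoeff_eq_zero {F : MvPowerSeries (Option τ) R}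
    (h : ∀ j, noneCoeff j F = 0) : F = 0 :=
  MvPowerSeries.ext fun e ↦ by rw [coeff_eq_coeff_noneCoeff, h, map_zero, map_zero]

lemma constantCoeff_noneCoeff (j : ℕ) (F : MvPowerSeries (Option τ) R) :
    constantCoeff (noneCoeff j F) = coeff (single none j) F := by
  rw [← coeff_zero_eq_constantCoeff_apply, coeff_noneCoeff, optionElim_zero]

lemma mem_noneDegreeLT_iff_noneCoeff {D : ℕ} {F : MvPowerSeries (Option τ) R} :
    F ∈ noneDegreeLT D ↔ ∀ j, D ≤ j → noneCoeff j F = 0 := by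
  refine mem_noneDegreeLT.trans ⟨fun h j hj ↦ MvPowerSeries.ext fun e ↦ ?_, fun h e he ↦ ?_⟩
  · rw [coeff_noneCoeff, h _ (by rwa [optionElim_apply_none]), map_zero]
  · rw [coeff_eq_coeff_noneCoeff, h _ he, map_zero]

lemma optionEquivLeft_renameSome (F : MvPowerSeries τ R) :
    optionEquivLeft τ R (renameSome F) = PowerSeries.C F := by
  ext j e
  rw [coeff_coeff_optionEquivLeft, PowerSeries.coeff_C, renameSome]
  split_ifs with hj
  · have : e.optionElim j = embDomain Function.Embedding.some e := by
      ext (_ | i)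
      · simp [hj]
      · rw [embDomain_some_some, optionElim_apply_some]
    rw [this, coeff_embDomain_rename]
  · rw [map_zero]
    refine coeff_rename_eq_zero _ _ ?_
    rintro ⟨e', he'⟩
    refine hj ?_
    rw [← optionElim_apply_none j e, ← he', ← embDomain_eq_mapDomain]
    simp

lemma noneCoeff_X_pow_mul_renameSome (F : MvPowerSeries τ R) (j k : ℕ) :
    noneCoeff k (X none ^ j * renameSome F) = if k = j then F else 0 := by
  rw [noneCoeff_apply, map_mul, map_pow, optionEquivLeft_X_none, optionEquivLeft_renameSome,
    mul_comm, PowerSeries.coeff_C_mul, PowerSeries.coeff_X_pow, mul_ite, mul_one, mul_zero]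

/-- The polynomial in the variable `none` with coefficients `c 0, …, c (D - 1)`. -/
noncomputable def nonePoly {D : ℕ} (c : Fin D → MvPowerSeries τ R) :
    MvPowerSeries (Option τ) R :=
  ∑ j : Fin D, X none ^ (j : ℕ) * renameSome (c j)

lemma noneCoeff_nonePoly {D : ℕ} (c : Fin D → MvPowerSeries τ R) (k : ℕ) :
    noneCoeff k (nonePoly c) = if h : k < D then c ⟨k, h⟩ else 0 := by
  rw [nonePoly, map_sum]
  simp only [noneCoeff_X_pow_mul_renameSome]
  split_ifs with h
  · rw [Finset.sum_eq_single_of_mem ⟨k, h⟩ (Finset.mem_univ _), if_pos rfl]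
    exact fun j _ hj ↦ if_neg fun hk ↦ hj (Fin.ext hk.symm)
  · exact Finset.sum_eq_zero fun j _ ↦ if_neg fun hk : k = j ↦ h (hk ▸ j.2)

lemma nonePoly_mem_noneDegreeLT {D : ℕ} (c : Fin D → MvPowerSeries τ R) :
    nonePoly c ∈ noneDegreeLT D :=
  mem_noneDegreeLT_iff_noneCoeff.2 fun j hj ↦ by rw [noneCoeff_nonePoly, dif_neg hj.not_gt]

lemma eq_nonePoly_add_X_pow_mul (D : ℕ) (F : MvPowerSeries (Option τ) R) :
    F = nonePoly (fun j : Fin D ↦ noneCoeff j F) +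
      X none ^ D * divMonomial (single none D) F := by
  classical
  ext e
  rw [map_add, coeff_eq_coeff_noneCoeff (nonePoly _), noneCoeff_nonePoly]
  split_ifs with he
  · rw [X_pow_dvd_iff.1 (Dvd.intro _ rfl) e he, add_zero, ← coeff_eq_coeff_noneCoeff]
  · obtain ⟨e', rfl⟩ := exists_add_of_le (Finsupp.single_le_iff.2 (not_lt.1 he))
    rw [map_zero, zero_add, X_pow_eq, coeff_add_monomial_mul, one_mul, coeff_divMonomial, add_comm]

lemma eq_nonePoly_of_mem_noneDegreeLT {D : ℕ} {F : MvPowerSeries (Option τ) R}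
    (h : F ∈ noneDegreeLT D) : F = nonePoly fun j : Fin D ↦ noneCoeff j F := by
  conv_lhs => rw [eq_nonePoly_add_X_pow_mul D F, LinearMap.mem_ker.1 h, mul_zero, add_zero]

lemma noneCoeff_divMonomial (j k : ℕ) (F : MvPowerSeries (Option τ) R) :
    noneCoeff j (divMonomial (single none k) F) = noneCoeff (j + k) F := by
  ext e
  rw [coeff_noneCoeff, coeff_divMonomial, coeff_noneCoeff, ← add_zero e, optionElim_add, add_zero,
    optionElim_zero]

lemma eq_single_none_of_weight_someWeight_lt_one {e : Option τ →₀ ℕ}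
    (h : weight someWeight e < 1) : e = single none (e none) := by
  classical
  ext (_ | i)
  · simp
  · rw [single_eq_of_ne (by simp)]
    by_contra hi
    have := le_weight (someWeight (τ := τ)) (s := some i) (by simp [someWeight]) e
    lia

lemma mem_orderIdeal_someWeight_one {F : MvPowerSeries (Option τ) R} :
    F ∈ orderIdeal someWeight 1 ↔ ∀ j, coeff (single none j) F = 0 := by
  refine mem_orderIdeal.trans ⟨fun h j ↦ h _ ?_, fun h e he ↦ ?_⟩
  · simp [weight_single, someWeight]
  · rw [eq_single_none_of_weight_someWeight_lt_one he, h]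

lemma IsPointed.nonePoly_mem_orderIdeal {D : ℕ} {c : Fin D → MvPowerSeries τ R}
    (hc : IsPointed c) : nonePoly c ∈ orderIdeal someWeight 1 := by
  refine mem_orderIdeal_someWeight_one.2 fun j ↦ ?_
  rw [← constantCoeff_noneCoeff, noneCoeff_nonePoly]
  split_ifs
  exacts [hc _, map_zero _]

end DistinguishedVariable

section Substitution

variable {σ τ ι R : Type*} [CommRing R]

lemma renameSome_eq_subst (F : MvPowerSeries τ R) :
    renameSome F = subst (fun i ↦ X (some i) : τ → MvPowerSeries (Option τ) R) F :=
  rename_eq_subst ..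

lemma IsPointed.elim' {s : MvPowerSeries σ R} {f : ι → MvPowerSeries σ R}
    (hs : constantCoeff s = 0) (hf : IsPointed f) : IsPointed (Option.elim' s f) :=
  Option.forall.2 ⟨hs, hf⟩

lemma subst_elim'_renameSome [Finite ι] {s : MvPowerSeries σ R} {f : ι → MvPowerSeries σ R}
    (hs : constantCoeff s = 0) (hf : IsPointed f) (F : MvPowerSeries ι R) :
    subst (Option.elim' s f) (renameSome F) = subst f F := by
  have h := hf.elim' hs
  rw [renameSome_eq_subst, (isPointed_X _).subst_subst h]
  simp only [subst_X h.hasSubst, Option.elim'_some]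

/-- The substitution fixing the variable `none` and replacing the other variables by `p`. -/
noncomputable def extendNone (p : ι → MvPowerSeries τ R) : Option ι → MvPowerSeries (Option τ) R :=
  Option.elim' (X none) fun k ↦ renameSome (p k)

variable {p : ι → MvPowerSeries τ R}

lemma IsPointed.extendNone (hp : IsPointed p) : IsPointed (extendNone p) :=
  IsPointed.elim' (constantCoeff_X _) fun i ↦ (constantCoeff_rename _ _).trans (hp i)

variable [Finite ι]

lemma subst_extendNone_X_none (hp : IsPointed p) :
    subst (extendNone p) (X none : MvPowerSeries (Option ι) R) = X none :=
  subst_X hp.extendNone.hasSubst _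

variable [Finite τ]

lemma subst_extendNone_renameSome (hp : IsPointed p) (F : MvPowerSeries ι R) :
    subst (extendNone p) (renameSome F) = renameSome (subst p F) := by
  have hp' : IsPointed fun i ↦ renameSome (p i) := fun i ↦ hp.extendNone (some i)
  rw [extendNone, subst_elim'_renameSome (constantCoeff_X _) hp',
    renameSome_eq_subst (subst p F), hp.subst_subst (isPointed_X _)]
  simp only [renameSome_eq_subst]

lemma subst_extendNone_nonePoly (hp : IsPointed p) {D : ℕ} (c : Fin D → MvPowerSeries ι R) :
    subst (extendNone p) (nonePoly c) = nonePoly fun j ↦ subst p (c j) := by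
  have hs := hp.extendNone.hasSubst
  simp only [nonePoly, subst_sum hs, subst_mul hs, subst_pow hs, subst_extendNone_X_none hp,
    subst_extendNone_renameSome hp]

lemma noneCoeff_subst_extendNone (hp : IsPointed p) (F : MvPowerSeries (Option ι) R) (j : ℕ) :
    noneCoeff j (subst (extendNone p) F) = subst p (noneCoeff j F) := by
  have hs := hp.extendNone.hasSubst
  have htail : noneCoeff j (X none ^ (j + 1) *
      subst (extendNone p) (divMonomial (single none (j + 1)) F)) = 0 := by
    ext e
    rw [coeff_noneCoeff]
    exact X_pow_dvd_iff.1 (Dvd.intro _ rfl) _ (by rw [optionElim_apply_none]; lia)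
  conv_lhs => rw [eq_nonePoly_add_X_pow_mul (j + 1) F]
  rw [subst_add hs, subst_extendNone_nonePoly hp, subst_mul hs, subst_pow hs,
    subst_extendNone_X_none hp, map_add, htail, add_zero, noneCoeff_nonePoly,
    dif_pos j.lt_succ_self]

lemma subst_extendNone_mem_noneDegreeLT (hp : IsPointed p) {D : ℕ}
    {F : MvPowerSeries (Option ι) R} (hF : F ∈ noneDegreeLT D) :
    subst (extendNone p) F ∈ noneDegreeLT D := by
  refine mem_noneDegreeLT_iff_noneCoeff.2 fun j hj ↦ ?_
  rw [noneCoeff_subst_extendNone hp, mem_noneDegreeLT_iff_noneCoeff.1 hF j hj,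
    subst_zero hp.hasSubst]

lemma subst_extendNone_mem_orderIdeal (hp : IsPointed p) {F : MvPowerSeries (Option ι) R} :
    subst (extendNone p) F ∈ orderIdeal someWeight 1 ↔ F ∈ orderIdeal someWeight 1 := by
  simp only [mem_orderIdeal_someWeight_one, ← constantCoeff_noneCoeff,
    noneCoeff_subst_extendNone hp, constantCoeff_subst_of_isPointed hp]

lemma noneCoeff_zero_eq_subst (F : MvPowerSeries (Option ι) R) :
    noneCoeff 0 F = subst (Option.elim' 0 X) F := by
  have hX : IsPointed (X : ι → MvPowerSeries ι R) := isPointed_X id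
  have hs := (hX.elim' (map_zero _)).hasSubst
  conv_rhs => rw [eq_nonePoly_add_X_pow_mul 1 F]
  rw [nonePoly, Fin.sum_univ_one, subst_add hs, subst_mul hs, subst_mul hs, subst_pow hs,
    subst_pow hs, subst_X hs, subst_elim'_renameSome (map_zero _) hX, subst_self]
  simp

end Substitution

section Convergence

variable {τ 𝕜 : Type*} [NormedField 𝕜]

lemma IsConvergent.divMonomial {F : MvPowerSeries (Option τ) 𝕜} (hF : IsConvergent F) (D : ℕ) :
    IsConvergent (divMonomial (single none D) F) := by
  obtain ⟨ρ, hρ, h⟩ := hF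
  exact ⟨ρ, hρ, (majorantNorm_divMonomial_le hρ.ne' F).trans_lt
    (ENNReal.mul_lt_top ENNReal.coe_lt_top h)⟩

variable [Finite τ]

lemma IsConvergent.renameSome {F : MvPowerSeries τ 𝕜} (hF : IsConvergent F) :
    IsConvergent (renameSome F) := by
  rw [renameSome_eq_subst]
  exact hF.subst (isPointed_X _) fun _ ↦ isConvergent_X _

lemma IsConvergent.nonePoly {D : ℕ} {c : Fin D → MvPowerSeries τ 𝕜}
    (hc : ∀ j, IsConvergent (c j)) : IsConvergent (nonePoly c) :=
  isConvergent_sum fun j _ ↦ ((isConvergent_X _).pow _).mul (hc j).renameSome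

lemma IsConvergent.noneCoeff {F : MvPowerSeries (Option τ) 𝕜} (hF : IsConvergent F) (j : ℕ) :
    IsConvergent (noneCoeff j F) := by
  rw [← add_zero j, add_comm, ← noneCoeff_divMonomial, noneCoeff_zero_eq_subst]
  exact (hF.divMonomial j).subst ((isPointed_X _).elim' (map_zero _))
    (Option.forall.2 ⟨isConvergent_zero, isConvergent_X⟩)

end Convergence

section WeierstrassPreparation

variable {τ K : Type*} [Field K]

lemma exists_eq_mul_X_pow_add {d : ℕ} {G : MvPowerSeries (Option τ) K}
    (h0 : ∀ k < d, coeff (single none k) G = 0) (hd : coeff (single none d) G ≠ 0) :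
    ∃ E V, constantCoeff E ≠ 0 ∧ V ∈ orderIdeal someWeight 1 ∧ G = E * (X none ^ d + V) := by
  let E := divMonomial (single none d) G
  let L := nonePoly fun j : Fin d ↦ noneCoeff j G
  have hE : constantCoeff E ≠ 0 := by
    rwa [← coeff_zero_eq_constantCoeff_apply, coeff_divMonomial, zero_add]
  have hL : L ∈ orderIdeal someWeight 1 := IsPointed.nonePoly_mem_orderIdeal fun j ↦ by
    rw [constantCoeff_noneCoeff, h0 j j.2]
  refine ⟨E, L * E⁻¹, hE, Ideal.mul_mem_right _ _ hL, ?_⟩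
  linear_combination eq_nonePoly_add_X_pow_mul d G - L * MvPowerSeries.mul_inv_cancel _ hE

lemma constantCoeff_eq_one_and_coeff_eq_zero_of_division {R : Type*} [CommRing R] {d : ℕ}
    {V Q S : MvPowerSeries (Option τ) R}
    (hV : V ∈ orderIdeal someWeight 1) (h : X none ^ d = (X none ^ d + V) * Q + S)
    (hS : S ∈ noneDegreeLT d) :
    constantCoeff Q = 1 ∧ ∀ k, coeff (single none k) S = 0 := by
  have hVQ : X none ^ d * (1 - Q) - S ∈ orderIdeal someWeight 1 := by
    convert Ideal.mul_mem_right Q _ hV using 1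
    linear_combination h
  have hcoeff k : coeff (single none k) (X none ^ d * (1 - Q)) = coeff (single none k) S :=
    sub_eq_zero.1 ((map_sub _ _ _).symm.trans (mem_orderIdeal_someWeight_one.1 hVQ k))
  have hhigh k (hk : d ≤ k) : coeff (single none k) S = 0 :=
    mem_noneDegreeLT.1 hS _ (by simpa using hk)
  refine ⟨?_, fun k ↦ ?_⟩
  · have := coeff_divMonomial (single none d) 0 (X none ^ d * (1 - Q))
    rw [zero_add, hcoeff, hhigh d le_rfl, divMonomial_X_pow_mul, coeff_zero_eq_constantCoeff_apply,
      map_sub, map_one, sub_eq_zero] at this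
    exact this.symm
  · rcases le_or_gt d k with hk | hk
    · exact hhigh k hk
    · rw [← hcoeff]
      exact X_pow_dvd_iff.1 (Dvd.intro _ rfl) _ (by simpa using hk)

theorem exists_weierstrass_preparation {d : ℕ} {G : MvPowerSeries (Option τ) K}
    (h0 : ∀ k < d, coeff (single none k) G = 0) (hd : coeff (single none d) G ≠ 0) :
    ∃ (a : Fin d → MvPowerSeries τ K) (E : MvPowerSeries (Option τ) K),
      IsPointed a ∧ constantCoeff E ≠ 0 ∧ G = E * (X none ^ d + nonePoly a) := by
  obtain ⟨E, V, hE, hV, rfl⟩ := exists_eq_mul_X_pow_add h0 hd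
  obtain ⟨Q, S, hQ, hS⟩ := exists_weierstrass_division (D := d) hV (X none ^ d)
  obtain ⟨hQ1, hS0⟩ := constantCoeff_eq_one_and_coeff_eq_zero_of_division hV hQ hS
  have hQinv : Q * Q⁻¹ = 1 := MvPowerSeries.mul_inv_cancel _ (hQ1 ▸ one_ne_zero)
  have hQinv1 : constantCoeff Q⁻¹ = 1 := by rw [constantCoeff_inv, hQ1, inv_one]
  refine ⟨fun j ↦ noneCoeff j (-S), E * Q⁻¹, fun j ↦ ?_, ?_, ?_⟩
  · rw [constantCoeff_noneCoeff, map_neg, hS0, neg_zero]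
  · rwa [map_mul, hQinv1, mul_one]
  · rw [← eq_nonePoly_of_mem_noneDegreeLT (neg_mem hS)]
    linear_combination (-(E * (X none ^ d + V))) * hQinv - (E * Q⁻¹) * hQ

end WeierstrassPreparation

section Calculus

variable {σ ι R : Type*} [CommRing R]

lemma pderiv_mem_orderIdeal {w : σ → ℕ} {i : σ} {k : ℕ} {F : MvPowerSeries σ R}
    (hF : F ∈ orderIdeal w (k + w i)) : pderiv R i F ∈ orderIdeal w k := by
  refine mem_orderIdeal.2 fun e he ↦ ?_
  rw [coeff_pderiv, mem_orderIdeal.1 hF, zero_mul]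
  rw [map_add, weight_single, smul_eq_mul, one_mul]
  lia

lemma sub_truncTotal_mem_degreeIdeal [Finite σ] (F : MvPowerSeries σ R) (k : ℕ) :
    F - (truncTotal k F : MvPolynomial σ R) ∈ degreeIdeal k := by
  refine mem_orderIdeal.2 fun e he ↦ ?_
  rw [map_sub, MvPolynomial.coeff_coe, coeff_truncTotal _ (by rwa [degree_eq_weight_one]), sub_self]

variable [Fintype ι]

lemma pderiv_subst_coe {a : ι → MvPowerSeries σ R} (ha : HasSubst a) (p : MvPolynomial ι R)
    (i : σ) : pderiv R i (subst a (p : MvPowerSeries ι R)) =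
      ∑ j, pderiv R i (a j) * subst a (pderiv R j (p : MvPowerSeries ι R)) := by
  classical
  induction p using MvPolynomial.induction_on with
  | C r => simp [subst_C, subst_zero ha]
  | add p q hp hq =>
    simp only [MvPolynomial.coe_add, subst_add ha, map_add, hp, hq, mul_add,
      Finset.sum_add_distrib]
  | mul_X p k hp =>
    have hterm j : pderiv R i (a j) * subst a (pderiv R j ((p : MvPowerSeries ι R) * X k)) =
        (if j = k then pderiv R i (a j) * subst a (p : MvPowerSeries ι R) else 0) +
          a k * (pderiv R i (a j) * subst a (pderiv R j (p : MvPowerSeries ι R))) := by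
      rw [Derivation.leibniz, subst_add ha, smul_eq_mul, smul_eq_mul, subst_mul ha, subst_mul ha,
        subst_X ha]
      split_ifs with h
      · rw [h, pderiv_X_self, ← map_one C, subst_C, map_one]
        ring
      · rw [pderiv_X_of_ne (Ne.symm h), subst_zero ha]
        ring
    rw [MvPolynomial.coe_mul, subst_mul ha, MvPolynomial.coe_X, subst_X ha, Derivation.leibniz, hp]
    simp only [hterm, Finset.sum_add_distrib, smul_eq_mul, ← Finset.mul_sum]
    simp [mul_comm]

theorem pderiv_subst {a : ι → MvPowerSeries σ R} (ha : IsPointed a) (F : MvPowerSeries ι R)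
    (i : σ) : pderiv R i (subst a F) = ∑ j, pderiv R i (a j) * subst a (pderiv R j F) := by
  have hs := ha.hasSubst
  rw [← sub_eq_zero]
  refine eq_zero_of_forall_mem_orderIdeal (w := fun _ ↦ 1) fun k ↦ ?_
  let p := truncTotal (k + 1) F
  let G := F - (p : MvPowerSeries ι R)
  have hG : G ∈ degreeIdeal (k + 1) := sub_truncTotal_mem_degreeIdeal F (k + 1)
  rw [show F = p + G from (add_sub_cancel _ _).symm]
  simp only [map_add, subst_add hs, mul_add, Finset.sum_add_distrib, pderiv_subst_coe hs]
  rw [add_sub_add_left_eq_sub]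
  exact sub_mem (pderiv_mem_orderIdeal (subst_mem_degreeIdeal ha hG)) <|
    Ideal.sum_mem _ fun j _ ↦ Ideal.mul_mem_left _ _ <|
      subst_mem_degreeIdeal ha (pderiv_mem_orderIdeal hG)

end Calculus

section Taylor

variable {σ ι R : Type*} [CommRing R]

lemma noneCoeff_one_eq_noneCoeff_zero_pderiv (F : MvPowerSeries (Option ι) R) :
    noneCoeff 1 F = noneCoeff 0 (pderiv R none F) := by
  classical
  ext e
  rw [coeff_noneCoeff, coeff_noneCoeff, coeff_pderiv, optionElim_apply_none, Nat.cast_zero,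
    zero_add, mul_one, ← optionElim_zero, ← optionElim_add, add_zero, zero_add]

variable (ι R) in
/-- The generic point `x + t v`, where `t` is the variable `none`, the coordinates of `x` are the
left variables and those of `v` are the right variables. -/
noncomputable def genericLine (k : ι) : MvPowerSeries (Option (ι ⊕ ι)) R :=
  X (some (Sum.inl k)) + X none * X (some (Sum.inr k))

/-- The remainder `H (t, x, v)` in `F (x + t v) = F x + t F' x v + t ^ 2 H (t, x, v)`. -/
noncomputable def taylorRemainder (F : MvPowerSeries ι R) : MvPowerSeries (Option (ι ⊕ ι)) R :=
  divMonomial (single none 2) (subst (genericLine ι R) F)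

lemma isPointed_genericLine : IsPointed (genericLine ι R) := fun k ↦ by simp [genericLine]

lemma subst_genericLine_apply [Finite ι] {s : MvPowerSeries σ R} {a v : ι → MvPowerSeries σ R}
    (hs : constantCoeff s = 0) (ha : IsPointed a) (hv : IsPointed v) (k : ι) :
    subst (Option.elim' s (Sum.elim a v)) (genericLine ι R k) = a k + s * v k := by
  have h := ((ha.sumElim hv).elim' hs).hasSubst
  simp only [genericLine, subst_add h, subst_mul h, subst_X h, Option.elim'_none,
    Option.elim'_some, Sum.elim_inl, Sum.elim_inr]

lemma subst_subst_genericLine [Finite ι] {s : MvPowerSeries σ R} {a v : ι → MvPowerSeries σ R}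
    (hs : constantCoeff s = 0) (ha : IsPointed a) (hv : IsPointed v) (F : MvPowerSeries ι R) :
    subst (Option.elim' s (Sum.elim a v)) (subst (genericLine ι R) F) =
      subst (fun k ↦ a k + s * v k) F := by
  rw [isPointed_genericLine.subst_subst ((ha.sumElim hv).elim' hs)]
  simp only [subst_genericLine_apply hs ha hv]

lemma noneCoeff_zero_subst_genericLine [Finite ι] (F : MvPowerSeries ι R) :
    noneCoeff 0 (subst (genericLine ι R) F) =
      subst (fun k ↦ X (Sum.inl k) : ι → MvPowerSeries (ι ⊕ ι) R) F := by
  have h := subst_subst_genericLine (map_zero constantCoeff) (isPointed_X (R := R) Sum.inl)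
    (isPointed_X (R := R) (Sum.inr : ι → ι ⊕ ι)) F
  have hX : Sum.elim (fun i ↦ X (Sum.inl i)) (fun i ↦ X (Sum.inr i)) =
      (X : ι ⊕ ι → MvPowerSeries (ι ⊕ ι) R) := Sum.elim_comp_inl_inr X
  simpa only [noneCoeff_zero_eq_subst, hX, zero_mul, add_zero] using h

lemma IsConvergent.taylorRemainder {𝕜 : Type*} [NormedField 𝕜] [Finite ι] {F : MvPowerSeries ι 𝕜}
    (hF : IsConvergent F) : IsConvergent (taylorRemainder F) :=
  (hF.subst isPointed_genericLine fun _ ↦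
    (isConvergent_X _).add ((isConvergent_X _).mul (isConvergent_X _))).divMonomial 2

variable [Fintype ι]

lemma noneCoeff_one_subst_genericLine (F : MvPowerSeries ι R) :
    noneCoeff 1 (subst (genericLine ι R) F) =
      ∑ k, X (Sum.inr k) *
        subst (fun k ↦ X (Sum.inl k) : ι → MvPowerSeries (ι ⊕ ι) R) (pderiv R k F) := by
  have hX : IsPointed (X : ι ⊕ ι → MvPowerSeries (ι ⊕ ι) R) := isPointed_X id
  have hs := (hX.elim' (map_zero _)).hasSubst
  have hderiv k : pderiv R none (genericLine ι R k) = X (some (Sum.inr k)) := by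
    rw [genericLine, map_add, Derivation.leibniz, pderiv_X_of_ne (by simp),
      pderiv_X_of_ne (by simp), pderiv_X_self, smul_zero, zero_add, zero_add, smul_eq_mul, mul_one]
  rw [noneCoeff_one_eq_noneCoeff_zero_pderiv, pderiv_subst isPointed_genericLine, map_sum]
  refine Finset.sum_congr rfl fun k _ ↦ ?_
  rw [hderiv, ← noneCoeff_zero_subst_genericLine, noneCoeff_zero_eq_subst, noneCoeff_zero_eq_subst,
    subst_mul hs, subst_X hs, Option.elim'_some]

theorem subst_add_mul_eq_taylor {s : MvPowerSeries σ R} {a v : ι → MvPowerSeries σ R}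
    (hs : constantCoeff s = 0) (ha : IsPointed a) (hv : IsPointed v) (F : MvPowerSeries ι R) :
    subst (fun k ↦ a k + s * v k) F =
      subst a F + s * ∑ k, v k * subst a (pderiv R k F) +
        s ^ 2 * subst (Option.elim' s (Sum.elim a v)) (taylorRemainder F) := by
  have hav := ha.sumElim hv
  have hS := (hav.elim' hs).hasSubst
  have hbase (G : MvPowerSeries ι R) : subst (Sum.elim a v)
      (subst (fun k ↦ X (Sum.inl k) : ι → MvPowerSeries (ι ⊕ ι) R) G) = subst a G := by
    rw [(isPointed_X _).subst_subst hav]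
    simp only [subst_X hav.hasSubst, Sum.elim_inl]
  rw [← subst_subst_genericLine hs ha hv]
  conv_lhs => rw [eq_nonePoly_add_X_pow_mul 2 (subst (genericLine ι R) F)]
  simp only [nonePoly, Fin.sum_univ_two, Fin.val_zero, Fin.val_one, pow_zero, pow_one, one_mul,
    noneCoeff_zero_subst_genericLine, noneCoeff_one_subst_genericLine, subst_add hS, subst_mul hS,
    subst_pow hS, subst_X hS, Option.elim'_none, subst_elim'_renameSome hs hav, hbase,
    subst_sum hav.hasSubst, subst_mul hav.hasSubst, subst_X hav.hasSubst, Sum.elim_inr,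
    taylorRemainder]

end Taylor

section Shear

variable {σ K : Type*} [Field K]

/-- The linear change of coordinates sending the direction `none` to the vector `μ`. -/
noncomputable def shear (μ : Option σ → K) : Option σ → MvPowerSeries (Option σ) K :=
  Option.elim' (C (μ none) * X none) fun i ↦ X (some i) + C (μ (some i)) * X none

lemma isPointed_shear (μ : Option σ → K) : IsPointed (shear μ) :=
  Option.forall.2 ⟨by simp [shear], fun i ↦ by simp [shear]⟩

lemma isConvergent_shear {𝕜 : Type*} [NormedField 𝕜] (μ : Option σ → 𝕜) (o : Option σ) :
    IsConvergent (shear μ o) := by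
  cases o with
  | none => exact (isConvergent_C _).mul (isConvergent_X _)
  | some i => exact (isConvergent_X _).add ((isConvergent_C _).mul (isConvergent_X _))

variable [Finite σ]

lemma exists_subst_shear_eq_X {μ : Option σ → K} (h : μ none ≠ 0) :
    ∃ ν : Option σ → K, ∀ o, subst (shear ν) (shear μ o) = X o := by
  let ν : Option σ → K := Option.elim' (μ none)⁻¹ fun i ↦ -μ (some i) * (μ none)⁻¹
  have hs := (isPointed_shear ν).hasSubst
  have hC : (C (μ none) : MvPowerSeries (Option σ) K) * C (μ none)⁻¹ = 1 := by
    rw [← map_mul, mul_inv_cancel₀ h, map_one]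
  refine ⟨ν, Option.forall.2 ⟨?_, fun i ↦ ?_⟩⟩
  · simp only [shear, ν, Option.elim'_none] at hs ⊢
    rw [subst_mul hs, subst_C, subst_X hs, Option.elim'_none, ← mul_assoc, hC, one_mul]
  · simp only [shear, ν, Option.elim'_none, Option.elim'_some] at hs ⊢
    rw [subst_add hs, subst_mul hs, subst_C, subst_X hs, subst_X hs, Option.elim'_none,
      Option.elim'_some, map_mul, map_neg]
    ring

lemma subst_C_mul_X_of_isHomogeneous {ι τ R : Type*} [CommRing R] [Finite ι] {k : ℕ}
    {Q : MvPolynomial ι R} (hQ : Q.IsHomogeneous k) (μ : ι → R) (j : τ) :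
    subst (fun i ↦ C (μ i) * X j : ι → MvPowerSeries τ R) (Q : MvPowerSeries ι R) =
      C (MvPolynomial.eval μ Q) * X j ^ k := by
  cases nonempty_fintype ι
  rw [subst_coe, MvPolynomial.aeval_def, MvPolynomial.eval₂_eq', MvPolynomial.eval_eq', map_sum,
    Finset.sum_mul]
  refine Finset.sum_congr rfl fun d hd ↦ ?_
  have hdeg : ∑ i, d i = k := by
    rw [← degree_eq_sum]
    exact (degree_eq_weight_one (R := ℕ) ▸ hQ (MvPolynomial.mem_support_iff.1 hd) :)
  simp only [mul_pow, Finset.prod_mul_distrib, Finset.prod_pow_eq_pow_sum, hdeg, map_mul, map_prod,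
    map_pow, mul_assoc]
  rfl

lemma isHomogeneous_truncTotal_succ {ι R : Type*} [CommRing R] [Finite ι] {k : ℕ}
    {G : MvPowerSeries ι R} (hG : G ∈ degreeIdeal k) :
    (truncTotal (k + 1) G).IsHomogeneous k := by
  intro d hd
  suffices h : degree d = k from (degree_eq_weight_one (R := ℕ) ▸ h :)
  by_contra hne
  refine hd ?_
  rcases lt_or_gt_of_ne hne with h | h
  · rw [coeff_truncTotal _ (h.trans k.lt_succ_self)]
    exact mem_orderIdeal.1 hG d (by rwa [← degree_eq_weight_one (R := ℕ)])
  · exact coeff_truncTotal_eq_zero _ h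

lemma coeff_single_none_subst_shear {k : ℕ} {G : MvPowerSeries (Option σ) K}
    (hG : G ∈ degreeIdeal k) (μ : Option σ → K) :
    coeff (single none k) (subst (shear μ) G) = MvPolynomial.eval μ (truncTotal (k + 1) G) := by
  cases nonempty_fintype σ
  let Q := truncTotal (k + 1) G
  have hL := isPointed_shear μ
  have hscale : IsPointed fun o ↦ (C (μ o) * X none : MvPowerSeries (Option σ) K) :=
    fun o ↦ by simp
  have htrunc : coeff (single none k) (subst (shear μ) G) =
      coeff (single none k) (subst (shear μ) (Q : MvPowerSeries (Option σ) K)) := by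
    rw [← sub_eq_zero, ← map_sub, ← subst_sub hL.hasSubst]
    exact mem_orderIdeal.1 (subst_mem_degreeIdeal hL (sub_truncTotal_mem_degreeIdeal G (k + 1))) _
      (by simp [weight_single])
  have hdiff : subst (shear μ) (Q : MvPowerSeries (Option σ) K) -
      subst (fun o ↦ C (μ o) * X none) (Q : MvPowerSeries (Option σ) K) ∈
        orderIdeal someWeight 1 := by
    refine subst_sub_subst_mem_orderIdeal hL.hasSubst hscale.hasSubst ?_ _
    refine Option.forall.2 ⟨by simp [shear], fun i ↦ ?_⟩
    rw [shear, Option.elim'_some, add_sub_cancel_right]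
    exact X_mem_orderIdeal someWeight (some i)
  rw [htrunc, sub_eq_zero.1 ((map_sub _ _ _).symm.trans (mem_orderIdeal_someWeight_one.1 hdiff k)),
    subst_C_mul_X_of_isHomogeneous (isHomogeneous_truncTotal_succ hG), X_pow_eq, coeff_C_mul,
    coeff_monomial_same, mul_one]

lemma exists_shear_regular [Infinite K] {G : MvPowerSeries (Option σ) K} (hG : G ≠ 0) :
    ∃ (μ : Option σ → K) (d : ℕ), μ none ≠ 0 ∧
      (∀ k < d, coeff (single none k) (subst (shear μ) G) = 0) ∧
      coeff (single none d) (subst (shear μ) G) ≠ 0 := by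
  obtain ⟨d, hd, hdG⟩ := exists_coeff_ne_zero_and_order (ne_zero_iff_order_finite.1 hG)
  have hGk : G ∈ degreeIdeal d.degree := hdG.le
  have hQ : truncTotal (d.degree + 1) G ≠ 0 := fun h ↦ hd <| by
    rw [← coeff_truncTotal G d.degree.lt_succ_self, h, MvPolynomial.coeff_zero]
  obtain ⟨μ, hμ⟩ : ∃ μ : Option σ → K,
      MvPolynomial.eval μ (truncTotal (d.degree + 1) G * MvPolynomial.X none) ≠ 0 := by
    by_contra! h
    exact mul_ne_zero hQ (MvPolynomial.X_ne_zero _) (MvPolynomial.funext (by simpa using h))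
  rw [map_mul, MvPolynomial.eval_X] at hμ
  refine ⟨μ, d.degree, right_ne_zero_of_mul hμ, fun k hk ↦ ?_, ?_⟩
  · exact mem_orderIdeal.1 (subst_mem_degreeIdeal (isPointed_shear μ) hGk) _
      (by simpa [weight_single] using hk)
  · rw [coeff_single_none_subst_shear hGk]
    exact left_ne_zero_of_mul hμ

end Shear

section ImplicitEquation

variable {σ τ n : Type*}

lemma X_sub_C_mul_mem_orderIdeal {K : Type*} [Field K] {u : K} (hu : u ≠ 0)
    {B : MvPowerSeries (τ ⊕ n) K} {i : n}
    (hB : B - C u * X (Sum.inr i) ∈ orderIdeal leftWeight 1) :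
    X (Sum.inr i) - C u⁻¹ * B ∈ orderIdeal leftWeight 1 := by
  have hCu : (C u⁻¹ : MvPowerSeries (τ ⊕ n) K) * C u = 1 := by
    rw [← map_mul, inv_mul_cancel₀ hu, map_one]
  have h : X (Sum.inr i) - C u⁻¹ * B = -(C u⁻¹ * (B - C u * X (Sum.inr i))) := by
    linear_combination -X (Sum.inr i) * hCu
  exact h ▸ neg_mem (Ideal.mul_mem_left _ _ hB)

variable [Finite τ] [Finite n]

lemma subst_sumElim_X_sub_C_mul {K : Type*} [Field K] {u : K} {B : MvPowerSeries (τ ⊕ n) K}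
    {p : τ → MvPowerSeries σ K} {z : n → MvPowerSeries σ K} (hp : IsPointed p) (hz : IsPointed z)
    (i : n) : subst (Sum.elim p z) (X (Sum.inr i) - C u⁻¹ * B) =
      z i - C u⁻¹ * subst (Sum.elim p z) B := by
  have hs := (hp.sumElim hz).hasSubst
  rw [subst_sub hs, subst_mul hs, subst_C, subst_X hs, Sum.elim_inr]

lemma eq_of_subst_sumElim_eq_zero {K : Type*} [Field K] {u : K} (hu : u ≠ 0)
    {B : n → MvPowerSeries (τ ⊕ n) K}
    (hB : ∀ i, B i - C u * X (Sum.inr i) ∈ orderIdeal leftWeight 1)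
    {p : τ → MvPowerSeries σ K} (hp : IsPointed p) {z z' : n → MvPowerSeries σ K}
    (hz : IsPointed z) (hz' : IsPointed z') (h : ∀ i, subst (Sum.elim p z) (B i) = 0)
    (h' : ∀ i, subst (Sum.elim p z') (B i) = 0) : z = z' :=
  eq_of_eq_subst_sumElim (fun i ↦ X_sub_C_mul_mem_orderIdeal hu (hB i)) hp hz hz'
    (fun i ↦ by rw [subst_sumElim_X_sub_C_mul hp hz, h, mul_zero, sub_zero])
    (fun i ↦ by rw [subst_sumElim_X_sub_C_mul hp hz', h', mul_zero, sub_zero])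

lemma exists_isConvergent_subst_sumElim_eq_zero {𝕜 : Type*} [NormedField 𝕜] {u : 𝕜} (hu : u ≠ 0)
    {B : n → MvPowerSeries (τ ⊕ n) 𝕜} (hBc : ∀ i, IsConvergent (B i))
    (hB : ∀ i, B i - C u * X (Sum.inr i) ∈ orderIdeal leftWeight 1) :
    ∃ z : n → MvPowerSeries τ 𝕜, (∀ i, IsConvergent (z i)) ∧ IsPointed z ∧
      ∀ i, subst (Sum.elim X z) (B i) = 0 := by
  obtain ⟨z, hzc, hz, h⟩ := exists_isConvergent_eq_subst_sumElim
    (fun i ↦ X_sub_C_mul_mem_orderIdeal hu (hB i))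
    (fun i ↦ (isConvergent_X _).sub ((isConvergent_C u⁻¹).mul (hBc i)))
  refine ⟨z, hzc, hz, fun i ↦ ?_⟩
  have hX : IsPointed (X : τ → MvPowerSeries τ 𝕜) := isPointed_X id
  have hi := h i
  rw [subst_sumElim_X_sub_C_mul hX hz, eq_comm, sub_eq_self] at hi
  have hC : (C u⁻¹ : MvPowerSeries τ 𝕜) ≠ 0 := by
    simpa only [ne_eq, map_eq_zero_iff _ C_injective] using inv_ne_zero hu
  exact (mul_eq_zero.1 hi).resolve_left hC

end ImplicitEquation

section LeftVariables

variable {σ τ κ R : Type*} [CommRing R]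

variable (τ κ R) in
/-- The variables of `τ` inside the power series ring in the variables `τ ⊕ κ`; substituting them
regards a power series in `τ` as one in `τ ⊕ κ`. -/
noncomputable def leftVars : τ → MvPowerSeries (τ ⊕ κ) R := fun o ↦ X (Sum.inl o)

lemma isPointed_leftVars : IsPointed (leftVars τ κ R) := isPointed_X Sum.inl

variable [Finite τ]

lemma subst_sumElim_subst_leftVars [Finite κ] {p : τ → MvPowerSeries σ R}
    {w : κ → MvPowerSeries σ R} (hp : IsPointed p) (hw : IsPointed w) (F : MvPowerSeries τ R) :
    subst (Sum.elim p w) (subst (leftVars τ κ R) F) = subst p F := by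
  have hs := (hp.sumElim hw).hasSubst
  rw [isPointed_leftVars.subst_subst (hp.sumElim hw)]
  simp only [leftVars, subst_X hs, Sum.elim_inl]

lemma subst_sumElim_X_subst_leftVars [Finite κ] {w : κ → MvPowerSeries τ R} (hw : IsPointed w)
    (F : MvPowerSeries τ R) : subst (Sum.elim X w) (subst (leftVars τ κ R) F) = F := by
  have hX : IsPointed (X : τ → MvPowerSeries τ R) := isPointed_X id
  rw [subst_sumElim_subst_leftVars hX hw, subst_self, id]

lemma subst_leftVars_ne_zero [Finite κ] {F : MvPowerSeries τ R} (hF : F ≠ 0) :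
    subst (leftVars τ κ R) F ≠ 0 := fun h ↦ hF <| by
  have hX : IsPointed (X : τ → MvPowerSeries τ R) := isPointed_X id
  rw [← subst_sumElim_X_subst_leftVars (isPointed_zero (ι := κ)) F, h,
    subst_zero (hX.sumElim isPointed_zero).hasSubst]

lemma pderiv_inr_subst_leftVars (F : MvPowerSeries τ R) (j : κ) :
    pderiv R (Sum.inr j) (subst (leftVars τ κ R) F) = 0 := by
  classical
  cases nonempty_fintype τ
  rw [pderiv_subst isPointed_leftVars]
  exact Finset.sum_eq_zero fun k _ ↦ by simp [leftVars]

lemma subst_sub_C_mem_orderIdeal {w : σ → ℕ} {a : τ → MvPowerSeries σ R} (ha : IsPointed a)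
    (haw : ∀ i, a i ∈ orderIdeal w 1) (F : MvPowerSeries τ R) :
    subst a F - C (constantCoeff F) ∈ orderIdeal w 1 := by
  have hF : F - C (constantCoeff F) ∈ degreeIdeal 1 := mem_degreeIdeal_one.2 (by simp)
  simpa only [subst_sub ha.hasSubst, subst_C] using
    subst_mem_orderIdeal ha.hasSubst haw hF

end LeftVariables

section Newton

variable {n ι σ τ R : Type*} [CommRing R]

/-- The square matrix of the partial derivatives of the series `F` in the variables `col`. -/
noncomputable def jacobian (col : n → ι) (F : n → MvPowerSeries ι R) :
    Matrix n n (MvPowerSeries ι R) :=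
  Matrix.of fun i j ↦ pderiv R (col j) (F i)

/-- The Jacobian minor of the series `F` in the variables `col`. -/
noncomputable def jacobianMinor [Fintype n] [DecidableEq n] (col : n → ι)
    (F : n → MvPowerSeries ι R) : MvPowerSeries ι R :=
  (jacobian col F).det

/-- The data of Tougeron's form of Newton's method for the equations `rel = 0` near the
approximate solution `base`. For exact data the relations take the value `t * A ^ 2 * Q` at `base`
and their Jacobian minor in the variables `col` the value `A * U`. -/
structure NewtonData (n ι σ R : Type*) [CommRing R] where
  rel : n → MvPowerSeries ι R
  col : n → ι
  base : ι → MvPowerSeries σ R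
  t : MvPowerSeries σ R
  A : MvPowerSeries σ R
  U : MvPowerSeries σ R
  Q : n → MvPowerSeries σ R

namespace NewtonData

/-- Substitution of `p` for the parameters of Newton data. -/
noncomputable def pullback (D : NewtonData n ι σ R) (p : σ → MvPowerSeries τ R) :
    NewtonData n ι τ R where
  rel := D.rel
  col := D.col
  base k := subst p (D.base k)
  t := subst p D.t
  A := subst p D.A
  U := subst p D.U
  Q i := subst p (D.Q i)

/-- The base point and the scale `t` vanish at the origin. -/
structure Pointed (D : NewtonData n ι σ R) : Prop where
  base : IsPointed D.base
  t : constantCoeff D.t = 0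

lemma Pointed.pullback [Finite σ] {D : NewtonData n ι σ R} (hD : D.Pointed)
    {p : σ → MvPowerSeries τ R} (hp : IsPointed p) : (D.pullback p).Pointed where
  base := hD.base.subst hp
  t := (constantCoeff_subst_of_isPointed hp _).trans hD.t

lemma pullback_pullback {S : Type*} [Finite σ] [Finite τ] (D : NewtonData n ι σ R)
    {p : σ → MvPowerSeries τ R} (hp : IsPointed p) {q : τ → MvPowerSeries S R} (hq : IsPointed q) :
    (D.pullback p).pullback q = D.pullback fun i ↦ subst q (p i) := by
  simp only [NewtonData.pullback, hp.subst_subst hq]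

/-- The failure of the relations at the base point to be `t * A ^ 2 * Q`. -/
noncomputable def relDefect (D : NewtonData n ι σ R) (i : n) : MvPowerSeries σ R :=
  subst D.base (D.rel i) - D.t * D.A ^ 2 * D.Q i

lemma Pointed.relDefect_pullback [Finite σ] [Finite ι] {D : NewtonData n ι σ R} (hD : D.Pointed)
    {p : σ → MvPowerSeries τ R} (hp : IsPointed p) (i : n) :
    (D.pullback p).relDefect i = subst p (D.relDefect i) := by
  have hs := hp.hasSubst
  simp only [relDefect, NewtonData.pullback, subst_sub hs, subst_mul hs, subst_pow hs,
    hD.base.subst_subst hp]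

lemma Pointed.map_subst_jacobian [Finite σ] [Finite ι] {D : NewtonData n ι σ R} (hD : D.Pointed)
    {p : σ → MvPowerSeries τ R} (hp : IsPointed p) :
    ((jacobian D.col D.rel).map (subst D.base)).map (subst p) =
      (jacobian D.col D.rel).map (subst (D.pullback p).base) :=
  Matrix.ext fun _ _ ↦ hD.base.subst_subst hp _

lemma Pointed.constantCoeff_mul {D : NewtonData n ι σ R} (hD : D.Pointed)
    (F : MvPowerSeries σ R) : constantCoeff (D.t * F) = 0 := by
  rw [map_mul, hD.t, zero_mul]

lemma Pointed.pderiv_subst_base [Finite ι] {D : NewtonData n ι σ R} (hD : D.Pointed) {o : σ}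
    (hbase : ∀ k, pderiv R o (D.base k) = 0) (F : MvPowerSeries ι R) :
    pderiv R o (subst D.base F) = 0 := by
  cases nonempty_fintype ι
  rw [pderiv_subst hD.base]
  exact Finset.sum_eq_zero fun k _ ↦ by rw [hbase, zero_mul]

variable [Fintype n] [DecidableEq n]

/-- The failure of the Jacobian minor at the base point to be `A * U`. -/
noncomputable def minorDefect (D : NewtonData n ι σ R) : MvPowerSeries σ R :=
  subst D.base (jacobianMinor D.col D.rel) - D.A * D.U

lemma Pointed.minorDefect_pullback [Finite σ] [Finite ι] {D : NewtonData n ι σ R}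
    (hD : D.Pointed) {p : σ → MvPowerSeries τ R} (hp : IsPointed p) :
    (D.pullback p).minorDefect = subst p D.minorDefect := by
  have hs := hp.hasSubst
  simp only [minorDefect, NewtonData.pullback, subst_sub hs, subst_mul hs, hD.base.subst_subst hp]

variable [DecidableEq ι]

/-- The direction `A w + adj(J) z` of the Newton correction, where `J` is the Jacobian matrix at
the base point, acting in the variables `col`. -/
noncomputable def direction (D : NewtonData n ι σ R) (w : ι → MvPowerSeries σ R)
    (z : n → MvPowerSeries σ R) (k : ι) : MvPowerSeries σ R :=
  D.A * w k + ∑ j with D.col j = k,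
    ∑ i, ((jacobian D.col D.rel).map (subst D.base)).adjugate j i * z i

/-- The corrected point `base + t A (A w + adj(J) z)`. -/
noncomputable def point (D : NewtonData n ι σ R) (w : ι → MvPowerSeries σ R)
    (z : n → MvPowerSeries σ R) (k : ι) : MvPowerSeries σ R :=
  D.base k + D.t * D.A * D.direction w z k

/-- The part of the relations at the corrected point that Newton's method has to annihilate; see
`NewtonData.subst_point_rel`. -/
noncomputable def remainder [Fintype ι] (D : NewtonData n ι σ R) (w : ι → MvPowerSeries σ R)
    (z : n → MvPowerSeries σ R) (i : n) : MvPowerSeries σ R :=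
  D.Q i + ∑ k, subst D.base (pderiv R k (D.rel i)) * w k + D.U * z i +
    D.t * subst (Option.elim' (D.t * D.A) (Sum.elim D.base (D.direction w z)))
      (taylorRemainder (D.rel i))

variable {D : NewtonData n ι σ R} {w : ι → MvPowerSeries σ R} {z : n → MvPowerSeries σ R}

lemma isPointed_direction (hw : IsPointed w) (hz : IsPointed z) : IsPointed (D.direction w z) :=
  fun k ↦ by simp [direction, hw k, show ∀ i, constantCoeff (z i) = 0 from hz]

lemma direction_zero (k : ι) : D.direction w (fun _ ↦ 0) k = D.A * w k := by
  simp [direction]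

lemma Pointed.isPointed_point (hD : D.Pointed) : IsPointed (D.point w z) := fun k ↦ by
  rw [point, mul_assoc, map_add, hD.constantCoeff_mul, hD.base k, add_zero]

lemma Pointed.constantCoeff_remainder [Fintype ι] (hD : D.Pointed) (hw : IsPointed w)
    (hz : IsPointed z) (i : n) : constantCoeff (D.remainder w z i) = constantCoeff (D.Q i) := by
  simp [remainder, hD.t, hz i, show ∀ k, constantCoeff (w k) = 0 from hw]

lemma remainder_sub_mul_mem [Fintype ι] {I : Ideal (MvPowerSeries σ R)} {i : n}
    {u : MvPowerSeries σ R} (hQ : D.Q i ∈ I) (hw : ∀ k, w k ∈ I) (hU : D.U - u ∈ I)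
    (ht : D.t ∈ I) : D.remainder w z i - u * z i ∈ I := by
  have hsum : ∑ k, subst D.base (pderiv R k (D.rel i)) * w k ∈ I :=
    sum_mem fun k _ ↦ I.mul_mem_left _ (hw k)
  have h := add_mem (add_mem (add_mem hQ hsum) (I.mul_mem_right (z i) hU))
    (I.mul_mem_right (subst (Option.elim' (D.t * D.A) (Sum.elim D.base (D.direction w z)))
      (taylorRemainder (D.rel i))) ht)
  rw [remainder]
  convert h using 1
  ring

section Pullback

variable [Finite σ] {p : σ → MvPowerSeries τ R}

lemma Pointed.subst_direction [Finite ι] (hD : D.Pointed) (hp : IsPointed p) (k : ι) :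
    subst p (D.direction w z k) =
      (D.pullback p).direction (fun k ↦ subst p (w k)) (fun i ↦ subst p (z i)) k := by
  have hs := hp.hasSubst
  simp only [direction, subst_add hs, subst_mul hs, subst_sum hs, subst_adjugate hs,
    hD.map_subst_jacobian hp]
  rfl

lemma Pointed.subst_point [Finite ι] (hD : D.Pointed) (hp : IsPointed p) (k : ι) :
    subst p (D.point w z k) =
      (D.pullback p).point (fun k ↦ subst p (w k)) (fun i ↦ subst p (z i)) k := by
  have hs := hp.hasSubst
  simp only [point, subst_add hs, subst_mul hs, hD.subst_direction hp]
  rfl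

lemma Pointed.subst_remainder [Fintype ι] (hD : D.Pointed) (hw : IsPointed w) (hz : IsPointed z)
    (hp : IsPointed p) (i : n) :
    subst p (D.remainder w z i) =
      (D.pullback p).remainder (fun k ↦ subst p (w k)) (fun i ↦ subst p (z i)) i := by
  have hs := hp.hasSubst
  have harg : (fun o ↦ subst p
      (Option.elim' (D.t * D.A) (Sum.elim D.base (D.direction w z)) o)) =
      Option.elim' ((D.pullback p).t * (D.pullback p).A) (Sum.elim (D.pullback p).base
        ((D.pullback p).direction (fun k ↦ subst p (w k)) fun i ↦ subst p (z i))) := by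
    funext o
    rcases o with _ | k | k
    · exact subst_mul hs _ _
    · rfl
    · exact hD.subst_direction hp k
  have hpt := (hD.base.sumElim (isPointed_direction (D := D) hw hz)).elim'
    (hD.constantCoeff_mul D.A)
  simp only [remainder, subst_add hs, subst_mul hs, subst_sum hs, hpt.subst_subst hp, harg,
    hD.base.subst_subst hp]
  rfl

end Pullback

section Expansion

lemma Pointed.exists_subst_point_jacobianMinor [Finite ι] (hD : D.Pointed)
    (hw : IsPointed w) (hz : IsPointed z) :
    ∃ G, subst (D.point w z) (jacobianMinor D.col D.rel) =
      D.A * (D.U + D.t * G) + D.minorDefect := by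
  cases nonempty_fintype ι
  have h := subst_add_mul_eq_taylor (hD.constantCoeff_mul D.A) hD.base
    (isPointed_direction (D := D) hw hz) (jacobianMinor D.col D.rel)
  refine ⟨(∑ k, D.direction w z k * subst D.base (pderiv R k (jacobianMinor D.col D.rel))) +
    D.t * D.A * subst (Option.elim' (D.t * D.A) (Sum.elim D.base (D.direction w z)))
      (taylorRemainder (jacobianMinor D.col D.rel)), h.trans ?_⟩
  rw [minorDefect]
  ring

variable [Fintype ι]

/-- Multiplying by the adjugate of the Jacobian matrix turns its action on the correction `z` into
multiplication by the minor. -/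
lemma Pointed.sum_direction_mul (hD : D.Pointed) (i : n) :
    ∑ k, D.direction w z k * subst D.base (pderiv R k (D.rel i)) =
      D.A * ∑ k, subst D.base (pderiv R k (D.rel i)) * w k +
        subst D.base (jacobianMinor D.col D.rel) * z i := by
  set J := (jacobian D.col D.rel).map (subst D.base)
  have hcol : ∑ k, (∑ j with D.col j = k, ∑ l, J.adjugate j l * z l) *
      subst D.base (pderiv R k (D.rel i)) = ∑ j, (J.adjugate.mulVec z) j * J i j := by
    rw [← Finset.sum_fiberwise Finset.univ D.col]
    refine Finset.sum_congr rfl fun k _ ↦ ?_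
    rw [Finset.sum_mul]
    refine Finset.sum_congr rfl fun j hj ↦ ?_
    rw [← (Finset.mem_filter.1 hj).2]
    rfl
  have hadj : ∑ j, (J.adjugate.mulVec z) j * J i j = J.det * z i := by
    have h := congrFun (Matrix.mulVec_mulVec z J J.adjugate) i
    rw [Matrix.mul_adjugate, Matrix.smul_mulVec, Matrix.one_mulVec] at h
    rw [← smul_eq_mul, ← Pi.smul_apply, ← h]
    exact Finset.sum_congr rfl fun j _ ↦ mul_comm _ _
  have hdet : J.det = subst D.base (jacobianMinor D.col D.rel) :=
    (subst_det hD.base.hasSubst _).symm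
  simp only [direction, add_mul, Finset.sum_add_distrib]
  rw [hcol, hadj, hdet, Finset.mul_sum]
  congr 1
  exact Finset.sum_congr rfl fun k _ ↦ by ring

theorem Pointed.subst_point_rel (hD : D.Pointed) (hw : IsPointed w) (hz : IsPointed z) (i : n) :
    subst (D.point w z) (D.rel i) =
      D.relDefect i + D.t * D.A * D.minorDefect * z i +
        D.t * D.A ^ 2 * D.remainder w z i := by
  have h := subst_add_mul_eq_taylor (hD.constantCoeff_mul D.A) hD.base
    (isPointed_direction (D := D) hw hz) (D.rel i)
  rw [hD.sum_direction_mul] at h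
  rw [relDefect, minorDefect, remainder]
  refine h.trans ?_
  ring

end Expansion

section Derivative

lemma Pointed.pderiv_direction [Finite ι] (hD : D.Pointed) {o : σ}
    (hbase : ∀ k, pderiv R o (D.base k) = 0) (hA : pderiv R o D.A = 0) (k : ι) :
    pderiv R o (D.direction w z k) =
      D.direction (fun k ↦ pderiv R o (w k)) (fun i ↦ pderiv R o (z i)) k := by
  have hadj (j i : n) :
      pderiv R o (((jacobian D.col D.rel).map (subst D.base)).adjugate j i) = 0 := by
    rw [← subst_adjugate hD.base.hasSubst]
    exact hD.pderiv_subst_base hbase _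
  simp only [direction, map_add, map_sum, Derivation.leibniz, smul_eq_mul, hadj, hA, mul_zero,
    add_zero]

lemma Pointed.pderiv_point [Finite ι] (hD : D.Pointed) {o : σ}
    (hbase : ∀ k, pderiv R o (D.base k) = 0) (ht : pderiv R o D.t = 0) (hA : pderiv R o D.A = 0)
    (k : ι) : pderiv R o (D.point w z k) =
      D.t * D.A * D.direction (fun k ↦ pderiv R o (w k)) (fun i ↦ pderiv R o (z i)) k := by
  simp only [point, map_add, Derivation.leibniz, smul_eq_mul, hD.pderiv_direction hbase hA,
    hbase, ht, hA, mul_zero, add_zero, zero_add]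

end Derivative

end NewtonData

end Newton

section NewtonConvergence

variable {n ι σ τ 𝕜 : Type*} [NormedField 𝕜]

lemma isConvergent_jacobian {F : n → MvPowerSeries ι 𝕜} (hF : ∀ i, IsConvergent (F i))
    (col : n → ι) (i j : n) : IsConvergent (jacobian col F i j) :=
  (hF i).pderiv (col j)

lemma isConvergent_jacobianMinor [Fintype n] [DecidableEq n] {F : n → MvPowerSeries ι 𝕜}
    (hF : ∀ i, IsConvergent (F i)) (col : n → ι) : IsConvergent (jacobianMinor col F) :=
  isConvergent_det (isConvergent_jacobian hF col)

lemma isConvergent_adjugate [Fintype n] [DecidableEq n] {M : Matrix n n (MvPowerSeries σ 𝕜)}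
    (h : ∀ i j, IsConvergent (M i j)) (i j : n) : IsConvergent (M.adjugate i j) := by
  rw [Matrix.adjugate_apply]
  refine isConvergent_det fun k l ↦ ?_
  by_cases hk : k = j
  · subst hk
    by_cases hl : l = i
    · simpa [hl] using isConvergent_one
    · simpa [hl] using isConvergent_zero
  · simpa [Matrix.updateRow_ne hk] using h k l

namespace NewtonData

/-- All the power series of the Newton data are convergent. -/
structure Convergent (D : NewtonData n ι σ 𝕜) : Prop where
  rel : ∀ i, IsConvergent (D.rel i)
  base : ∀ k, IsConvergent (D.base k)
  t : IsConvergent D.t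
  A : IsConvergent D.A
  U : IsConvergent D.U
  Q : ∀ i, IsConvergent (D.Q i)

variable {D : NewtonData n ι σ 𝕜}

lemma Convergent.pullback [Finite σ] (hD : D.Convergent) {p : σ → MvPowerSeries τ 𝕜}
    (hp : IsPointed p) (hpc : ∀ i, IsConvergent (p i)) : (D.pullback p).Convergent where
  rel := hD.rel
  base k := (hD.base k).subst hp hpc
  t := hD.t.subst hp hpc
  A := hD.A.subst hp hpc
  U := hD.U.subst hp hpc
  Q i := (hD.Q i).subst hp hpc

variable [Fintype n] [DecidableEq n] [DecidableEq ι] {w : ι → MvPowerSeries σ 𝕜}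
  {z : n → MvPowerSeries σ 𝕜}

lemma Convergent.isConvergent_direction [Finite ι] (hD : D.Convergent) (hD₀ : D.Pointed)
    (hw : ∀ k, IsConvergent (w k)) (hz : ∀ i, IsConvergent (z i)) (k : ι) :
    IsConvergent (D.direction w z k) :=
  (hD.A.mul (hw k)).add <| isConvergent_sum fun j _ ↦ isConvergent_sum fun i _ ↦
    (isConvergent_adjugate (fun i j ↦
      (isConvergent_jacobian hD.rel D.col i j).subst hD₀.base hD.base) j i).mul (hz i)

lemma Convergent.isConvergent_point [Finite ι] (hD : D.Convergent) (hD₀ : D.Pointed)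
    (hw : ∀ k, IsConvergent (w k)) (hz : ∀ i, IsConvergent (z i)) (k : ι) :
    IsConvergent (D.point w z k) :=
  (hD.base k).add ((hD.t.mul hD.A).mul (hD.isConvergent_direction hD₀ hw hz k))

variable [Fintype ι]

lemma Convergent.isConvergent_remainder (hD : D.Convergent) (hD₀ : D.Pointed) (hw : IsPointed w)
    (hz : IsPointed z) (hwc : ∀ k, IsConvergent (w k)) (hzc : ∀ i, IsConvergent (z i)) (i : n) :
    IsConvergent (D.remainder w z i) := by
  have harg := (hD₀.base.sumElim (isPointed_direction (D := D) hw hz)).elim'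
    (hD₀.constantCoeff_mul D.A)
  have hargc : ∀ o, IsConvergent
      (Option.elim' (D.t * D.A) (Sum.elim D.base (D.direction w z)) o) := by
    rintro (_ | k | k)
    exacts [hD.t.mul hD.A, hD.base k, hD.isConvergent_direction hD₀ hwc hzc k]
  refine (((hD.Q i).add ?_).add (hD.U.mul (hzc i))).add
    (hD.t.mul ((hD.rel i).taylorRemainder.subst harg hargc))
  exact isConvergent_sum fun k _ ↦ (((hD.rel i).pderiv k).subst hD₀.base hD.base).mul (hwc k)

end NewtonData

end NewtonConvergence

section NewtonSolution

variable {n ι σ τ : Type*} [Fintype n] [DecidableEq n] [Fintype ι] [DecidableEq ι]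

namespace NewtonData

/-- The remainder of Newton data as a power series in the parameters `σ` and in independent
variables for `w` and `z`. -/
noncomputable def genericRemainder {R : Type*} [CommRing R] (D : NewtonData n ι σ R) (i : n) :
    MvPowerSeries ((σ ⊕ ι) ⊕ n) R :=
  (D.pullback fun o ↦ X (Sum.inl (Sum.inl o))).remainder (fun k ↦ X (Sum.inl (Sum.inr k)))
    (fun j ↦ X (Sum.inr j)) i

variable [Finite σ]

lemma Pointed.subst_genericRemainder {R : Type*} [CommRing R] {D : NewtonData n ι σ R}
    (hD : D.Pointed) {p : σ → MvPowerSeries τ R} {w : ι → MvPowerSeries τ R}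
    {z : n → MvPowerSeries τ R} (hp : IsPointed p) (hw : IsPointed w) (hz : IsPointed z) (i : n) :
    subst (Sum.elim (Sum.elim p w) z) (D.genericRemainder i) = (D.pullback p).remainder w z i := by
  have hs := ((hp.sumElim hw).sumElim hz).hasSubst
  have hX : IsPointed fun o ↦ (X (Sum.inl (Sum.inl o)) : MvPowerSeries ((σ ⊕ ι) ⊕ n) R) :=
    isPointed_X _
  rw [genericRemainder, (hD.pullback hX).subst_remainder (isPointed_X _) (isPointed_X _)
    ((hp.sumElim hw).sumElim hz), D.pullback_pullback hX ((hp.sumElim hw).sumElim hz)]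
  simp only [subst_X hs, Sum.elim_inl, Sum.elim_inr]

lemma Pointed.genericRemainder_sub_mem {R : Type*} [CommRing R] {D : NewtonData n ι σ R}
    (hD : D.Pointed) (hQ : IsPointed D.Q) (i : n) :
    D.genericRemainder i - C (constantCoeff D.U) * X (Sum.inr i) ∈ orderIdeal leftWeight 1 := by
  have hX : IsPointed fun o ↦ (X (Sum.inl (Sum.inl o)) : MvPowerSeries ((σ ⊕ ι) ⊕ n) R) :=
    isPointed_X _
  have hleft (o : σ ⊕ ι) :
      (X (Sum.inl o) : MvPowerSeries ((σ ⊕ ι) ⊕ n) R) ∈ orderIdeal leftWeight 1 :=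
    X_mem_orderIdeal leftWeight (Sum.inl o)
  have hsub (F : MvPowerSeries σ R) := subst_sub_C_mem_orderIdeal hX (fun o ↦ hleft (Sum.inl o)) F
  have hsub₀ {F : MvPowerSeries σ R} (hF : constantCoeff F = 0) := by
    simpa only [hF, map_zero, sub_zero] using hsub F
  exact remainder_sub_mul_mem (hsub₀ (hQ i)) (fun k ↦ hleft (Sum.inr k)) (hsub D.U) (hsub₀ hD.t)

lemma Pointed.eq_of_remainder_eq_zero {K : Type*} [Field K] {D : NewtonData n ι σ K}
    (hD : D.Pointed) (hU : constantCoeff D.U ≠ 0) (hQ : IsPointed D.Q)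
    {p : σ → MvPowerSeries τ K} {w : ι → MvPowerSeries τ K} {z z' : n → MvPowerSeries τ K}
    (hp : IsPointed p) (hw : IsPointed w) (hz : IsPointed z) (hz' : IsPointed z')
    (h : ∀ i, (D.pullback p).remainder w z i = 0)
    (h' : ∀ i, (D.pullback p).remainder w z' i = 0) : z = z' :=
  eq_of_subst_sumElim_eq_zero hU (hD.genericRemainder_sub_mem hQ) (hp.sumElim hw) hz hz'
    (fun i ↦ (hD.subst_genericRemainder hp hw hz i).trans (h i))
    (fun i ↦ (hD.subst_genericRemainder hp hw hz' i).trans (h' i))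

/-- The implicit function theorem solves `remainder = 0` for `z`, since the remainder is
`U(0) z` up to terms vanishing with the parameters and `w`. -/
lemma Convergent.exists_remainder_eq_zero {𝕜 : Type*} [NormedField 𝕜] {D : NewtonData n ι σ 𝕜}
    (hD : D.Convergent) (hD₀ : D.Pointed) (hU : constantCoeff D.U ≠ 0) (hQ : IsPointed D.Q) :
    ∃ z : n → MvPowerSeries (σ ⊕ ι) 𝕜, (∀ i, IsConvergent (z i)) ∧ IsPointed z ∧
      ∀ i, (D.pullback (leftVars σ ι 𝕜)).remainder (fun k ↦ X (Sum.inr k)) z i = 0 := by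
  have hX : IsPointed fun o ↦ (X (Sum.inl (Sum.inl o)) : MvPowerSeries ((σ ⊕ ι) ⊕ n) 𝕜) :=
    isPointed_X _
  have hgen (i : n) : IsConvergent (D.genericRemainder i) :=
    (hD.pullback hX fun _ ↦ isConvergent_X _).isConvergent_remainder (hD₀.pullback hX)
      (isPointed_X _) (isPointed_X _) (fun _ ↦ isConvergent_X _) (fun _ ↦ isConvergent_X _) i
  obtain ⟨z, hzc, hz, h⟩ := exists_isConvergent_subst_sumElim_eq_zero hU hgen
    (hD₀.genericRemainder_sub_mem hQ)
  refine ⟨z, hzc, hz, fun i ↦ ?_⟩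
  rw [← hD₀.subst_genericRemainder isPointed_leftVars (isPointed_X _) hz]
  convert h i
  funext o
  rcases o with o | o <;> rfl

end NewtonData

end NewtonSolution

section Fiber

variable {τ κ ι : Type*} {h : ℕ}

/-- The weight for which the variables of the second summand have weight one and those of the
first weight zero. -/
abbrev rightWeight : τ ⊕ κ → ℕ := Sum.elim (fun _ ↦ 0) (fun _ ↦ 1)

lemma mem_orderIdeal_rightWeight_one {R : Type*} [CommRing R] [Finite τ] [Finite κ]
    {G : MvPowerSeries (τ ⊕ κ) R}
    (hG : subst (Sum.elim X fun _ ↦ 0 : τ ⊕ κ → MvPowerSeries τ R) G = 0) :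
    G ∈ orderIdeal rightWeight 1 := by
  have hX : IsPointed (X : τ → MvPowerSeries τ R) := isPointed_X id
  have hX' : IsPointed (X : τ ⊕ κ → MvPowerSeries (τ ⊕ κ) R) := isPointed_X id
  have h0 := hX.sumElim (isPointed_zero (ι := κ))
  have hleft : IsPointed (leftVars τ κ R) := isPointed_leftVars
  have hl := hleft.hasSubst
  have hcomp := h0.subst_subst hleft G
  rw [hG, subst_zero hl] at hcomp
  have hclose := subst_sub_subst_mem_orderIdeal (w := rightWeight) (k := 1) hX'.hasSubst
    (h0.subst hleft).hasSubst ?_ G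
  · rwa [← hcomp, sub_zero, subst_self] at hclose
  rintro (i | j)
  · rw [Sum.elim_inl, subst_X hl, leftVars, sub_self]
    exact zero_mem _
  · rw [Sum.elim_inr, subst_zero hl, sub_zero]
    exact X_mem_orderIdeal rightWeight (Sum.inr j)

lemma mem_orderIdeal_rightWeight_succ {R : Type*} [CommRing R] [IsDomain R] [CharZero R]
    {G : MvPowerSeries (τ ⊕ κ) R} {m : ℕ} (h1 : G ∈ orderIdeal rightWeight 1)
    (hd : ∀ j, pderiv R (Sum.inr j) G ∈ orderIdeal rightWeight m) :
    G ∈ orderIdeal rightWeight (m + 1) := by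
  classical
  refine mem_orderIdeal.2 fun e he ↦ ?_
  by_cases hz : ∃ j, e (Sum.inr j) ≠ 0
  · obtain ⟨j, hj⟩ := hz
    have hle : single (Sum.inr j) 1 ≤ e := by
      rw [single_le_iff]
      lia
    obtain ⟨e', rfl⟩ := exists_add_of_le hle
    rw [map_add, weight_single] at he
    have hcoeff := mem_orderIdeal.1 (hd j) e' (by simp at he; lia)
    rw [coeff_pderiv, mul_eq_zero] at hcoeff
    rw [add_comm]
    exact hcoeff.resolve_right (Nat.cast_add_one_ne_zero _)
  · push Not at hz
    have hweight : weight (rightWeight : τ ⊕ κ → ℕ) e = 0 := by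
      rw [weight_apply, Finsupp.sum]
      refine Finset.sum_eq_zero fun i _ ↦ ?_
      rcases i with i | i <;> simp [hz]
    exact mem_orderIdeal.1 h1 e (by lia)

/-- Cramer's rule for the vector `(A, c)`. -/
lemma mul_eq_det_of_mulVec_cons {R : Type*} [CommRing R] [NoZeroDivisors R]
    {N : Matrix (Fin (h + 1)) (Fin (h + 1)) R} {A u g : R} {c : Fin h → R} (hA : A ≠ 0)
    (hN : N.mulVec (Fin.cons A c) = Fin.cons g 0)
    (hu : (N.submatrix Fin.succ Fin.succ).det = A * u) : u * g = N.det := by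
  have hadj : N.adjugate 0 0 = A * u := by
    simp [Matrix.adjugate_fin_succ_eq_det_submatrix, ← hu]
  have hcramer := congrFun (Matrix.mulVec_mulVec (Fin.cons A c) N.adjugate N) 0
  rw [hN, Matrix.adjugate_mul, Matrix.smul_mulVec, Matrix.one_mulVec] at hcramer
  simp only [Matrix.mulVec, dotProduct, Fin.sum_univ_succ, Fin.cons_zero, Fin.cons_succ, hadj,
    Pi.zero_apply, mul_zero, Finset.sum_const_zero, add_zero, Pi.smul_apply, smul_eq_mul]
    at hcramer
  exact mul_left_cancel₀ hA (by linear_combination hcramer)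

/-- The set `S` is stable under bordering the Jacobian minor of `rel` by a series of `S` and a
further variable. -/
def IsMinorStable {R : Type*} [CommRing R] (col : Fin h → ι) (rel : Fin h → MvPowerSeries ι R)
    (S : Set (MvPowerSeries ι R)) : Prop :=
  ∀ F ∈ S, ∀ j, jacobianMinor (Fin.cons j col : Fin (h + 1) → ι)
    (Fin.cons F rel : Fin (h + 1) → MvPowerSeries ι R) ∈ S

variable {K : Type*} [Field K] [Finite ι] [DecidableEq ι] {col : Fin h → ι}
  {rel : Fin h → MvPowerSeries ι K} {Y : ι → MvPowerSeries (τ ⊕ ι) K}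
  {s A u : MvPowerSeries (τ ⊕ ι) K} {c : ι → Fin h → MvPowerSeries (τ ⊕ ι) K}

lemma mul_pderiv_subst_eq_mul_subst_jacobianMinor (hY : IsPointed Y)
    (hrel : ∀ i, subst Y (rel i) = 0) (hs : s ≠ 0) (hA : A ≠ 0)
    (hd : ∀ j k, pderiv K (Sum.inr j) (Y k) =
      s * ((if j = k then A else 0) + ∑ l with col l = k, c j l))
    (hminor : subst Y (jacobianMinor col rel) = A * u) (F : MvPowerSeries ι K) (j : ι) :
    u * pderiv K (Sum.inr j) (subst Y F) = s * subst Y (jacobianMinor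
      (Fin.cons j col : Fin (h + 1) → ι) (Fin.cons F rel : Fin (h + 1) → MvPowerSeries ι K)) := by
  cases nonempty_fintype ι
  set g : MvPowerSeries ι K → MvPowerSeries (τ ⊕ ι) K := fun F ↦
    subst Y (pderiv K j F) * A + ∑ l, subst Y (pderiv K (col l) F) * c j l with hg
  have hderiv (F : MvPowerSeries ι K) : pderiv K (Sum.inr j) (subst Y F) = s * g F := by
    have hcol : ∑ k, (∑ l with col l = k, c j l) * subst Y (pderiv K k F) =
        ∑ l, subst Y (pderiv K (col l) F) * c j l := by
      rw [← Finset.sum_fiberwise Finset.univ col]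
      refine Finset.sum_congr rfl fun k _ ↦ ?_
      rw [Finset.sum_mul]
      refine Finset.sum_congr rfl fun l hl ↦ ?_
      rw [(Finset.mem_filter.1 hl).2, mul_comm]
    rw [pderiv_subst hY]
    simp only [hd, mul_assoc, ← Finset.mul_sum, add_mul, Finset.sum_add_distrib, hcol, hg]
    simp [mul_comm]
  have hgrel (i : Fin h) : g (rel i) = 0 := by
    have hzero := hderiv (rel i)
    rw [hrel, map_zero] at hzero
    exact (mul_eq_zero.1 hzero.symm).resolve_left hs
  rw [hderiv, jacobianMinor, subst_det hY.hasSubst, mul_left_comm]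
  congr 1
  refine mul_eq_det_of_mulVec_cons (c := c j) hA ?_ ?_
  · funext i
    rw [Matrix.mulVec, dotProduct, Fin.sum_univ_succ]
    refine Fin.cases rfl (fun i ↦ hgrel i) i
  · rw [← hminor, jacobianMinor, subst_det hY.hasSubst]
    rfl

/-- Along the fibres of the family `Y` all derivatives of a series of `S` are multiples of series
of `S`, so a series of `S` vanishing on one fibre point vanishes to every order. -/
theorem subst_family_eq_zero [CharZero K] [Finite τ] (hY : IsPointed Y)
    (hrel : ∀ i, subst Y (rel i) = 0) (hs : s ≠ 0) (hA : A ≠ 0) (hu : constantCoeff u ≠ 0)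
    (hd : ∀ j k, pderiv K (Sum.inr j) (Y k) =
      s * ((if j = k then A else 0) + ∑ l with col l = k, c j l))
    (hminor : subst Y (jacobianMinor col rel) = A * u) {S : Set (MvPowerSeries ι K)}
    (hS : IsMinorStable col rel S) {y : ι → MvPowerSeries τ K}
    (hy : ∀ k, subst (Sum.elim X fun _ ↦ 0) (Y k) = y k) (hSy : ∀ F ∈ S, subst y F = 0)
    {F : MvPowerSeries ι K} (hF : F ∈ S) : subst Y F = 0 := by
  have hX : IsPointed (X : τ → MvPowerSeries τ K) := isPointed_X id
  have huinv : u⁻¹ * u = 1 := MvPowerSeries.inv_mul_cancel u hu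
  refine eq_zero_of_forall_mem_orderIdeal (w := rightWeight) fun m ↦ ?_
  induction m generalizing F with
  | zero => exact mem_orderIdeal_zero _ _
  | succ m ih =>
    refine mem_orderIdeal_rightWeight_succ (mem_orderIdeal_rightWeight_one ?_) fun j ↦ ?_
    · rw [hY.subst_subst (hX.sumElim isPointed_zero), funext hy, hSy F hF]
    · have hpd : pderiv K (Sum.inr j) (subst Y F) = u⁻¹ * s * subst Y (jacobianMinor
          (Fin.cons j col : Fin (h + 1) → ι)
          (Fin.cons F rel : Fin (h + 1) → MvPowerSeries ι K)) := by
        rw [mul_assoc, ← mul_pderiv_subst_eq_mul_subst_jacobianMinor hY hrel hs hA hd hminor,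
          ← mul_assoc, huinv, one_mul]
      exact hpd ▸ Ideal.mul_mem_left _ _ (ih (hS F hF j))

end Fiber

section NewtonFamily

variable {h : ℕ} {ι σ τ : Type*}

section Translation

variable {R : Type*} [CommRing R] {p : σ → MvPowerSeries τ R} {w v : ι → MvPowerSeries τ R}

/-- The family `(x, v) ↦ w(x) + v`. -/
noncomputable def translate (w : ι → MvPowerSeries τ R) (k : ι) : MvPowerSeries (τ ⊕ ι) R :=
  subst (leftVars τ ι R) (w k) + X (Sum.inr k)

/-- The substitution `(x, v) ↦ (p(x), w(x) + v)`. -/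
noncomputable def fiberTranslation (p : σ → MvPowerSeries τ R) (w : ι → MvPowerSeries τ R) :
    σ ⊕ ι → MvPowerSeries (τ ⊕ ι) R :=
  Sum.elim (fun o ↦ subst (leftVars τ ι R) (p o)) (translate w)

lemma isPointed_translate [Finite τ] (hw : IsPointed w) : IsPointed (translate w) := fun k ↦ by
  rw [translate, map_add, hw.subst isPointed_leftVars k, constantCoeff_X, add_zero]

lemma isPointed_fiberTranslation [Finite τ] (hp : IsPointed p) (hw : IsPointed w) :
    IsPointed (fiberTranslation p w) :=
  (hp.subst isPointed_leftVars).sumElim (isPointed_translate hw)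

lemma pderiv_inr_translate [Finite τ] [DecidableEq ι] (j k : ι) :
    pderiv R (Sum.inr j) (translate w k) = if j = k then 1 else 0 := by
  classical
  rw [translate, map_add, pderiv_inr_subst_leftVars, zero_add, pderiv_X]
  by_cases hjk : j = k <;> simp [hjk, eq_comm]

lemma subst_sumElim_X_subst_fiberTranslation [Finite σ] [Finite τ] [Finite ι] (hp : IsPointed p)
    (hw : IsPointed w) (hv : IsPointed v) (G : MvPowerSeries (σ ⊕ ι) R) :
    subst (Sum.elim X v) (subst (fiberTranslation p w) G) =
      subst (Sum.elim p fun k ↦ w k + v k) G := by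
  have hX : IsPointed (X : τ → MvPowerSeries τ R) := isPointed_X id
  rw [(isPointed_fiberTranslation hp hw).subst_subst (hX.sumElim hv)]
  congr 1
  funext o
  rcases o with o | k
  · exact subst_sumElim_X_subst_leftVars hv (p o)
  · simp only [fiberTranslation, translate, Sum.elim_inr, subst_add (hX.sumElim hv).hasSubst,
      subst_sumElim_X_subst_leftVars hv, subst_X (hX.sumElim hv).hasSubst]

end Translation

namespace NewtonData

section Specialization

variable {n R : Type*} [CommRing R] [Finite σ]
  {D : NewtonData n ι σ R} {z : n → MvPowerSeries (σ ⊕ ι) R}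
  {p : σ → MvPowerSeries τ R} {w : ι → MvPowerSeries τ R}

lemma pullback_leftVars_pullback_sumElim [Finite ι] (hp : IsPointed p) (hw : IsPointed w) :
    (D.pullback (leftVars σ ι R)).pullback (Sum.elim p w) = D.pullback p := by
  rw [D.pullback_pullback isPointed_leftVars (hp.sumElim hw)]
  simp only [leftVars, subst_X (hp.sumElim hw).hasSubst, Sum.elim_inl]

variable [Fintype n] [DecidableEq n] [DecidableEq ι]

lemma Pointed.subst_sumElim_point [Finite ι] (hD : D.Pointed) (hp : IsPointed p)
    (hw : IsPointed w) (k : ι) :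
    subst (Sum.elim p w) ((D.pullback (leftVars σ ι R)).point (fun k ↦ X (Sum.inr k)) z k) =
      (D.pullback p).point w (fun i ↦ subst (Sum.elim p w) (z i)) k := by
  rw [(hD.pullback isPointed_leftVars).subst_point (hp.sumElim hw),
    pullback_leftVars_pullback_sumElim hp hw]
  simp only [subst_X (hp.sumElim hw).hasSubst, Sum.elim_inr]

lemma Pointed.subst_sumElim_remainder [Fintype ι] (hD : D.Pointed) (hz : IsPointed z)
    (hp : IsPointed p) (hw : IsPointed w) (i : n) :
    subst (Sum.elim p w) ((D.pullback (leftVars σ ι R)).remainder (fun k ↦ X (Sum.inr k)) z i) =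
      (D.pullback p).remainder w (fun i ↦ subst (Sum.elim p w) (z i)) i := by
  rw [(hD.pullback isPointed_leftVars).subst_remainder (isPointed_X _) hz (hp.sumElim hw),
    pullback_leftVars_pullback_sumElim hp hw]
  simp only [subst_X (hp.sumElim hw).hasSubst, Sum.elim_inr]

lemma Pointed.remainder_subst_sumElim_eq_zero [Fintype ι] (hD : D.Pointed) (hz : IsPointed z)
    (hzrem : ∀ i, (D.pullback (leftVars σ ι R)).remainder (fun k ↦ X (Sum.inr k)) z i = 0)
    (hp : IsPointed p) (hw : IsPointed w) (i : n) :
    (D.pullback p).remainder w (fun i ↦ subst (Sum.elim p w) (z i)) i = 0 := by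
  rw [← hD.subst_sumElim_remainder hz hp hw, hzrem, subst_zero (hp.sumElim hw).hasSubst]

end Specialization

/-- The relations take the value `t * A ^ 2 * Q` at the base point and their Jacobian minor the
value `A * U`, where `t` and `A` are nonzero. -/
structure Exact {n R : Type*} [CommRing R] [Fintype n] [DecidableEq n] (D : NewtonData n ι σ R) :
    Prop where
  relDefect : ∀ i, D.relDefect i = 0
  minorDefect : D.minorDefect = 0
  t_ne_zero : D.t ≠ 0
  A_ne_zero : D.A ≠ 0

lemma Pointed.exact_pullback_leftVars {n R : Type*} [CommRing R] [Fintype n] [DecidableEq n]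
    [Finite σ] [Finite ι] {D : NewtonData n ι σ R} (hD : D.Pointed) (hex : D.Exact) :
    (D.pullback (leftVars σ ι R)).Exact where
  relDefect i := by
    rw [hD.relDefect_pullback isPointed_leftVars, hex.relDefect,
      subst_zero isPointed_leftVars.hasSubst]
  minorDefect := by
    rw [hD.minorDefect_pullback isPointed_leftVars, hex.minorDefect,
      subst_zero isPointed_leftVars.hasSubst]
  t_ne_zero := subst_leftVars_ne_zero hex.t_ne_zero
  A_ne_zero := subst_leftVars_ne_zero hex.A_ne_zero

variable [Fintype ι] [DecidableEq ι]

lemma Pointed.subst_point_translate_eq_zero {K : Type*} [Field K] [CharZero K] [Finite τ]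
    {D : NewtonData (Fin h) ι τ K} (hD : D.Pointed) (hU : constantCoeff D.U ≠ 0) (hex : D.Exact)
    {w : ι → MvPowerSeries τ K} (hw : IsPointed w) {z : Fin h → MvPowerSeries (τ ⊕ ι) K}
    (hz : IsPointed z)
    (hrem : ∀ i, (D.pullback (leftVars τ ι K)).remainder (translate w) z i = 0)
    {S : Set (MvPowerSeries ι K)} (hS : IsMinorStable D.col D.rel S) {y : ι → MvPowerSeries τ K}
    (hy : ∀ k, subst (Sum.elim X fun _ ↦ 0)
      ((D.pullback (leftVars τ ι K)).point (translate w) z k) = y k)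
    (hSy : ∀ F ∈ S, subst y F = 0) {F : MvPowerSeries ι K} (hF : F ∈ S) :
    subst ((D.pullback (leftVars τ ι K)).point (translate w) z) F = 0 := by
  have hleft : IsPointed (leftVars τ ι K) := isPointed_leftVars
  have hex' := hD.exact_pullback_leftVars hex
  set D' := D.pullback (leftVars τ ι K) with hD'
  have hDp : D'.Pointed := hD.pullback hleft
  have hwv := isPointed_translate hw
  obtain ⟨G, hG⟩ := hDp.exists_subst_point_jacobianMinor hwv hz
  rw [hex'.minorDefect, add_zero] at hG
  refine subst_family_eq_zero (s := D'.t * D'.A) (A := D'.A) (u := D'.U + D'.t * G)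
    hDp.isPointed_point (fun i ↦ ?_) (mul_ne_zero hex'.t_ne_zero hex'.A_ne_zero)
    hex'.A_ne_zero ?_ (fun j k ↦ ?_) hG hS hy hSy hF
    (c := fun j l ↦ ∑ i, ((jacobian D'.col D'.rel).map (subst D'.base)).adjugate l i *
      pderiv K (Sum.inr j) (z i))
  · rw [hDp.subst_point_rel hwv hz, hex'.relDefect, hex'.minorDefect, hrem]
    ring
  · rwa [map_add, hDp.constantCoeff_mul, add_zero, hD', NewtonData.pullback,
      constantCoeff_subst_of_isPointed hleft]
  · rw [hDp.pderiv_point (fun k ↦ pderiv_inr_subst_leftVars _ _) (pderiv_inr_subst_leftVars _ _)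
      (pderiv_inr_subst_leftVars _ _), direction]
    simp only [pderiv_inr_translate, mul_ite, mul_one, mul_zero]

variable {𝕜 : Type*} [NormedField 𝕜] [CharZero 𝕜] [Finite σ] [Finite τ]
  {D : NewtonData (Fin h) ι σ 𝕜} {p : σ → MvPowerSeries τ 𝕜} {w : ι → MvPowerSeries τ 𝕜}
  {S : Set (MvPowerSeries ι 𝕜)}

lemma Convergent.exists_family (hD : D.Convergent) (hD₀ : D.Pointed)
    (hU : constantCoeff D.U ≠ 0) (hQ : IsPointed D.Q) (hp : IsPointed p) (hw : IsPointed w)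
    (hex : (D.pullback p).Exact) (hrem : ∀ i, (D.pullback p).remainder w (fun _ ↦ 0) i = 0)
    (hS : IsMinorStable D.col D.rel S)
    (hSy : ∀ F ∈ S, subst ((D.pullback p).point w fun _ ↦ 0) F = 0) :
    ∃ Y : ι → MvPowerSeries (σ ⊕ ι) 𝕜, (∀ k, IsConvergent (Y k)) ∧ IsPointed Y ∧
      (∀ k, subst (Sum.elim p w) (Y k) = (D.pullback p).point w (fun _ ↦ 0) k) ∧
      ∀ F ∈ S, subst (fun k ↦ subst (fiberTranslation p w) (Y k)) F = 0 := by
  obtain ⟨z, hzc, hz, hzrem⟩ := hD.exists_remainder_eq_zero hD₀ hU hQ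
  have hl : IsPointed (leftVars σ ι 𝕜) := isPointed_leftVars
  have hl' : IsPointed (leftVars τ ι 𝕜) := isPointed_leftVars
  have hpoint (k : ι) : subst (Sum.elim p w)
      ((D.pullback (leftVars σ ι 𝕜)).point (fun k ↦ X (Sum.inr k)) z k) =
      (D.pullback p).point w (fun _ ↦ 0) k := by
    rw [hD₀.subst_sumElim_point hp hw, hD₀.eq_of_remainder_eq_zero hU hQ hp hw
      (hz.subst (hp.sumElim hw)) isPointed_zero 
      (hD₀.remainder_subst_sumElim_eq_zero hz hzrem hp hw) hrem]
  have hfiber (k : ι) : subst (fiberTranslation p w)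
      ((D.pullback (leftVars σ ι 𝕜)).point (fun k ↦ X (Sum.inr k)) z k) =
      ((D.pullback p).pullback (leftVars τ ι 𝕜)).point (translate w)
        (fun i ↦ subst (fiberTranslation p w) (z i)) k := by
    rw [fiberTranslation, hD₀.subst_sumElim_point (hp.subst hl') (isPointed_translate hw),
      D.pullback_pullback hp hl']
  refine ⟨_, (hD.pullback hl fun _ ↦ isConvergent_X _).isConvergent_point (hD₀.pullback hl)
    (fun _ ↦ isConvergent_X _) hzc, (hD₀.pullback hl).isPointed_point, hpoint, fun F hF ↦ ?_⟩
  rw [funext hfiber]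
  refine (hD₀.pullback hp).subst_point_translate_eq_zero ?_ hex hw
    (hz.subst (isPointed_fiberTranslation hp hw)) ?_ hS (fun k ↦ ?_) hSy hF
  · rwa [NewtonData.pullback, constantCoeff_subst_of_isPointed hp]
  · rw [D.pullback_pullback hp hl']
    exact hD₀.remainder_subst_sumElim_eq_zero hz hzrem (hp.subst hl') (isPointed_translate hw)
  · rw [← hfiber, subst_sumElim_X_subst_fiberTranslation hp hw isPointed_zero]
    simpa only [add_zero] using hpoint k

/-- The parameter `w` is moved to zero along a family of solutions of the relations in `S`. -/
theorem Convergent.exists_isConvergent_parametrization (hD : D.Convergent) (hD₀ : D.Pointed)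
    (hU : constantCoeff D.U ≠ 0) (hQ : IsPointed D.Q) (hp : IsPointed p) (hw : IsPointed w)
    (hex : (D.pullback p).Exact) (hrem : ∀ i, (D.pullback p).remainder w (fun _ ↦ 0) i = 0)
    (hS : IsMinorStable D.col D.rel S)
    (hSy : ∀ F ∈ S, subst ((D.pullback p).point w fun _ ↦ 0) F = 0)
    {c : ℕ} (hwc : ∀ k, w k ∈ degreeIdeal c) :
    ∃ Y : ι → MvPowerSeries σ 𝕜, (∀ k, IsConvergent (Y k)) ∧ IsPointed Y ∧
      (∀ k, subst p (Y k) - (D.pullback p).point w (fun _ ↦ 0) k ∈ degreeIdeal c) ∧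
      ∀ F ∈ S, subst p (subst Y F) = 0 := by
  obtain ⟨Y, hYc, hY, hYp, hYF⟩ := hD.exists_family hD₀ hU hQ hp hw hex hrem hS hSy
  have hX : IsPointed (X : σ → MvPowerSeries σ 𝕜) := isPointed_X id
  have hX' : IsPointed (X : τ → MvPowerSeries τ 𝕜) := isPointed_X id
  have h0 : IsPointed (Sum.elim X fun _ ↦ 0 : σ ⊕ ι → MvPowerSeries σ 𝕜) :=
    hX.sumElim isPointed_zero
  have hneg : IsPointed fun k ↦ -w k := fun k ↦ by rw [map_neg, hw k, neg_zero]
  have hspec (k : ι) :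
      subst p (subst (Sum.elim X fun _ ↦ 0 : σ ⊕ ι → MvPowerSeries σ 𝕜) (Y k)) =
        subst (Sum.elim p fun _ ↦ 0) (Y k) := by
    rw [h0.subst_subst hp]
    congr 1
    funext o
    rcases o with o | _
    exacts [subst_X hp.hasSubst o, subst_zero hp.hasSubst]
  refine ⟨fun k ↦ subst (Sum.elim X fun _ ↦ 0) (Y k), fun k ↦ (hYc k).subst h0 ?_,
    hY.subst h0, fun k ↦ ?_, fun F hF ↦ ?_⟩
  · rintro (o | _)
    exacts [isConvergent_X o, isConvergent_zero]
  · rw [hspec, ← hYp]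
    refine subst_sub_subst_mem_orderIdeal (hp.sumElim isPointed_zero).hasSubst
      (hp.sumElim hw).hasSubst ?_ _
    rintro (o | o)
    · simp
    · simpa using hwc o
  · have hzero := congrArg (subst (Sum.elim X fun k ↦ -w k)) (hYF F hF)
    have hYt := hY.subst (isPointed_fiberTranslation hp hw)
    rw [subst_zero (hX'.sumElim hneg).hasSubst, hYt.subst_subst (hX'.sumElim hneg)] at hzero
    rw [(hY.subst h0).subst_subst hp, ← hzero]
    simp only [hspec, subst_sumElim_X_subst_fiberTranslation hp hw hneg, add_neg_cancel]

end NewtonData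

end NewtonFamily

section WeierstrassDivided

variable {h d c : ℕ} {ι π τ : Type*}

/-- The tail `T` in `X none ^ e * (X none ^ d + V) ^ 2 = X none ^ (2 * d + e) + T`. -/
noncomputable def squareTail {R : Type*} [CommRing R] (d e : ℕ) (V : MvPowerSeries (Option τ) R) :
    MvPowerSeries (Option τ) R :=
  (X none ^ (d + e) + X none ^ (d + e) + X none ^ e * V) * V

lemma X_none_pow_mul_sq {R : Type*} [CommRing R] (d e : ℕ) (V : MvPowerSeries (Option τ) R) :
    X none ^ e * (X none ^ d + V) ^ 2 = X none ^ (2 * d + e) + squareTail d e V := by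
  rw [squareTail]
  ring

lemma squareTail_mem_orderIdeal {R : Type*} [CommRing R] {d e : ℕ}
    {V : MvPowerSeries (Option τ) R} (hV : V ∈ orderIdeal someWeight 1) :
    squareTail d e V ∈ orderIdeal someWeight 1 :=
  Ideal.mul_mem_left _ _ hV

lemma IsConvergent.squareTail {𝕜 : Type*} [NormedField 𝕜] {d e : ℕ}
    {V : MvPowerSeries (Option τ) 𝕜} (hV : IsConvergent V) : IsConvergent (squareTail d e V) :=
  have hX (k : ℕ) : IsConvergent (X none ^ k : MvPowerSeries (Option τ) 𝕜) :=
    (isConvergent_X _).pow k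
  (((hX _).add (hX _)).add ((hX _).mul hV)).mul hV

namespace NewtonData

/-- Newton data in which `A` is a Weierstrass polynomial in the variable `t = X none`, while `U`
and `Q` are quotients of Weierstrass divisions. -/
structure WeierstrassDivided {R : Type*} [CommRing R] (d : ℕ) (V : MvPowerSeries (Option π) R)
    (D : NewtonData (Fin h) ι (Option π) R) : Prop where
  tail_mem : V ∈ orderIdeal someWeight 1
  t_eq : D.t = X none
  A_eq : D.A = X none ^ d + V
  minorDefect_mem : D.minorDefect ∈ noneDegreeLT d
  relDefect_mem : ∀ i, D.relDefect i ∈ noneDegreeLT (2 * d + 1)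

lemma WeierstrassDivided.pointed {R : Type*} [CommRing R] {V : MvPowerSeries (Option π) R}
    {D : NewtonData (Fin h) ι (Option π) R} (hD : D.WeierstrassDivided d V)
    (hbase : IsPointed D.base) : D.Pointed :=
  ⟨hbase, by rw [hD.t_eq, constantCoeff_X]⟩

lemma exists_weierstrassDivided {𝕜 : Type*} [NormedField 𝕜] [Finite ι] [Finite π]
    {col : Fin h → ι} {rel : Fin h → MvPowerSeries ι 𝕜} (hrel : ∀ i, IsConvergent (rel i))
    {V : MvPowerSeries (Option π) 𝕜} (hV : V ∈ orderIdeal someWeight 1) (hVc : IsConvergent V)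
    {base : ι → MvPowerSeries (Option π) 𝕜} (hbase : IsPointed base)
    (hbasec : ∀ k, IsConvergent (base k)) :
    ∃ D : NewtonData (Fin h) ι (Option π) 𝕜, D.rel = rel ∧ D.col = col ∧ D.base = base ∧
      D.Convergent ∧ D.WeierstrassDivided d V := by
  obtain ⟨U, ρ, hU, hρ, hUc, -⟩ := exists_isConvergent_weierstrass_division (D := d) hV hVc
    ((isConvergent_jacobianMinor hrel col).subst hbase hbasec)
  choose Q S hQ hS hQc _ using fun i ↦ exists_isConvergent_weierstrass_division (D := 2 * d + 1)
    (squareTail_mem_orderIdeal (d := d) (e := 1) hV) hVc.squareTail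
    ((hrel i).subst hbase hbasec)
  refine ⟨⟨rel, col, base, X none, X none ^ d + V, U, Q⟩, rfl, rfl, rfl,
    ⟨hrel, hbasec, isConvergent_X _, ((isConvergent_X _).pow _).add hVc, hUc, hQc⟩,
    ⟨hV, rfl, rfl, ?_, fun i ↦ ?_⟩⟩
  · rwa [minorDefect, hU, add_sub_cancel_left]
  · have hsq := X_none_pow_mul_sq d 1 V
    rw [pow_one] at hsq
    rw [relDefect, hQ, hsq, add_sub_cancel_left]
    exact hS i

section Solution

variable {R : Type*} [CommRing R] [Finite π] {V : MvPowerSeries (Option π) R}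
  {D : NewtonData (Fin h) ι (Option π) R} {p : π → MvPowerSeries τ R}
  {w : ι → MvPowerSeries (Option τ) R}

lemma WeierstrassDivided.pullback_t (hD : D.WeierstrassDivided d V) (hp : IsPointed p) :
    (D.pullback (extendNone p)).t = X none := by
  rw [NewtonData.pullback, hD.t_eq, subst_extendNone_X_none hp]

lemma WeierstrassDivided.pullback_A (hD : D.WeierstrassDivided d V) (hp : IsPointed p) :
    (D.pullback (extendNone p)).A = X none ^ d + subst (extendNone p) V := by
  have hs := hp.extendNone.hasSubst
  rw [NewtonData.pullback, hD.A_eq, subst_add hs, subst_pow hs, subst_extendNone_X_none hp]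

variable [Finite τ]

lemma WeierstrassDivided.exact_pullback [Nontrivial R] (hD : D.WeierstrassDivided d V)
    (hp : IsPointed p) (hrel : ∀ i, (D.pullback (extendNone p)).relDefect i = 0)
    (hminor : (D.pullback (extendNone p)).minorDefect = 0) :
    (D.pullback (extendNone p)).Exact := by
  refine ⟨hrel, hminor, ?_, fun hA ↦ ?_⟩
  · rw [hD.pullback_t hp]
    exact nonZeroDivisors.ne_zero X_mem_nonzeroDivisors
  · exact one_ne_zero (weierstrass_division_eq_zero (Q := 1)
      ((subst_extendNone_mem_orderIdeal hp).2 hD.tail_mem)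
      (by rw [← hD.pullback_A hp, hA, zero_mul, add_zero]) (zero_mem _)).1

/-- Uniqueness of Weierstrass division: the minor at the solution `D.point w 0` is a multiple
of `A`, hence its remainder vanishes. -/
lemma WeierstrassDivided.minorDefect_pullback_eq_zero [Finite ι] (hD : D.WeierstrassDivided d V)
    (hbase : IsPointed D.base) (hp : IsPointed p) (hw : IsPointed w) [DecidableEq ι]
    {E : MvPowerSeries (Option τ) R}
    (hE : subst ((D.pullback (extendNone p)).point w fun _ ↦ 0) (jacobianMinor D.col D.rel) =
      E * (D.pullback (extendNone p)).A) :
    (D.pullback (extendNone p)).minorDefect = 0 ∧ constantCoeff D.U = constantCoeff E := by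
  have hDp := hD.pointed hbase
  obtain ⟨G, hG⟩ :=
    (hDp.pullback hp.extendNone).exists_subst_point_jacobianMinor hw isPointed_zero
  rw [hD.pullback_t hp] at hG
  have hmem : (D.pullback (extendNone p)).minorDefect ∈ noneDegreeLT d := by
    rw [hDp.minorDefect_pullback hp.extendNone]
    exact subst_extendNone_mem_noneDegreeLT hp hD.minorDefect_mem
  obtain ⟨hUE, hρ⟩ := weierstrass_division_eq_zero
    (Q := (D.pullback (extendNone p)).U + X none * G - E)
    ((subst_extendNone_mem_orderIdeal hp).2 hD.tail_mem)
    (by rw [← hD.pullback_A hp]; linear_combination hG.symm.trans hE) hmem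
  refine ⟨hρ, ?_⟩
  have := congrArg constantCoeff hUE
  rwa [map_sub, map_add, map_mul, constantCoeff_X, zero_mul, add_zero, map_zero, sub_eq_zero,
    NewtonData.pullback, constantCoeff_subst_of_isPointed hp.extendNone] at this

lemma WeierstrassDivided.relDefect_pullback_eq_zero [Fintype ι] (hD : D.WeierstrassDivided d V)
    (hbase : IsPointed D.base) (hp : IsPointed p) (hw : IsPointed w) [DecidableEq ι]
    (hrel : ∀ i, subst ((D.pullback (extendNone p)).point w fun _ ↦ 0) (D.rel i) = 0) (i : Fin h) :
    (D.pullback (extendNone p)).remainder w (fun _ ↦ 0) i = 0 ∧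
      (D.pullback (extendNone p)).relDefect i = 0 := by
  have hDp := hD.pointed hbase
  have hpoint := (hDp.pullback hp.extendNone).subst_point_rel hw isPointed_zero i
  have hsq := X_none_pow_mul_sq d 1 (subst (extendNone p) V)
  rw [← hD.pullback_A hp, pow_one] at hsq
  refine weierstrass_division_eq_zero (D := 2 * d + 1)
    (squareTail_mem_orderIdeal (d := d) (e := 1)
      ((subst_extendNone_mem_orderIdeal hp).2 hD.tail_mem)) ?_ ?_
  · rw [← hsq, ← hD.pullback_t hp]
    linear_combination hpoint.symm.trans (hrel i)
  · rw [hDp.relDefect_pullback hp.extendNone]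
    exact subst_extendNone_mem_noneDegreeLT hp (hD.relDefect_mem i)

end Solution

end NewtonData

/-- The convergent series that vanish at the formal point `y`. -/
def convergentRelations {σ 𝕜 : Type*} [NormedField 𝕜] (y : ι → MvPowerSeries σ 𝕜) :
    Set (MvPowerSeries ι 𝕜) :=
  {F | IsConvergent F ∧ subst y F = 0}

theorem exists_isConvergent_family_subst_eq_zero {𝕜 : Type*} [NormedField 𝕜] [CharZero 𝕜]
    [Finite ι] [Finite π] [Finite τ] {col : Fin h → ι} {rel : Fin h → MvPowerSeries ι 𝕜}
    {V : MvPowerSeries (Option π) 𝕜} (hV : V ∈ orderIdeal someWeight 1) (hVc : IsConvergent V)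
    {base : ι → MvPowerSeries (Option π) 𝕜} (hbase : IsPointed base)
    (hbasec : ∀ k, IsConvergent (base k)) {p : π → MvPowerSeries τ 𝕜} (hp : IsPointed p)
    {w y : ι → MvPowerSeries (Option τ) 𝕜} (hw : IsPointed w) (hwc : ∀ k, w k ∈ degreeIdeal c)
    (hy : ∀ k, y k = subst (extendNone p) (base k) +
      X none * (X none ^ d + subst (extendNone p) V) ^ 2 * w k)
    {E : MvPowerSeries (Option τ) 𝕜} (hE : constantCoeff E ≠ 0)
    (hminor : subst y (jacobianMinor col rel) = E * (X none ^ d + subst (extendNone p) V))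
    (hrel : ∀ i, rel i ∈ convergentRelations y)
    (hstable : IsMinorStable col rel (convergentRelations y)) :
    ∃ Y : ι → MvPowerSeries (Option π) 𝕜, (∀ k, IsConvergent (Y k)) ∧ IsPointed Y ∧
      (∀ k, subst (extendNone p) (Y k) - y k ∈ degreeIdeal c) ∧
      ∀ F ∈ convergentRelations y, subst (extendNone p) (subst Y F) = 0 := by
  classical
  cases nonempty_fintype ι
  obtain ⟨D, rfl, rfl, rfl, hDc, hD⟩ := NewtonData.exists_weierstrassDivided (d := d) (col := col)
    (fun i ↦ (hrel i).1) hV hVc hbase hbasec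
  have hDp := hD.pointed hbase
  have hA := hD.pullback_A hp
  have hpoint : (D.pullback (extendNone p)).point w (fun _ ↦ 0) = y := by
    funext k
    rw [NewtonData.point, NewtonData.direction_zero, hD.pullback_t hp, hy, ← hA]
    simp only [NewtonData.pullback]
    ring
  obtain ⟨hρ, hUE⟩ := hD.minorDefect_pullback_eq_zero hbase hp hw
    (by rw [hpoint, hminor, hA])
  have hdiv := hD.relDefect_pullback_eq_zero hbase hp hw (by simpa only [hpoint] using
    fun i ↦ (hrel i).2)
  have hQ : IsPointed D.Q := fun i ↦ by
    have hconst := (hDp.pullback hp.extendNone).constantCoeff_remainder hw isPointed_zero i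
    rw [(hdiv i).1, map_zero, NewtonData.pullback] at hconst
    rw [← constantCoeff_subst_of_isPointed hp.extendNone, ← hconst]
  have hex := hD.exact_pullback hp (fun i ↦ (hdiv i).2) hρ
  have hfamily := hDc.exists_isConvergent_parametrization hDp (hUE ▸ hE) hQ hp.extendNone hw hex
    (fun i ↦ (hdiv i).1) hstable (fun F hF ↦ by rw [hpoint]; exact hF.2) hwc
  rwa [hpoint] at hfamily

end WeierstrassDivided

section Approximation

variable {𝕜 : Type*} [NormedField 𝕜] {h d c : ℕ} {ι κ σ τ : Type*}

/-- The formal point `y` agrees to order `c` with a convergent point that satisfies every convergent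
relation of `y`. -/
def HasConvergentApproximation (y : ι → MvPowerSeries σ 𝕜) (c : ℕ) : Prop :=
  ∃ y₁ : ι → MvPowerSeries σ 𝕜, (∀ k, IsConvergent (y₁ k)) ∧ IsPointed y₁ ∧
    (∀ k, y₁ k - y k ∈ degreeIdeal c) ∧ convergentRelations y ⊆ convergentRelations y₁

/-- The Artin approximation property for power series in the variables `σ`. -/
def HasArtinApproximation.{u, v, w} (𝕜 : Type v) [NormedField 𝕜] (σ : Type w) : Prop :=
  ∀ (ι : Type u) [Finite ι] (y : ι → MvPowerSeries σ 𝕜), IsPointed y →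
    ∀ c, HasConvergentApproximation y c

universe u

section ChangeOfVariables

variable [Finite ι] [Finite σ] [Finite τ] {y : ι → MvPowerSeries τ 𝕜}
  {u : τ → MvPowerSeries σ 𝕜} {v : σ → MvPowerSeries τ 𝕜}

lemma subst_subst_eq_self (hu : IsPointed u) (hv : IsPointed v)
    (hvu : ∀ i, subst v (u i) = X i) (G : MvPowerSeries τ 𝕜) : subst v (subst u G) = G := by
  rw [hu.subst_subst hv, funext hvu, subst_self, id]

lemma convergentRelations_subst (hy : IsPointed y) (hu : IsPointed u) (hv : IsPointed v)
    (hvu : ∀ i, subst v (u i) = X i) :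
    convergentRelations (fun k ↦ subst u (y k)) = convergentRelations y := by
  ext F
  refine and_congr_right fun _ ↦ ?_
  rw [← hy.subst_subst hu]
  refine ⟨fun h ↦ ?_, fun h ↦ by rw [h, subst_zero hu.hasSubst]⟩
  rw [← subst_subst_eq_self hu hv hvu (subst y F), h, subst_zero hv.hasSubst]

lemma HasConvergentApproximation.of_subst (hy : IsPointed y) (hu : IsPointed u) (hv : IsPointed v)
    (hvc : ∀ i, IsConvergent (v i)) (hvu : ∀ i, subst v (u i) = X i)
    (h : HasConvergentApproximation (fun k ↦ subst u (y k)) c) :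
    HasConvergentApproximation y c := by
  obtain ⟨y₁, hy₁c, hy₁, hclose, hrel⟩ := h
  refine ⟨fun k ↦ subst v (y₁ k), fun k ↦ (hy₁c k).subst hv hvc, hy₁.subst hv, fun k ↦ ?_,
    fun F hF ↦ ⟨hF.1, ?_⟩⟩
  · rw [← subst_subst_eq_self hu hv hvu (y k), ← subst_sub hv.hasSubst]
    exact subst_mem_degreeIdeal hv (hclose k)
  · rw [← convergentRelations_subst hy hu hv hvu] at hF
    rw [← hy₁.subst_subst hv, (hrel hF).2, subst_zero hv.hasSubst]

lemma HasArtinApproximation.of_equiv (e : σ ≃ τ) (hσ : HasArtinApproximation.{u} 𝕜 σ) :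
    HasArtinApproximation.{u} 𝕜 τ := fun ι _ y hy c ↦
  have hv : IsPointed fun i ↦ (X (e i) : MvPowerSeries τ 𝕜) := isPointed_X e
  .of_subst hy (isPointed_X e.symm) hv (fun _ ↦ isConvergent_X _)
    (fun i ↦ by rw [subst_X hv.hasSubst, e.apply_symm_apply])
    (hσ ι _ (hy.subst (isPointed_X e.symm)) c)

end ChangeOfVariables

/-- The parameters `p` are the coefficients of the `G k` without their constant terms. -/
lemma exists_isConvergent_universal_family [Finite κ] [Finite τ] {D : ℕ}
    {G : κ → MvPowerSeries (Option τ) 𝕜} (hG : ∀ k, G k ∈ noneDegreeLT D) :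
    ∃ (p : κ × Fin D → MvPowerSeries τ 𝕜) (B : κ → MvPowerSeries (Option (κ × Fin D)) 𝕜),
      IsPointed p ∧ (∀ k, IsConvergent (B k)) ∧ ∀ k, subst (extendNone p) (B k) = G k := by
  let p : κ × Fin D → MvPowerSeries τ 𝕜 := fun i ↦
    noneCoeff i.2 (G i.1) - C (constantCoeff (noneCoeff i.2 (G i.1)))
  have hp : IsPointed p := fun i ↦ by rw [map_sub, constantCoeff_C, sub_self]
  refine ⟨p, fun k ↦ nonePoly fun j ↦ C (constantCoeff (noneCoeff j (G k))) + X (k, j), hp,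
    fun k ↦ .nonePoly fun j ↦ (isConvergent_C _).add (isConvergent_X _), fun k ↦ ?_⟩
  rw [subst_extendNone_nonePoly hp]
  conv_rhs => rw [eq_nonePoly_of_mem_noneDegreeLT (hG k)]
  simp only [subst_add hp.hasSubst, subst_C, subst_X hp.hasSubst, p, add_sub_cancel]

/-- The relations of `y` are convergent equations for `p`: the coefficients of `F(Y)`. -/
lemma HasArtinApproximation.approximation_of_family {π : Type u} [Finite π] [Finite ι] [Finite τ]
    (hτ : HasArtinApproximation.{u} 𝕜 τ) {p : π → MvPowerSeries τ 𝕜} (hp : IsPointed p)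
    {Y : ι → MvPowerSeries (Option π) 𝕜} (hYc : ∀ k, IsConvergent (Y k)) (hY : IsPointed Y)
    {y : ι → MvPowerSeries (Option τ) 𝕜}
    (hYy : ∀ k, subst (extendNone p) (Y k) - y k ∈ degreeIdeal c)
    (hYF : ∀ F ∈ convergentRelations y, subst (extendNone p) (subst Y F) = 0) :
    HasConvergentApproximation y c := by
  obtain ⟨p₁, hp₁c, hp₁, hclose, hrel⟩ := hτ π p hp c
  have hext : ∀ o, extendNone p₁ o - extendNone p o ∈ degreeIdeal c := by
    refine Option.forall.2 ⟨by simp [extendNone], fun i ↦ ?_⟩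
    simp only [extendNone, Option.elim'_some, ← map_sub]
    rw [renameSome_eq_subst]
    exact subst_mem_degreeIdeal (isPointed_X _) (hclose i)
  refine ⟨fun k ↦ subst (extendNone p₁) (Y k), fun k ↦ (hYc k).subst hp₁.extendNone ?_,
    hY.subst hp₁.extendNone, fun k ↦ ?_, fun F hF ↦ ⟨hF.1, ?_⟩⟩
  · exact Option.forall.2 ⟨isConvergent_X _, fun i ↦ (hp₁c i).renameSome⟩
  · rw [← sub_add_sub_cancel]
    exact add_mem (subst_sub_subst_mem_orderIdeal hp₁.extendNone.hasSubst
      hp.extendNone.hasSubst hext _) (hYy k)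
  · rw [← hY.subst_subst hp₁.extendNone]
    refine eq_zero_of_forall_noneCoeff_eq_zero fun j ↦ ?_
    rw [noneCoeff_subst_extendNone hp₁]
    refine (hrel ⟨(hF.1.subst hY hYc).noneCoeff j, ?_⟩).2
    rw [← noneCoeff_subst_extendNone hp, hYF F hF, map_zero]

lemma X_pow_mem_degreeIdeal (i : σ) (k : ℕ) :
    (X i ^ k : MvPowerSeries σ 𝕜) ∈ degreeIdeal k := by
  classical
  refine mem_orderIdeal.2 fun e he ↦ ?_
  rw [coeff_X_pow, if_neg]
  rintro rfl
  simp [weight_single] at he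

/-- Divide `y` by `t ^ (c + 2) A ^ 2` with `A` the Weierstrass polynomial of the minor, and let the
coefficients of `A` and of the remainders vary. -/
lemma HasArtinApproximation.approximation_of_regular_minor [CharZero 𝕜] {ι : Type u} [Finite ι]
    [Finite τ] (hτ : HasArtinApproximation.{u} 𝕜 τ) {col : Fin h → ι}
    {rel : Fin h → MvPowerSeries ι 𝕜} {y : ι → MvPowerSeries (Option τ) 𝕜} (hy : IsPointed y)
    (hlt : ∀ k < d, coeff (single none k) (subst y (jacobianMinor col rel)) = 0)
    (hd : coeff (single none d) (subst y (jacobianMinor col rel)) ≠ 0)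
    (hrel : ∀ i, rel i ∈ convergentRelations y)
    (hstable : IsMinorStable col rel (convergentRelations y)) (c : ℕ) :
    HasConvergentApproximation y c := by
  obtain ⟨a, E, ha, hE, hminor⟩ := exists_weierstrass_preparation hlt hd
  have hV := ha.nonePoly_mem_orderIdeal
  choose w S hdiv hS using fun k ↦ exists_weierstrass_division (D := 2 * d + (c + 2))
    (squareTail_mem_orderIdeal (d := d) (e := c + 2) hV) (y k)
  simp only [← X_none_pow_mul_sq] at hdiv
  have hlow : ∀ o, Option.elim' (nonePoly a) S o ∈ noneDegreeLT (2 * d + (c + 2)) :=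
    Option.forall.2 ⟨mem_noneDegreeLT.2 fun e he ↦
      mem_noneDegreeLT.1 (nonePoly_mem_noneDegreeLT a) e (by lia), hS⟩
  obtain ⟨p, B, hp, hBc, hB⟩ := exists_isConvergent_universal_family hlow
  obtain ⟨hBV, hBS⟩ := Option.forall.1 hB
  simp only [Option.elim'_none, Option.elim'_some] at hBV hBS
  have hS₀ (k : ι) : constantCoeff (S k) = 0 := by
    have := congrArg constantCoeff (hdiv k)
    simpa [hy k] using this.symm
  obtain ⟨Y, hYc, hY, hYy, hYF⟩ := exists_isConvergent_family_subst_eq_zero (c := c)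
    (w := fun k ↦ X none ^ (c + 1) * w k) (base := fun k ↦ B (some k))
    ((subst_extendNone_mem_orderIdeal hp).1 (hBV ▸ hV)) (hBc none)
    (fun k ↦ by rw [← constantCoeff_subst_of_isPointed hp.extendNone, hBS, hS₀])
    (fun k ↦ hBc (some k)) hp (fun k ↦ by simp)
    (fun k ↦ Ideal.mul_mem_right _ _
      (orderIdeal_anti _ c.le_succ (X_pow_mem_degreeIdeal none (c + 1))))
    (fun k ↦ by rw [hBS, hBV]; linear_combination hdiv k) hE (hBV ▸ hminor) hrel hstable
  exact hτ.approximation_of_family hp hYc hY hYy hYF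

/-- Here `h` is the maximal length of a family of relations with a nonvanishing Jacobian minor. -/
lemma exists_isMinorStable_convergentRelations [Finite ι]
    {y : ι → MvPowerSeries σ 𝕜} (hy : IsPointed y) :
    ∃ (h : ℕ) (col : Fin h → ι) (rel : Fin h → MvPowerSeries ι 𝕜),
      (∀ i, rel i ∈ convergentRelations y) ∧ subst y (jacobianMinor col rel) ≠ 0 ∧
      IsMinorStable col rel (convergentRelations y) := by
  let HasMinor (h : ℕ) : Prop := ∃ (col : Fin h → ι) (rel : Fin h → MvPowerSeries ι 𝕜),
    (∀ i, rel i ∈ convergentRelations y) ∧ subst y (jacobianMinor col rel) ≠ 0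
  have hzero : HasMinor 0 := ⟨Fin.elim0, Fin.elim0, fun i ↦ i.elim0, by
    rw [jacobianMinor, Matrix.det_fin_zero, ← coe_substAlgHom hy.hasSubst, map_one]
    exact one_ne_zero⟩
  have hbound : ¬ HasMinor (Nat.card ι + 1) := by
    rintro ⟨col, rel, -, hne⟩
    obtain ⟨i, j, hcol, hij⟩ : ∃ i j, col i = col j ∧ i ≠ j := by
      by_contra! hinj
      have := Nat.card_le_card_of_injective col hinj
      simp at this
    refine hne ?_
    rw [jacobianMinor, Matrix.det_zero_of_column_eq hij (by simp [jacobian, hcol]),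
      subst_zero hy.hasSubst]
  obtain ⟨h, ⟨col, rel, hrel, hne⟩, hmax⟩ : ∃ h, HasMinor h ∧ ¬ HasMinor (h + 1) := by
    by_contra! hsucc
    exact hbound (Nat.rec (motive := HasMinor) hzero hsucc _)
  refine ⟨h, col, rel, hrel, hne, fun F hF j ↦ ?_⟩
  have hcons : ∀ i, (Fin.cons F rel : Fin (h + 1) → MvPowerSeries ι 𝕜) i ∈
      convergentRelations y := Fin.cases hF hrel
  refine ⟨isConvergent_jacobianMinor (fun i ↦ (hcons i).1) _, ?_⟩
  by_contra hminor
  exact hmax ⟨_, _, hcons, hminor⟩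

lemma HasArtinApproximation.option [CharZero 𝕜] [Finite τ]
    (hτ : HasArtinApproximation.{u} 𝕜 τ) : HasArtinApproximation.{u} 𝕜 (Option τ) := by
  intro ι _ y hy c
  have := CharZero.infinite 𝕜
  obtain ⟨h, col, rel, hrel, hne, hstable⟩ := exists_isMinorStable_convergentRelations hy
  obtain ⟨μ, d, hμ, hlt, hd⟩ := exists_shear_regular hne
  obtain ⟨ν, hν⟩ := exists_subst_shear_eq_X hμ
  have hμ₀ := isPointed_shear μ
  refine .of_subst hy hμ₀ (isPointed_shear ν) (isConvergent_shear ν) hν ?_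
  rw [← convergentRelations_subst hy hμ₀ (isPointed_shear ν) hν] at hrel hstable
  rw [hy.subst_subst hμ₀] at hlt hd
  exact hτ.approximation_of_regular_minor (hy.subst hμ₀) hlt hd hrel hstable c

lemma hasArtinApproximation_of_isEmpty [IsEmpty σ] : HasArtinApproximation.{u} 𝕜 σ := by
  intro ι _ y hy c
  have hy0 (k : ι) : y k = 0 := by
    ext e
    rw [Subsingleton.elim e 0, coeff_zero_eq_constantCoeff_apply, hy, map_zero]
  exact ⟨y, fun k ↦ hy0 k ▸ isConvergent_zero, hy, fun k ↦ by simp, subset_rfl⟩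

theorem hasArtinApproximation [CharZero 𝕜] [Finite σ] : HasArtinApproximation.{u} 𝕜 σ := by
  refine (Finite.induction_empty_option
    (P := fun σ ↦ Finite σ ∧ HasArtinApproximation.{u} 𝕜 σ) ?_ ?_ ?_ σ).2
  · rintro α β e ⟨hα, h⟩
    have := Finite.of_equiv α e
    exact ⟨this, h.of_equiv e⟩
  · exact ⟨inferInstance, hasArtinApproximation_of_isEmpty⟩
  · rintro α - ⟨hα, h⟩
    exact ⟨inferInstance, h.option⟩

end Approximation

section PolynomialSubstitution

variable {σ ι R : Type*} [CommRing R]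

lemma mem_degreeIdeal {F : MvPowerSeries σ R} {k : ℕ} :
    F ∈ degreeIdeal k ↔ ∀ e, degree e < k → coeff e F = 0 := by
  simp only [mem_orderIdeal, ← degree_eq_weight_one]

lemma coe_sub (p q : MvPolynomial σ R) :
    ((p - q : MvPolynomial σ R) : MvPowerSeries σ R) = p - q :=
  map_sub MvPolynomial.coeToMvPowerSeries.ringHom p q

lemma eval_smul_of_isHomogeneous {q : MvPolynomial σ R} {j : ℕ}
    (hq : q.IsHomogeneous j) (t : R) (x : σ → R) :
    MvPolynomial.eval (t • x) q = t ^ j * MvPolynomial.eval x q := by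
  rw [MvPolynomial.eval_eq, MvPolynomial.eval_eq, Finset.mul_sum]
  refine Finset.sum_congr rfl fun e he ↦ ?_
  have hdeg : ∑ i ∈ e.support, e i = j := by
    by_contra hne
    exact MvPolynomial.mem_support_iff.1 he (hq.coeff_eq_zero hne)
  simp only [Pi.smul_apply, smul_eq_mul, mul_pow, Finset.prod_mul_distrib,
    Finset.prod_pow_eq_pow_sum, hdeg]
  ring

lemma coe_sub_homogeneousComponent_mem_degreeIdeal {p : MvPolynomial σ R} {j : ℕ}
    (hp : (p : MvPowerSeries σ R) ∈ degreeIdeal j) :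
    ((p - MvPolynomial.homogeneousComponent j p : MvPolynomial σ R) : MvPowerSeries σ R) ∈
      degreeIdeal (j + 1) := by
  refine mem_degreeIdeal.2 fun e he ↦ ?_
  rw [MvPolynomial.coeff_coe, MvPolynomial.coeff_sub, MvPolynomial.coeff_homogeneousComponent]
  split_ifs with hdeg
  · exact sub_self _
  · rw [sub_zero, ← MvPolynomial.coeff_coe]
    exact mem_degreeIdeal.1 hp e (by lia)

lemma subst_coe_eq_coe_bind₁ (q : ι → MvPolynomial σ R)
    (p : MvPolynomial ι R) :
    subst (fun i ↦ (q i : MvPowerSeries σ R)) (p : MvPowerSeries ι R) =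
      (MvPolynomial.bind₁ q p : MvPolynomial σ R) := by
  rw [subst_coe]
  induction p using MvPolynomial.induction_on with
  | C r => simp [MvPowerSeries.algebraMap_apply]
  | add p q hp hq => simp [hp, hq]
  | mul_X p i hp => simp [hp]

lemma sub_coe_bind₁_mem_degreeIdeal [Finite ι] {F : MvPowerSeries ι R} {p : MvPolynomial ι R}
    {T : ι → MvPowerSeries σ R} {q : ι → MvPolynomial σ R} {k : ℕ} (hT : IsPointed T)
    (hq : IsPointed fun i ↦ (q i : MvPowerSeries σ R)) (hFp : F - p ∈ degreeIdeal k)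
    (hTq : ∀ i, T i - q i ∈ degreeIdeal k) :
    subst T F - (MvPolynomial.bind₁ q p : MvPolynomial σ R) ∈ degreeIdeal k := by
  rw [← subst_coe_eq_coe_bind₁, ← sub_add_sub_cancel _ (subst T (p : MvPowerSeries ι R)),
    ← subst_sub hT.hasSubst]
  exact Ideal.add_mem _ (subst_mem_degreeIdeal hT hFp)
    (subst_sub_subst_mem_orderIdeal hT.hasSubst hq.hasSubst hTq _)

end PolynomialSubstitution

section PolynomialGrowth

open Asymptotics Filter

variable {σ 𝕜 : Type*}

lemma isBigO_norm_pow_of_le {E : Type*} [SeminormedAddCommGroup E] {k l : ℕ} (h : k ≤ l) :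
    (fun x : E ↦ ‖x‖ ^ l) =O[𝓝 0] fun x ↦ ‖x‖ ^ k := by
  refine IsBigO.of_bound 1 ?_
  filter_upwards [Metric.ball_mem_nhds (0 : E) one_pos] with x hx
  rw [norm_pow, norm_pow, norm_norm, one_mul]
  exact pow_le_pow_of_le_one (norm_nonneg _) (mem_ball_zero_iff.1 hx).le h

variable [Fintype σ] [NontriviallyNormedField 𝕜] {p : MvPolynomial σ 𝕜} {k : ℕ}

lemma isBigO_eval_of_mem_degreeIdeal (hp : (p : MvPowerSeries σ 𝕜) ∈ degreeIdeal k) :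
    (fun x : σ → 𝕜 ↦ MvPolynomial.eval x p) =O[𝓝 0] fun x ↦ ‖x‖ ^ k := by
  simp only [MvPolynomial.eval_eq']
  refine IsBigO.fun_sum fun e he ↦ ?_
  have hk : k ≤ degree e := by
    by_contra! hlt
    refine MvPolynomial.mem_support_iff.1 he ?_
    rw [← MvPolynomial.coeff_coe]
    exact mem_degreeIdeal.1 hp e hlt
  refine IsBigO.trans ?_ (isBigO_norm_pow_of_le hk)
  refine IsBigO.of_bound ‖MvPolynomial.coeff e p‖ (Eventually.of_forall fun x ↦ ?_)
  rw [norm_mul, norm_prod, norm_pow, norm_norm, degree_eq_sum, ← Finset.prod_pow_eq_pow_sum]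
  gcongr with i
  rw [norm_pow]
  gcongr
  exact norm_le_pi_norm x i

lemma eq_zero_of_isHomogeneous_of_isBigO {q : MvPolynomial σ 𝕜} {j : ℕ} (hq : q.IsHomogeneous j)
    (h : (fun x : σ → 𝕜 ↦ MvPolynomial.eval x q) =O[𝓝 0] fun x ↦ ‖x‖ ^ (j + 1)) : q = 0 := by
  have := NontriviallyNormedField.infinite 𝕜
  refine MvPolynomial.funext fun x ↦ ?_
  rw [map_zero]
  have hline : Tendsto (fun t : 𝕜 ↦ t • x) (𝓝 0) (𝓝 0) := by
    have hcont : Continuous fun t : 𝕜 ↦ t • x := by fun_prop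
    simpa using hcont.tendsto 0
  have hsmall : (fun t : 𝕜 ↦ t ^ j * MvPolynomial.eval x q) =o[𝓝 0] fun t ↦ t ^ j := by
    refine IsBigO.trans_isLittleO ?_ (isLittleO_pow_pow j.lt_succ_self)
    refine ((h.comp_tendsto hline).congr_left fun t ↦
      eval_smul_of_isHomogeneous hq t x).trans ?_
    refine IsBigO.of_bound (‖x‖ ^ (j + 1)) (Eventually.of_forall fun t ↦ ?_)
    simp only [Function.comp, norm_smul, mul_pow, norm_mul, norm_pow, norm_norm]
    rw [mul_comm]
  by_contra hne
  have hfreq : ∃ᶠ t : 𝕜 in 𝓝 0, t ^ j ≠ 0 :=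
    (eventually_nhdsWithin_of_forall (s := {0}ᶜ) fun t ht ↦ pow_ne_zero j ht).frequently.filter_mono
      nhdsWithin_le_nhds
  refine isLittleO_irrefl hfreq ?_
  refine (hsmall.const_mul_left (MvPolynomial.eval x q)⁻¹).congr_left fun t ↦ ?_
  rw [mul_comm, mul_inv_cancel_right₀ hne]

lemma mem_degreeIdeal_of_isBigO_eval
    (h : (fun x : σ → 𝕜 ↦ MvPolynomial.eval x p) =O[𝓝 0] fun x ↦ ‖x‖ ^ k) :
    (p : MvPowerSeries σ 𝕜) ∈ degreeIdeal k := by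
  suffices ∀ j ≤ k, (p : MvPowerSeries σ 𝕜) ∈ degreeIdeal j from this k le_rfl
  intro j hj
  induction j with
  | zero => exact mem_orderIdeal_zero _ _
  | succ j ih =>
    have hsub := coe_sub_homogeneousComponent_mem_degreeIdeal (ih (by lia))
    have hcomp : MvPolynomial.homogeneousComponent j p = 0 := by
      refine eq_zero_of_isHomogeneous_of_isBigO
        (MvPolynomial.homogeneousComponent_isHomogeneous j p) ?_
      refine ((h.trans (isBigO_norm_pow_of_le hj)).sub
        (isBigO_eval_of_mem_degreeIdeal hsub)).congr_left fun x ↦ ?_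
      rw [map_sub, sub_sub_cancel]
    rwa [hcomp, sub_zero] at hsub

end PolynomialGrowth

section AsymptoticExpansion

open Asymptotics Filter

variable {σ ι 𝕜 : Type*} [Fintype σ] [NontriviallyNormedField 𝕜]

/-- The formal power series `F` is the asymptotic expansion of `u` at the origin: polynomials
agreeing with `F` up to degree `k` approximate `u` up to `O(‖x‖ ^ k)`. No convergence is required,
so that the Taylor series of a smooth function qualifies. -/
def HasAsymptoticExpansion (u : (σ → 𝕜) → 𝕜) (F : MvPowerSeries σ 𝕜) : Prop :=
  ∀ k : ℕ, ∃ p : MvPolynomial σ 𝕜, F - (p : MvPowerSeries σ 𝕜) ∈ degreeIdeal k ∧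
    (fun x ↦ u x - MvPolynomial.eval x p) =O[𝓝 0] fun x ↦ ‖x‖ ^ k

namespace HasAsymptoticExpansion

variable {u v : (σ → 𝕜) → 𝕜} {F G : MvPowerSeries σ 𝕜}

lemma isBigO_sub_eval (h : HasAsymptoticExpansion u F) {k : ℕ} {p : MvPolynomial σ 𝕜}
    (hp : F - (p : MvPowerSeries σ 𝕜) ∈ degreeIdeal k) :
    (fun x ↦ u x - MvPolynomial.eval x p) =O[𝓝 0] fun x ↦ ‖x‖ ^ k := by
  obtain ⟨q, hq, huq⟩ := h k
  have hqp : ((q - p : MvPolynomial σ 𝕜) : MvPowerSeries σ 𝕜) ∈ degreeIdeal k := by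
    rw [coe_sub, ← sub_sub_sub_cancel_left (p : MvPowerSeries σ 𝕜) q F]
    exact Ideal.sub_mem _ hp hq
  refine (huq.add (isBigO_eval_of_mem_degreeIdeal hqp)).congr_left fun x ↦ ?_
  rw [map_sub, sub_add_sub_cancel]

lemma isBigO_norm_pow (h : HasAsymptoticExpansion u F) {k : ℕ} (hF : F ∈ degreeIdeal k) :
    u =O[𝓝 0] fun x ↦ ‖x‖ ^ k := by
  simpa using h.isBigO_sub_eval (p := 0) (by simpa using hF)

lemma sub (hF : HasAsymptoticExpansion u F) (hG : HasAsymptoticExpansion v G) :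
    HasAsymptoticExpansion (fun x ↦ u x - v x) (F - G) := by
  intro k
  obtain ⟨p, hp, hup⟩ := hF k
  obtain ⟨q, hq, hvq⟩ := hG k
  refine ⟨p - q, ?_, (hup.sub hvq).congr_left fun x ↦ ?_⟩
  · rw [coe_sub, sub_sub_sub_comm]
    exact Ideal.sub_mem _ hp hq
  · rw [map_sub, sub_sub_sub_comm]

lemma eq_zero (h : HasAsymptoticExpansion u F) (hu : u =ᶠ[𝓝 0] 0) : F = 0 := by
  refine eq_zero_of_forall_mem_orderIdeal (w := fun _ ↦ 1) fun k ↦ ?_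
  obtain ⟨p, hp, hup⟩ := h k
  have hpO : (fun x : σ → 𝕜 ↦ MvPolynomial.eval x p) =O[𝓝 0] fun x ↦ ‖x‖ ^ k := by
    refine hup.neg_left.congr' ?_ EventuallyEq.rfl
    filter_upwards [hu] with x hx
    simp [hx]
  simpa using Ideal.add_mem _ hp (mem_degreeIdeal_of_isBigO_eval hpO)

lemma unique (hF : HasAsymptoticExpansion u F) (hG : HasAsymptoticExpansion u G) : F = G :=
  sub_eq_zero.1 <| (hF.sub hG).eq_zero <| Eventually.of_forall fun _ ↦ sub_self _

lemma apply_zero (h : HasAsymptoticExpansion u F) : u 0 = constantCoeff F := by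
  have hC : F - (MvPolynomial.C (constantCoeff F) : MvPolynomial σ 𝕜) ∈ degreeIdeal 1 := by
    simp [mem_degreeIdeal_one]
  simpa [sub_eq_zero] using (h.isBigO_sub_eval hC).eq_zero_imp.self_of_nhds

end HasAsymptoticExpansion

lemma hasAsymptoticExpansion_X (i : σ) :
    HasAsymptoticExpansion (fun x : σ → 𝕜 ↦ x i) (X i) :=
  fun k ↦ ⟨MvPolynomial.X i, by simp, by simpa using isBigO_zero _ _⟩

lemma isBigO_eval_one {X : Type*} {l : Filter X} {a : ι → X → 𝕜}
    (ha : ∀ i, a i =O[l] fun _ ↦ (1 : ℝ)) (p : MvPolynomial ι 𝕜) :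
    (fun x ↦ MvPolynomial.eval (fun i ↦ a i x) p) =O[l] fun _ ↦ (1 : ℝ) := by
  induction p using MvPolynomial.induction_on with
  | C r => simpa using isBigO_const_const r (one_ne_zero' ℝ) l
  | add p q hp hq => simpa using hp.add hq
  | mul_X p i hp => simpa using hp.mul (ha i)

lemma isBigO_eval_sub_eval {X : Type*} {l : Filter X} {ρ : X → ℝ} {a b : ι → X → 𝕜}
    (ha : ∀ i, a i =O[l] fun _ ↦ (1 : ℝ)) (hb : ∀ i, b i =O[l] fun _ ↦ (1 : ℝ))
    (hab : ∀ i, (fun x ↦ a i x - b i x) =O[l] ρ) (p : MvPolynomial ι 𝕜) :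
    (fun x ↦ MvPolynomial.eval (fun i ↦ a i x) p - MvPolynomial.eval (fun i ↦ b i x) p)
      =O[l] ρ := by
  induction p using MvPolynomial.induction_on with
  | C r => simpa using isBigO_zero ρ l
  | add p q hp hq => exact (hp.add hq).congr_left fun x ↦ by simp only [map_add]; ring
  | mul_X p i hp =>
    have hleft := hp.mul (ha i)
    have hright := (isBigO_eval_one hb p).mul (hab i)
    simp only [mul_one, one_mul] at hleft hright
    exact (hleft.add hright).congr_left fun x ↦ by
      simp only [map_mul, MvPolynomial.eval_X]; ring

lemma HasAsymptoticExpansion.comp [Fintype ι] {f : (ι → 𝕜) → 𝕜} {F : MvPowerSeries ι 𝕜}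
    (hf : HasAsymptoticExpansion f F) {t : ι → (σ → 𝕜) → 𝕜} {T : ι → MvPowerSeries σ 𝕜}
    (ht : ∀ i, HasAsymptoticExpansion (t i) (T i)) (hT : IsPointed T) :
    HasAsymptoticExpansion (fun x ↦ f fun i ↦ t i x) (subst T F) := by
  intro k
  obtain ⟨p, hFp, hfp⟩ := hf k
  choose q hTq' htq' using fun i ↦ ht i (k + 1)
  have hTq i := orderIdeal_anti _ k.le_succ (hTq' i)
  have htq i := (htq' i).trans (isBigO_norm_pow_of_le k.le_succ)
  have hq : IsPointed fun i ↦ (q i : MvPowerSeries σ 𝕜) := fun i ↦ by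
    have := mem_degreeIdeal_one.1 (orderIdeal_anti _ (Nat.le_add_left 1 k) (hTq' i))
    rwa [map_sub, hT i, zero_sub, neg_eq_zero] at this
  refine ⟨MvPolynomial.bind₁ q p, sub_coe_bind₁_mem_degreeIdeal hT hq hFp hTq, ?_⟩
  have ht_norm : (fun x i ↦ t i x) =O[𝓝 0] fun x : σ → 𝕜 ↦ ‖x‖ :=
    isBigO_pi.2 fun i ↦ by
      simpa using (ht i).isBigO_norm_pow (k := 1) (mem_degreeIdeal_one.2 (hT i))
  have ht_tendsto : Tendsto (fun x i ↦ t i x) (𝓝 0) (𝓝 (0 : ι → 𝕜)) :=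
    ht_norm.trans_tendsto tendsto_norm_zero
  have ht_one (i : ι) : t i =O[𝓝 0] fun _ ↦ (1 : ℝ) :=
    (tendsto_pi_nhds.1 ht_tendsto i).isBigO_one ℝ
  have hq_one (i : ι) : (fun x ↦ MvPolynomial.eval x (q i)) =O[𝓝 0] fun _ ↦ (1 : ℝ) :=
    (MvPolynomial.continuous_eval (q i)).continuousAt.tendsto.isBigO_one ℝ
  refine (((hfp.comp_tendsto ht_tendsto).trans (ht_norm.norm_left.pow k)).add
    (isBigO_eval_sub_eval ht_one hq_one htq p)).congr_left fun x ↦ ?_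
  simp only [Function.comp, sub_add_sub_cancel]
  exact congr_arg _ (MvPolynomial.eval₂Hom_bind₁ (RingHom.id 𝕜) x q p).symm

end AsymptoticExpansion

section HomogeneousComponents

open Asymptotics Filter

variable {σ R : Type*} [CommRing R]

/-- The power series whose homogeneous component of degree `i` is the polynomial `q i`, assumed to
be homogeneous of degree `i`. -/
noncomputable def ofHomogeneous (q : ℕ → MvPolynomial σ R) : MvPowerSeries σ R :=
  fun e ↦ MvPolynomial.coeff e (q (degree e))

lemma coeff_ofHomogeneous (q : ℕ → MvPolynomial σ R) (e : σ →₀ ℕ) :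
    coeff e (ofHomogeneous q) = MvPolynomial.coeff e (q (degree e)) := rfl

lemma eq_zero_of_ofHomogeneous_eq_zero {q : ℕ → MvPolynomial σ R}
    (hq : ∀ i, (q i).IsHomogeneous i) (h : ofHomogeneous q = 0) (i : ℕ) : q i = 0 := by
  ext e
  rw [MvPolynomial.coeff_zero]
  by_cases hdeg : degree e = i
  · rw [← hdeg, ← coeff_ofHomogeneous, h, coeff_zero]
  · exact (hq i).coeff_eq_zero hdeg

lemma ofHomogeneous_sub_sum_mem_degreeIdeal {q : ℕ → MvPolynomial σ R}
    (hq : ∀ i, (q i).IsHomogeneous i) (k : ℕ) :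
    ofHomogeneous q - (∑ i ∈ Finset.range k, q i : MvPolynomial σ R) ∈ degreeIdeal k := by
  refine mem_degreeIdeal.2 fun e he ↦ ?_
  rw [map_sub, coeff_ofHomogeneous, MvPolynomial.coeff_coe, MvPolynomial.coeff_sum,
    Finset.sum_eq_single (degree e), sub_self]
  · exact fun i _ hi ↦ (hq i).coeff_eq_zero hi.symm
  · exact fun h ↦ absurd (Finset.mem_range.2 he) h

lemma majorantNorm_ofHomogeneous_le {𝕜 : Type*} [NormedField 𝕜] (q : ℕ → MvPolynomial σ 𝕜)
    (r : σ → ℝ≥0) :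
    majorantNorm r (ofHomogeneous q) ≤ ∑' i, majorantNorm r (q i : MvPowerSeries σ 𝕜) := by
  unfold majorantNorm
  rw [ENNReal.tsum_comm]
  refine ENNReal.tsum_le_tsum fun e ↦ le_trans ?_ (ENNReal.le_tsum (degree e))
  rw [coeff_ofHomogeneous, MvPolynomial.coeff_coe]

lemma hasAsymptoticExpansion_ofHomogeneous [Fintype σ] {𝕜 : Type*} [NontriviallyNormedField 𝕜]
    {u : (σ → 𝕜) → 𝕜} {q : ℕ → MvPolynomial σ 𝕜} (hq : ∀ i, (q i).IsHomogeneous i)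
    (hu : ∀ k, (fun x ↦ u x - ∑ i ∈ Finset.range k, MvPolynomial.eval x (q i)) =O[𝓝 0]
      fun x ↦ ‖x‖ ^ k) :
    HasAsymptoticExpansion u (ofHomogeneous q) :=
  fun k ↦ ⟨_, ofHomogeneous_sub_sum_mem_degreeIdeal hq k, by simpa using hu k⟩

lemma hasAsymptoticExpansion_of_hasFPowerSeriesAt [Fintype σ] {𝕜 : Type*}
    [NontriviallyNormedField 𝕜] {u : (σ → 𝕜) → 𝕜} {p : FormalMultilinearSeries 𝕜 (σ → 𝕜) 𝕜}
    (hp : HasFPowerSeriesAt u p 0) {q : ℕ → MvPolynomial σ 𝕜} (hq : ∀ i, (q i).IsHomogeneous i)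
    (hpq : ∀ i x, MvPolynomial.eval x (q i) = p i fun _ ↦ x) :
    HasAsymptoticExpansion u (ofHomogeneous q) :=
  hasAsymptoticExpansion_ofHomogeneous hq fun k ↦ by
    simpa [FormalMultilinearSeries.partialSum, hpq] using hp.isBigO_sub_partialSum_pow k

end HomogeneousComponents

section DiagonalPolynomial

variable {σ ι 𝕜 : Type*}

lemma majorantNorm_sum_le [NormedField 𝕜] (r : σ → ℝ≥0) (s : Finset ι)
    (F : ι → MvPowerSeries σ 𝕜) :
    majorantNorm r (∑ i ∈ s, F i) ≤ ∑ i ∈ s, majorantNorm r (F i) :=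
  Finset.le_sum_of_subadditive _ (majorantNorm_zero r).le (majorantNorm_add_le r) s F

variable [Fintype σ] [DecidableEq σ] [NontriviallyNormedField 𝕜]
  (p : FormalMultilinearSeries 𝕜 (σ → 𝕜) 𝕜) (i : ℕ)

/-- The polynomial `x ↦ p i (x, …, x)`, for a formal multilinear series `p`. -/
noncomputable def diagonalPolynomial : MvPolynomial σ 𝕜 :=
  ∑ s : Fin i → σ, MvPolynomial.C (p i fun j ↦ Pi.single (s j) 1) * ∏ j, MvPolynomial.X (s j)

lemma isHomogeneous_diagonalPolynomial : (diagonalPolynomial p i).IsHomogeneous i := by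
  refine MvPolynomial.IsHomogeneous.sum _ _ _ fun s _ ↦ ?_
  simpa using (MvPolynomial.isHomogeneous_C σ (p i fun j ↦ Pi.single (s j) 1)).mul
    (MvPolynomial.IsHomogeneous.prod Finset.univ _ (fun _ ↦ 1)
      fun j _ ↦ MvPolynomial.isHomogeneous_X 𝕜 (s j))

lemma eval_diagonalPolynomial (x : σ → 𝕜) :
    MvPolynomial.eval x (diagonalPolynomial p i) = p i fun _ ↦ x := by
  conv_rhs => rw [pi_eq_sum_univ' x, ContinuousMultilinearMap.map_sum]
  simp only [diagonalPolynomial, map_sum, map_mul, MvPolynomial.eval_C, map_prod,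
    MvPolynomial.eval_X, ContinuousMultilinearMap.map_smul_univ, smul_eq_mul]
  exact Finset.sum_congr rfl fun s _ ↦ mul_comm _ _

lemma enorm_apply_single_le (s : Fin i → σ) :
    ‖p i fun j ↦ Pi.single (s j) 1‖ₑ ≤ ‖p i‖₊ := by
  rw [enorm_eq_nnnorm, ENNReal.coe_le_coe]
  simpa [Pi.nnnorm_single] using (p i).le_opNNNorm fun j ↦ (Pi.single (s j) 1 : σ → 𝕜)

lemma majorantNorm_diagonalPolynomial_le (ρ : ℝ≥0) :
    majorantNorm (fun _ ↦ ρ) (diagonalPolynomial p i : MvPowerSeries σ 𝕜) ≤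
      ((‖p i‖₊ * (Fintype.card σ * ρ) ^ i : ℝ≥0) : ℝ≥0∞) := by
  have hcoe : (diagonalPolynomial p i : MvPowerSeries σ 𝕜) =
      ∑ s : Fin i → σ, C (p i fun j ↦ Pi.single (s j) 1) * ∏ j, X (s j) := by
    rw [diagonalPolynomial, ← MvPolynomial.coeToMvPowerSeries.ringHom_apply]
    rw [map_sum]
    refine Finset.sum_congr rfl fun s _ ↦ ?_
    rw [map_mul, map_prod]
    simp
  have hterm (s : Fin i → σ) : majorantNorm (fun _ ↦ ρ)
      (C (p i fun j ↦ Pi.single (s j) 1) * ∏ j, X (s j)) ≤ ‖p i‖₊ * (ρ : ℝ≥0∞) ^ i := by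
    refine (majorantNorm_mul_le _ _ _).trans ?_
    rw [majorantNorm_C]
    gcongr
    · exact enorm_apply_single_le p i s
    · simpa using majorantNorm_prod_le (fun _ ↦ ρ) Finset.univ
        fun j ↦ (X (s j) : MvPowerSeries σ 𝕜)
  calc majorantNorm (fun _ ↦ ρ) (diagonalPolynomial p i : MvPowerSeries σ 𝕜)
      ≤ ∑ _s : Fin i → σ, ‖p i‖₊ * (ρ : ℝ≥0∞) ^ i := by
        rw [hcoe]
        exact (majorantNorm_sum_le _ _ _).trans (Finset.sum_le_sum fun s _ ↦ hterm s)
    _ = ((‖p i‖₊ * (Fintype.card σ * ρ) ^ i : ℝ≥0) : ℝ≥0∞) := by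
        simp [mul_pow, mul_left_comm]

lemma isConvergent_ofHomogeneous_diagonalPolynomial {p : FormalMultilinearSeries 𝕜 (σ → 𝕜) 𝕜}
    (hp : 0 < p.radius) : IsConvergent (ofHomogeneous (diagonalPolynomial p)) := by
  obtain ⟨r, hr, hrp⟩ := ENNReal.lt_iff_exists_nnreal_btwn.1 hp
  have hr : 0 < r := by exact_mod_cast hr
  set ρ : ℝ≥0 := r / (Fintype.card σ + 1)
  have hρ : ((Fintype.card σ * ρ : ℝ≥0) : ℝ≥0∞) < p.radius := by
    refine lt_of_le_of_lt (ENNReal.coe_le_coe.2 ?_) hrp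
    calc Fintype.card σ * ρ ≤ (Fintype.card σ + 1) * ρ := by gcongr; exact le_self_add
      _ = r := mul_div_cancel₀ _ (by positivity)
  refine ⟨ρ, by positivity, ((majorantNorm_ofHomogeneous_le _ _).trans
    (ENNReal.tsum_le_tsum fun i ↦ majorantNorm_diagonalPolynomial_le p i ρ)).trans_lt ?_⟩
  exact (ENNReal.tsum_coe_ne_top_iff_summable.2 (p.summable_nnnorm_mul_pow hρ)).lt_top

end DiagonalPolynomial

section AnalyticExpansion

open Filter

variable {σ 𝕜 : Type*} [Fintype σ] [NontriviallyNormedField 𝕜]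

lemma exists_isConvergent_hasAsymptoticExpansion {u : (σ → 𝕜) → 𝕜} (hu : AnalyticAt 𝕜 u 0) :
    ∃ F : MvPowerSeries σ 𝕜, IsConvergent F ∧ HasAsymptoticExpansion u F := by
  classical
  obtain ⟨p, hp⟩ := hu
  exact ⟨ofHomogeneous (diagonalPolynomial p),
    isConvergent_ofHomogeneous_diagonalPolynomial hp.radius_pos,
    hasAsymptoticExpansion_of_hasFPowerSeriesAt hp (isHomogeneous_diagonalPolynomial p)
      (eval_diagonalPolynomial p)⟩

lemma HasAsymptoticExpansion.eventuallyEq_zero {u : (σ → 𝕜) → 𝕜}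
    (h : HasAsymptoticExpansion u 0) (hu : AnalyticAt 𝕜 u 0) : u =ᶠ[𝓝 0] 0 := by
  classical
  obtain ⟨p, hp⟩ := hu
  have hseries : ofHomogeneous (diagonalPolynomial p) = 0 :=
    (hasAsymptoticExpansion_of_hasFPowerSeriesAt hp (isHomogeneous_diagonalPolynomial p)
      (eval_diagonalPolynomial p)).unique h
  have hdiag (i : ℕ) (x : σ → 𝕜) : p i (fun _ ↦ x) = 0 := by
    rw [← eval_diagonalPolynomial,
      eq_zero_of_ofHomogeneous_eq_zero (isHomogeneous_diagonalPolynomial p) hseries, map_zero]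
  filter_upwards [hp.eventually_hasSum] with x hx
  simp only [hdiag, zero_add] at hx
  exact hx.unique hasSum_zero

lemma exists_multilinear_monomial (e : σ →₀ ℕ) :
    ∃ M : ContinuousMultilinearMap 𝕜 (fun _ : Fin (degree e) ↦ σ → 𝕜) 𝕜,
      ‖M‖ ≤ 1 ∧ ∀ x : σ → 𝕜, M (fun _ ↦ x) = e.prod fun i k ↦ x i ^ k := by
  classical
  set l := (Finsupp.toMultiset e).toList with hl
  have hlen : l.length = degree e := by
    rw [hl, Multiset.length_toList, Finsupp.card_toMultiset]; rfl
  rw [← hlen]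
  refine ⟨(ContinuousMultilinearMap.mkPiAlgebra 𝕜 (Fin l.length) 𝕜).compContinuousLinearMap
    fun j ↦ ContinuousLinearMap.proj (l.get j), ?_, fun x ↦ ?_⟩
  · refine ContinuousMultilinearMap.opNorm_le_bound zero_le_one fun m ↦ ?_
    simp only [ContinuousMultilinearMap.compContinuousLinearMap_apply,
      ContinuousMultilinearMap.mkPiAlgebra_apply, ContinuousLinearMap.proj_apply, one_mul,
      norm_prod]
    exact Finset.prod_le_prod (fun _ _ ↦ norm_nonneg _) fun j _ ↦ norm_le_pi_norm _ _
  · have hprod : ∏ j : Fin l.length, x (l.get j) = (l.map x).prod := by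
      rw [← List.prod_ofFn]
      congr 1
      apply List.ext_get <;> simp
    simp only [ContinuousMultilinearMap.compContinuousLinearMap_apply,
      ContinuousMultilinearMap.mkPiAlgebra_apply, ContinuousLinearMap.proj_apply]
    rw [hprod, ← Multiset.prod_coe, ← Multiset.map_coe, hl, Multiset.coe_toList,
      Finsupp.toMultiset_map, Finsupp.prod_toMultiset,
      Finsupp.prod_mapDomain_index (by simp) (by simp [pow_add])]

/-- The homogeneous component of degree `i` of a power series in finitely many variables, as a
polynomial. -/
noncomputable def homogeneousPart [DecidableEq σ] (F : MvPowerSeries σ 𝕜) (i : ℕ) :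
    MvPolynomial σ 𝕜 :=
  ∑ e ∈ Finset.univ.finsuppAntidiag i, MvPolynomial.monomial e (coeff e F)

lemma mem_finsuppAntidiag_univ [DecidableEq σ] {e : σ →₀ ℕ} {i : ℕ} :
    e ∈ Finset.univ.finsuppAntidiag i ↔ degree e = i := by
  simp [Finset.mem_finsuppAntidiag, degree_eq_sum]

lemma isHomogeneous_homogeneousPart [DecidableEq σ] (F : MvPowerSeries σ 𝕜) (i : ℕ) :
    (homogeneousPart F i).IsHomogeneous i :=
  MvPolynomial.IsHomogeneous.sum _ _ _ fun _ he ↦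
    MvPolynomial.isHomogeneous_monomial _ (mem_finsuppAntidiag_univ.1 he)

lemma ofHomogeneous_homogeneousPart [DecidableEq σ] (F : MvPowerSeries σ 𝕜) :
    ofHomogeneous (homogeneousPart F) = F := by
  ext e
  simp only [coeff_ofHomogeneous, homogeneousPart, MvPolynomial.coeff_sum,
    MvPolynomial.coeff_monomial]
  rw [Finset.sum_ite_eq', if_pos (mem_finsuppAntidiag_univ.2 rfl)]

lemma exists_multilinear_homogeneousPart [DecidableEq σ] (F : MvPowerSeries σ 𝕜) (i : ℕ) :
    ∃ M : ContinuousMultilinearMap 𝕜 (fun _ : Fin i ↦ σ → 𝕜) 𝕜,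
      ‖M‖ ≤ ∑ e ∈ Finset.univ.finsuppAntidiag i, ‖coeff e F‖ ∧
      ∀ x : σ → 𝕜, MvPolynomial.eval x (homogeneousPart F i) = M fun _ ↦ x := by
  have hmonomial (e : σ →₀ ℕ) (he : e ∈ Finset.univ.finsuppAntidiag i) :
      ∃ M : ContinuousMultilinearMap 𝕜 (fun _ : Fin i ↦ σ → 𝕜) 𝕜,
        ‖M‖ ≤ 1 ∧ ∀ x : σ → 𝕜, M (fun _ ↦ x) = e.prod fun s k ↦ x s ^ k := by
    obtain rfl := mem_finsuppAntidiag_univ.1 he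
    exact exists_multilinear_monomial e
  choose! M hM hMx using hmonomial
  refine ⟨∑ e ∈ Finset.univ.finsuppAntidiag i, coeff e F • M e, ?_, fun x ↦ ?_⟩
  · refine (norm_sum_le _ _).trans (Finset.sum_le_sum fun e he ↦ ?_)
    rw [norm_smul]
    exact mul_le_of_le_one_right (norm_nonneg _) (hM e he)
  · rw [homogeneousPart, map_sum, _root_.sum_apply]
    refine Finset.sum_congr rfl fun e he ↦ ?_
    simp [MvPolynomial.eval_monomial, hMx e he]

lemma sum_norm_coeff_mul_pow_le [DecidableEq σ] {F : MvPowerSeries σ 𝕜} {ρ : ℝ≥0}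
    (hF : majorantNorm (fun _ ↦ ρ) F < ⊤) (i : ℕ) :
    (∑ e ∈ Finset.univ.finsuppAntidiag i, ‖coeff e F‖) * (ρ : ℝ) ^ i ≤
      (majorantNorm (fun _ ↦ ρ) F).toReal := by
  have hsum : ∑ e ∈ Finset.univ.finsuppAntidiag i, ‖coeff e F‖ₑ * (ρ : ℝ≥0∞) ^ i ≤
      majorantNorm (fun _ ↦ ρ) F := by
    refine le_trans (le_of_eq ?_) (ENNReal.sum_le_tsum (Finset.univ.finsuppAntidiag i))
    refine Finset.sum_congr rfl fun e he ↦ ?_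
    rw [radiusPow_const, mem_finsuppAntidiag_univ.1 he]
  convert ENNReal.toReal_mono hF.ne hsum
  rw [ENNReal.toReal_sum fun e _ ↦ by finiteness, Finset.sum_mul]
  simp

lemma IsConvergent.exists_analyticAt_hasAsymptoticExpansion [CompleteSpace 𝕜]
    {F : MvPowerSeries σ 𝕜} (hF : IsConvergent F) :
    ∃ u : (σ → 𝕜) → 𝕜, AnalyticAt 𝕜 u 0 ∧ HasAsymptoticExpansion u F := by
  classical
  obtain ⟨ρ, hρ, hlt⟩ := hF
  choose p hp hpF using exists_multilinear_homogeneousPart F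
  have hradius : (ρ : ℝ≥0∞) ≤ FormalMultilinearSeries.radius p :=
    FormalMultilinearSeries.le_radius_of_bound p _ fun i ↦
      (mul_le_mul_of_nonneg_right (hp i) (by positivity)).trans (sum_norm_coeff_mul_pow_le hlt i)
  have hsum := FormalMultilinearSeries.hasFPowerSeriesOnBall p
    ((ENNReal.coe_pos.2 hρ).trans_le hradius)
  refine ⟨_, hsum.analyticAt, ?_⟩
  rw [← ofHomogeneous_homogeneousPart F]
  exact hasAsymptoticExpansion_of_hasFPowerSeriesAt hsum.hasFPowerSeriesAt
    (isHomogeneous_homogeneousPart F) hpF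

end AnalyticExpansion

section TaylorExpansion

open Asymptotics Filter
open scoped Nat

lemma norm_sub_taylor_le {E G : Type*} [NormedAddCommGroup E] [NormedSpace ℝ E]
    [NormedAddCommGroup G] [NormedSpace ℝ G] [CompleteSpace G] {u : E → G} {x y : E} {n : ℕ}
    {C : ℝ} (hu : ∀ t ∈ Set.Icc (0 : ℝ) 1, ContDiffAt ℝ (n + 1) u (x + t • y))
    (hC : ∀ t ∈ Set.Icc (0 : ℝ) 1, ‖iteratedFDeriv ℝ (n + 1) u (x + t • y)‖ ≤ C) :
    ‖u (x + y) - ∑ i ∈ Finset.range (n + 1), (i ! : ℝ)⁻¹ • iteratedFDeriv ℝ i u x fun _ ↦ y‖ ≤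
      (n ! : ℝ)⁻¹ * (C * ‖y‖ ^ (n + 1)) := by
  rw [map_add_eq_sum_add_integral_iteratedFDeriv hu, add_sub_cancel_left, norm_smul, norm_inv,
    RCLike.norm_natCast]
  gcongr
  suffices hbound : ∀ t ∈ Set.uIoc (0 : ℝ) 1,
      ‖(1 - t) ^ n • iteratedFDeriv ℝ (n + 1) u (x + t • y) fun _ ↦ y‖ ≤ C * ‖y‖ ^ (n + 1) by
    simpa using intervalIntegral.norm_integral_le_of_norm_le_const hbound
  intro t ht
  rw [Set.uIoc_of_le zero_le_one] at ht
  have hweight : ‖(1 - t) ^ n‖ ≤ 1 := by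
    rw [norm_pow, Real.norm_of_nonneg (by linarith [ht.2])]
    exact pow_le_one₀ (by linarith [ht.2]) (by linarith [ht.1])
  calc ‖(1 - t) ^ n • iteratedFDeriv ℝ (n + 1) u (x + t • y) fun _ ↦ y‖
      ≤ ‖iteratedFDeriv ℝ (n + 1) u (x + t • y) fun _ ↦ y‖ := by
        rw [norm_smul]
        exact mul_le_of_le_one_left (norm_nonneg _) hweight
    _ ≤ ‖iteratedFDeriv ℝ (n + 1) u (x + t • y)‖ * ‖y‖ ^ (n + 1) := by
        simpa using (iteratedFDeriv ℝ (n + 1) u (x + t • y)).le_opNorm fun _ ↦ y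
    _ ≤ C * ‖y‖ ^ (n + 1) := by
        gcongr
        exact hC t (Set.Ioc_subset_Icc_self ht)

lemma isBigO_sub_taylor {E G : Type*} [NormedAddCommGroup E] [NormedSpace ℝ E]
    [NormedAddCommGroup G] [NormedSpace ℝ G] [CompleteSpace G] {u : E → G} {k : ℕ}
    (hu : ContDiffAt ℝ k u 0) :
    (fun y ↦ u y - ∑ i ∈ Finset.range k, (i ! : ℝ)⁻¹ • iteratedFDeriv ℝ i u 0 fun _ ↦ y)
      =O[𝓝 0] fun y ↦ ‖y‖ ^ k := by
  cases k with
  | zero => simpa using hu.continuousAt.tendsto.isBigO_one ℝ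
  | succ n =>
    have hbounded := (hu.continuousAt_iteratedFDeriv le_rfl).norm.eventually_lt_const
      (lt_add_one _)
    obtain ⟨ε, hε, hball⟩ :=
      Metric.eventually_nhds_iff_ball.1 ((hu.eventually (by simp)).and hbounded)
    set C := ‖iteratedFDeriv ℝ (n + 1) u 0‖ + 1
    refine IsBigO.of_bound ((n ! : ℝ)⁻¹ * C) ?_
    filter_upwards [Metric.ball_mem_nhds _ hε] with y hy
    have hsegment : ∀ t ∈ Set.Icc (0 : ℝ) 1, 0 + t • y ∈ Metric.ball (0 : E) ε := fun t ht ↦ by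
      rw [zero_add, mem_ball_zero_iff, norm_smul, Real.norm_of_nonneg ht.1]
      exact (mul_le_of_le_one_left (norm_nonneg _) ht.2).trans_lt (mem_ball_zero_iff.1 hy)
    have hremainder := norm_sub_taylor_le (fun t ht ↦ mod_cast (hball _ (hsegment t ht)).1)
      fun t ht ↦ (hball _ (hsegment t ht)).2.le
    rw [zero_add, ← mul_assoc] at hremainder
    simpa using hremainder

lemma exists_hasAsymptoticExpansion_of_contDiffAt {σ : Type*} [Fintype σ] {u : (σ → ℝ) → ℝ}
    (hu : ContDiffAt ℝ (⊤ : ℕ∞) u 0) : ∃ F : MvPowerSeries σ ℝ, HasAsymptoticExpansion u F := by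
  classical
  let p : FormalMultilinearSeries ℝ (σ → ℝ) ℝ := fun i ↦ (i ! : ℝ)⁻¹ • iteratedFDeriv ℝ i u 0
  refine ⟨ofHomogeneous (diagonalPolynomial p), hasAsymptoticExpansion_ofHomogeneous
    (isHomogeneous_diagonalPolynomial p) fun k ↦ ?_⟩
  simp only [eval_diagonalPolynomial]
  exact isBigO_sub_taylor (hu.of_le (mod_cast le_top))

end TaylorExpansion

section AnalyticSolutions

open Asymptotics Filter

variable {σ ι κ 𝕜 : Type*} [Fintype σ] [Fintype ι] [Fintype κ] [NontriviallyNormedField 𝕜]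

lemma HasAsymptoticExpansion.eventually_eq_zero_of_subst_eq_zero {h : (ι → 𝕜) → 𝕜}
    {H : MvPowerSeries ι 𝕜} (hh : HasAsymptoticExpansion h H) (ha : AnalyticAt 𝕜 h 0)
    {t : (σ → 𝕜) → ι → 𝕜} (hta : AnalyticAt 𝕜 t 0) {T : ι → MvPowerSeries σ 𝕜}
    (ht : ∀ i, HasAsymptoticExpansion (fun x ↦ t x i) (T i)) (hT : IsPointed T)
    (hzero : subst T H = 0) : ∀ᶠ x in 𝓝 0, h (t x) = 0 := by
  have ht0 : t 0 = 0 := funext fun i ↦ (ht i).apply_zero.trans (hT i)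
  exact HasAsymptoticExpansion.eventuallyEq_zero (hzero ▸ hh.comp ht hT)
    ((ht0.symm ▸ ha).fun_comp hta)

theorem exists_analyticAt_approximation [CompleteSpace 𝕜] [CharZero 𝕜] {h : (ι → 𝕜) → κ → 𝕜}
    (hh : AnalyticAt 𝕜 h 0) {t : (σ → 𝕜) → ι → 𝕜} (ht0 : t 0 = 0)
    (ht : ∀ i, ∃ T : MvPowerSeries σ 𝕜, HasAsymptoticExpansion (fun x ↦ t x i) T)
    (hzero : ∀ᶠ x in 𝓝 0, h (t x) = 0) (c : ℕ) :
    ∃ s : (σ → 𝕜) → ι → 𝕜, AnalyticAt 𝕜 s 0 ∧ s 0 = 0 ∧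
      ((fun x ↦ s x - t x) =O[𝓝 0] fun x ↦ ‖x‖ ^ c) ∧ ∀ᶠ x in 𝓝 0, h (s x) = 0 := by
  choose T hT using ht
  choose H hHconv hH using fun k ↦
    exists_isConvergent_hasAsymptoticExpansion (analyticAt_pi_iff.1 hh k)
  have hT0 : IsPointed T := fun i ↦ by rw [← (hT i).apply_zero, ht0, Pi.zero_apply]
  have hHT (k : κ) : subst T (H k) = 0 :=
    ((hH k).comp hT hT0).eq_zero (hzero.mono fun x hx ↦ congrFun hx k)
  obtain ⟨S, hSconv, hS0, hST, hrelations⟩ := hasArtinApproximation ι T hT0 c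
  choose s hs hsS using fun i ↦ (hSconv i).exists_analyticAt_hasAsymptoticExpansion
  have hsa : AnalyticAt 𝕜 (fun x i ↦ s i x) 0 := analyticAt_pi_iff.2 hs
  refine ⟨fun x i ↦ s i x, hsa, funext fun i ↦ (hsS i).apply_zero.trans (hS0 i),
    isBigO_pi.2 fun i ↦ ((hsS i).sub (hT i)).isBigO_norm_pow (hST i), ?_⟩
  have hvanish (k : κ) : ∀ᶠ x in 𝓝 0, h (fun i ↦ s i x) k = 0 :=
    (hH k).eventually_eq_zero_of_subst_eq_zero (analyticAt_pi_iff.1 hh k) hsa hsS hS0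
      (hrelations ⟨hHconv k, hHT k⟩).2
  exact (eventually_all.2 hvanish).mono fun x hx ↦ funext hx

end AnalyticSolutions

section RightEquivalence

open Asymptotics Filter

lemma hasFDerivAt_of_isBigO_sub {𝕜 E F : Type*} [NontriviallyNormedField 𝕜]
    [NormedAddCommGroup E] [NormedSpace 𝕜 E] [NormedAddCommGroup F] [NormedSpace 𝕜 F]
    {u v : E → F} {L : E →L[𝕜] F} {x : E} {k : ℕ} (hk : 1 < k) (hu : HasFDerivAt u L x)
    (huv : (fun y ↦ v y - u y) =O[𝓝 x] fun y ↦ ‖y - x‖ ^ k) : HasFDerivAt v L x := by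
  simpa using (huv.hasFDerivAt hk).fun_add hu

lemma exists_analyticAt_rightInverse {𝕜 E F : Type*} [RCLike 𝕜] [NormedAddCommGroup E]
    [NormedSpace 𝕜 E] [CompleteSpace E] [NormedAddCommGroup F] [NormedSpace 𝕜 F]
    {u : E → F} {L : E ≃L[𝕜] F} {a : E} (hu : AnalyticAt 𝕜 u a)
    (hL : HasFDerivAt u (L : E →L[𝕜] F) a) :
    ∃ w : F → E, AnalyticAt 𝕜 w (u a) ∧ w (u a) = a ∧
      HasFDerivAt w (L.symm : F →L[𝕜] E) (u a) ∧ ∀ᶠ y in 𝓝 (u a), u (w y) = y := by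
  have hstrict : HasStrictFDerivAt u (L : E →L[𝕜] F) a := hL.fderiv ▸ hu.hasStrictFDerivAt
  refine ⟨hstrict.localInverse u L a, ?_, hstrict.localInverse_apply_image,
    hstrict.to_localInverse.hasFDerivAt, hstrict.eventually_right_inverse⟩
  exact (hstrict.toOpenPartialHomeomorph u).analyticAt_symm'
    hstrict.mem_toOpenPartialHomeomorph_source hu hL.fderiv

lemma analyticAt_comp_right {𝕜 α β : Type*} [NontriviallyNormedField 𝕜] [Fintype α] [Fintype β]
    (e : α → β) (z : β → 𝕜) : AnalyticAt 𝕜 (fun z : β → 𝕜 ↦ z ∘ e) z :=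
  analyticAt_pi_iff.2 fun i ↦
    (ContinuousLinearMap.proj (R := 𝕜) (φ := fun _ : β ↦ 𝕜) (e i)).analyticAt z

variable {σ ι κ : Type*} [Fintype σ] [Fintype ι] [Fintype κ]
  {f : (ι → ℝ) → κ → ℝ} {g : (σ → ℝ) → κ → ℝ} {τ : (σ → ℝ) → ι → ℝ}

-- Replacing the right-hand side `g` by `g ∘ ζ` yields an equation between unknowns only, which is
-- the kind of relation that Artin approximation preserves.
lemma exists_analyticAt_comp_eq_comp (hf : AnalyticAt ℝ f 0) (hg : AnalyticAt ℝ g 0)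
    (hτ : ContDiffAt ℝ (⊤ : ℕ∞) τ 0) (hτ0 : τ 0 = 0) (hfg : ∀ᶠ x in 𝓝 0, f (τ x) = g x) :
    ∃ (η : (σ → ℝ) → ι → ℝ) (ζ : (σ → ℝ) → σ → ℝ),
      (AnalyticAt ℝ η 0 ∧ η 0 = 0 ∧ HasFDerivAt η (fderiv ℝ τ 0) 0) ∧
      (AnalyticAt ℝ ζ 0 ∧ ζ 0 = 0 ∧ HasFDerivAt ζ (ContinuousLinearMap.id ℝ (σ → ℝ)) 0) ∧
      ∀ᶠ x in 𝓝 0, f (η x) = g (ζ x) := by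
  have hdiff : AnalyticAt ℝ (fun z : ι ⊕ σ → ℝ ↦ f (z ∘ Sum.inl) - g (z ∘ Sum.inr)) 0 :=
    (AnalyticAt.fun_comp (f := (· ∘ Sum.inl)) hf (analyticAt_comp_right Sum.inl 0)).fun_sub
      (AnalyticAt.fun_comp (f := (· ∘ Sum.inr)) hg (analyticAt_comp_right Sum.inr 0))
  have hexpansion : ∀ i : ι ⊕ σ, ∃ T : MvPowerSeries σ ℝ,
      HasAsymptoticExpansion (fun x ↦ Sum.elim (τ x) x i) T := by
    rintro (i | i)
    · exact exists_hasAsymptoticExpansion_of_contDiffAt (contDiffAt_pi.1 hτ i)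
    · exact ⟨X i, hasAsymptoticExpansion_X i⟩
  obtain ⟨s, hs, hs0, hsO, hzero⟩ := exists_analyticAt_approximation hdiff
    (by simp [hτ0]) hexpansion (hfg.mono fun x hx ↦ by simp [hx]) 2
  have hsO (i : ι ⊕ σ) : (fun x ↦ s x i - Sum.elim (τ x) x i) =O[𝓝 0] fun x ↦ ‖x - 0‖ ^ 2 := by
    simpa using isBigO_pi.1 hsO i
  refine ⟨fun x ↦ s x ∘ Sum.inl, fun x ↦ s x ∘ Sum.inr,
    ⟨(analyticAt_comp_right _ _).fun_comp hs, by simp [hs0], ?_⟩,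
    ⟨(analyticAt_comp_right _ _).fun_comp hs, by simp [hs0], ?_⟩,
    hzero.mono fun x hx ↦ sub_eq_zero.1 hx⟩
  · exact hasFDerivAt_of_isBigO_sub one_lt_two
      (hτ.differentiableAt (by simp)).hasFDerivAt (isBigO_pi.2 fun i ↦ hsO (Sum.inl i))
  · exact hasFDerivAt_of_isBigO_sub one_lt_two (hasFDerivAt_id 0)
      (isBigO_pi.2 fun i ↦ hsO (Sum.inr i))

end RightEquivalence

end ArtinApproximation

theorem smooth_R_equiv_implies_analytic_R_equiv_general {ι σ κ : Type*} [Fintype ι] [Fintype σ]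
    [Fintype κ] {f : (ι → ℝ) → κ → ℝ} {g : (σ → ℝ) → κ → ℝ} {τ : (σ → ℝ) → ι → ℝ}
    (hf : AnalyticAt ℝ f 0) (hg : AnalyticAt ℝ g 0) (hτ : ContDiffAt ℝ (⊤ : ℕ∞) τ 0)
    (hτ0 : τ 0 = 0) (hfg : ∀ᶠ x in 𝓝 0, f (τ x) = g x) :
    ∃ θ : (σ → ℝ) → ι → ℝ, AnalyticAt ℝ θ 0 ∧ θ 0 = 0 ∧ HasFDerivAt θ (fderiv ℝ τ 0) 0 ∧
      ∀ᶠ x in 𝓝 0, f (θ x) = g x := by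
  obtain ⟨η, ζ, ⟨hη, hη0, hη'⟩, ⟨hζ, hζ0, hζ'⟩, hηζ⟩ :=
    ArtinApproximation.exists_analyticAt_comp_eq_comp hf hg hτ hτ0 hfg
  obtain ⟨ω, hω, hω0, hω', hζω⟩ := ArtinApproximation.exists_analyticAt_rightInverse
    (L := ContinuousLinearEquiv.refl ℝ (σ → ℝ)) hζ hζ'
  rw [hζ0] at hω hω0 hω' hζω
  have hωtendsto : Filter.Tendsto ω (𝓝 0) (𝓝 0) := by
    simpa only [hω0] using hω.continuousAt.tendsto
  refine ⟨η ∘ ω, AnalyticAt.comp (by rwa [hω0]) hω, by simp [hω0, hη0], ?_, ?_⟩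
  · simpa using HasFDerivAt.comp (g := η) (g' := fderiv ℝ τ 0) 0 (by rwa [hω0]) hω'
  · filter_upwards [hωtendsto.eventually hηζ, hζω] with x hx hζx
    rw [Function.comp_apply, hx, hζx]

/-- Two $C^\infty$ R equivalent real analytic map germs are analytically R equivalent. -/
theorem smooth_R_equiv_implies_analytic_R_equiv {n m : ℕ}
    {f g : (Fin n → ℝ) → (Fin m → ℝ)}
    (hf : AnalyticAt ℝ f 0) (hf0 : f 0 = 0)
    (hg : AnalyticAt ℝ g 0) (hg0 : g 0 = 0)
    (hsmooth : ∃ τ : (Fin n → ℝ) → (Fin n → ℝ),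
      ContDiffAt ℝ (⊤ : ℕ∞) τ 0 ∧ τ 0 = 0 ∧
      (∃ Dτ : (Fin n → ℝ) ≃L[ℝ] (Fin n → ℝ),
        HasFDerivAt τ (Dτ : (Fin n → ℝ) →L[ℝ] (Fin n → ℝ)) 0) ∧
      ∀ᶠ x : Fin n → ℝ in 𝓝 0, f (τ x) = g x) :
    ∃ σ : (Fin n → ℝ) → (Fin n → ℝ),
      AnalyticAt ℝ σ 0 ∧ σ 0 = 0 ∧
      (∃ Dσ : (Fin n → ℝ) ≃L[ℝ] (Fin n → ℝ),
        HasFDerivAt σ (Dσ : (Fin n → ℝ) →L[ℝ] (Fin n → ℝ)) 0) ∧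
      ∀ᶠ x : Fin n → ℝ in 𝓝 0, f (σ x) = g x := by
  obtain ⟨τ, hτ, hτ0, ⟨Dτ, hDτ⟩, hfτ⟩ := hsmooth
  obtain ⟨θ, hθ, hθ0, hθ', hfθ⟩ := smooth_R_equiv_implies_analytic_R_equiv_general hf hg hτ hτ0 hfτ
  exact ⟨θ, hθ, hθ0, ⟨Dτ, hDτ.fderiv ▸ hθ'⟩, hfθ⟩
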